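/- Let X ⊆ ℙ^N (over ℂ) be irreducible and nondegenerate, and set b = 0 if X is smooth and b = dim Sing(X) otherwise. If dim(X) > (1/3)(2N + b − 1), then X is linearly normal, i.e. X is not the image of a bijective projection of a nondegenerate subvariety of ℙ^{N+1}. -/

import Mathlib

/- Background for [Lopez-Ran, "On the irreducibility of secant cones, and an application
to linear normality"]: a concrete model of complex projective geometry.  Projective space
`ℙ^r(ℂ)` is the projectivization of `ℂ^{r+1}`, equipped with the Zariski topology;
subvarieties are (closed, irreducible) subsets; tangent spaces, smoothness, the invariant
`σ(Y)`, secant varieties/cones, generic linear projections and their double loci, and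
linear normality are all defined from first principles below. -/

open MvPolynomial Set

noncomputable section

/-- Complex projective space of lines in `ℂⁿ` (so of projective dimension `n - 1`). -/
abbrev PrV (n : ℕ) : Type := Projectivization ℂ (Fin n → ℂ)

/-- `ℙ^r` over `ℂ`. -/
abbrev Pr (r : ℕ) : Type := PrV (r + 1)

/-- The vanishing locus in projective space of a polynomial, defined via all nonzero lifts
(for a homogeneous polynomial this is the usual projective zero locus). -/
def pZero {n : ℕ} (f : MvPolynomial (Fin n) ℂ) : Set (PrV n) :=
  {x | ∀ v : Fin n → ℂ, ∀ hv : v ≠ 0, Projectivization.mk ℂ v hv = x → eval v f = 0}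

/-- The Zariski topology on complex projective space. -/
instance prTop (n : ℕ) : TopologicalSpace (PrV n) :=
  TopologicalSpace.generateFrom {U | ∃ f : MvPolynomial (Fin n) ℂ, U = (pZero f)ᶜ}

/-- The Zariski topology on the affine space `ℂ^σ`. -/
def affTop (σ : Type) : TopologicalSpace (σ → ℂ) :=
  TopologicalSpace.generateFrom {U | ∃ f : MvPolynomial σ ℂ, U = {v | eval v f ≠ 0}}

/-- A property holds generically (on a dense Zariski-open set) on the affine space `ℂ^σ`. -/
def GenericAff {σ : Type} (P : (σ → ℂ) → Prop) : Prop :=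
  ∃ U : Set (σ → ℂ), @IsOpen _ (affTop σ) U ∧ @Dense _ (affTop σ) U ∧ ∀ v ∈ U, P v

/-- The projective line through two points (their linear span); for `x = y` this is `{x}`. -/
def lineThrough {n : ℕ} (x y : PrV n) : Set (PrV n) :=
  {z | z.rep ∈ Submodule.span ℂ ({x.rep, y.rep} : Set (Fin n → ℂ))}

/-- The projective linear subspace associated to a linear subspace `W ⊆ ℂⁿ`. -/
def projSub {n : ℕ} (W : Submodule ℂ (Fin n → ℂ)) : Set (PrV n) := {x | x.rep ∈ W}

/-- The secant variety of `Y`: the (closure of the) union of all lines spanned by pairs of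
distinct points of `Y`, i.e. the union of all secant lines of `Y`. -/
def secantVariety {n : ℕ} (Y : Set (PrV n)) : Set (PrV n) :=
  closure (⋃ x ∈ Y, ⋃ y ∈ Y, ⋃ _ : x ≠ y, lineThrough x y)

/-- `Y` is projectable if its secant variety is not all of projective space. -/
def Projectable {n : ℕ} (Y : Set (PrV n)) : Prop := secantVariety Y ≠ Set.univ

/-- Hyperplanes in projective space. -/
def IsHyperplane {n : ℕ} (H : Set (PrV n)) : Prop :=
  ∃ φ : (Fin n → ℂ) →ₗ[ℂ] ℂ, φ ≠ 0 ∧ H = {x | φ x.rep = 0}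

/-- A set in projective space is nondegenerate if it is contained in no hyperplane. -/
def NondegenerateSet {n : ℕ} (Y : Set (PrV n)) : Prop :=
  ∀ H : Set (PrV n), IsHyperplane H → ¬ Y ⊆ H

/-- Dimension of a subset of projective space: the Krull dimension of the subspace
topology. -/
def pdim {n : ℕ} (S : Set (PrV n)) : WithBot ℕ∞ := topologicalKrullDim S

/-- The homogeneous ideal of `Y` (as a set): all polynomials all of whose lifts vanish on
the affine cone of `Y`. -/
def homIdeal {n : ℕ} (Y : Set (PrV n)) : Set (MvPolynomial (Fin n) ℂ) := {f | Y ⊆ pZero f}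

/-- The differential of a polynomial at a point of `ℂⁿ`, as a linear form. -/
def jacLin {n : ℕ} (f : MvPolynomial (Fin n) ℂ) (v : Fin n → ℂ) : (Fin n → ℂ) →ₗ[ℂ] ℂ :=
  ∑ i, eval v (pderiv i f) • LinearMap.proj i

/-- The affine tangent space of the cone over `Y` at `v`: the common kernel of the
differentials of all elements of the homogeneous ideal of `Y`. -/
def affTangent {n : ℕ} (Y : Set (PrV n)) (v : Fin n → ℂ) : Submodule ℂ (Fin n → ℂ) :=
  ⨅ f ∈ homIdeal Y, LinearMap.ker (jacLin f v)

/-- The embedded projective tangent space `T_x Y ⊆ ℙⁿ⁻¹`. -/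
def projTangent {n : ℕ} (Y : Set (PrV n)) (x : PrV n) : Set (PrV n) :=
  projSub (affTangent Y x.rep)

/-- `x` is a smooth point of `Y` if the affine tangent space of the cone has the expected
dimension `dim Y + 1`. -/
def IsSmoothPt {n : ℕ} (Y : Set (PrV n)) (x : PrV n) : Prop :=
  ((Module.finrank ℂ (affTangent Y x.rep) : ℕ∞) : WithBot ℕ∞) = pdim Y + 1

/-- The smooth locus `Y_smooth` of `Y`. -/
def smoothLocus {n : ℕ} (Y : Set (PrV n)) : Set (PrV n) := {x ∈ Y | IsSmoothPt Y x}

/-- The singular locus of `Y`. -/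
def singLocus {n : ℕ} (Y : Set (PrV n)) : Set (PrV n) := Y \ smoothLocus Y

/-- `Y` is smooth if every point of `Y` is a smooth point. -/
def IsSmoothSet {n : ℕ} (Y : Set (PrV n)) : Prop := ∀ x ∈ Y, IsSmoothPt Y x

/-- A divisor on `Y`: an irreducible closed subvariety of `Y` of codimension one. -/
def IsDivisorOn {n : ℕ} (W Y : Set (PrV n)) : Prop :=
  W ⊆ Y ∧ IsIrreducible W ∧ closure W ∩ Y = W ∧ pdim W + 1 = pdim Y

/-- `σ(Y)`: the maximal dimension of a subvariety `Z` of the smooth locus of `Y` which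
contains a generic point of some divisor on `Y` (i.e. is dense in some divisor), and such
that all embedded tangent spaces `T_y Y`, `y ∈ Z`, lie in a fixed hyperplane. -/
def sigmaY {n : ℕ} (Y : Set (PrV n)) : WithBot ℕ∞ :=
  sSup { d | ∃ Z : Set (PrV n), Z ⊆ smoothLocus Y ∧ IsIrreducible Z ∧
      (∃ W, IsDivisorOn W Y ∧ W ⊆ closure (Z ∩ W)) ∧
      (∃ H, IsHyperplane H ∧ ∀ y ∈ Z, projTangent Y y ⊆ H) ∧ pdim Z = d }

/-- The ideal of polynomials vanishing (in all lifts) on the affine cone over `Y`. -/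
def idealOf {n : ℕ} (Y : Set (PrV n)) : Ideal (MvPolynomial (Fin n) ℂ) where
  carrier := homIdeal Y
  add_mem' := by
    intro f g hf hg x hx v hv hvx
    have h1 := hf hx v hv hvx
    have h2 := hg hx v hv hvx
    simp [map_add, h1, h2]
  zero_mem' := by intro x hx v hv hvx; simp
  smul_mem' := by
    intro c f hf x hx v hv hvx
    have h1 := hf hx v hv hvx
    simp [smul_eq_mul, map_mul, h1]

instance kerEvalPrime {n : ℕ} (v : Fin n → ℂ) :
    (RingHom.ker ((aeval v : MvPolynomial (Fin n) ℂ →ₐ[ℂ] ℂ) :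
      MvPolynomial (Fin n) ℂ →+* ℂ)).IsPrime :=
  RingHom.ker_isPrime _

/-- The local ring of the affine space `ℂⁿ` at the point `v`. -/
abbrev polyAtPoint {n : ℕ} (v : Fin n → ℂ) : Type :=
  Localization.AtPrime (RingHom.ker ((aeval v : MvPolynomial (Fin n) ℂ →ₐ[ℂ] ℂ) :
    MvPolynomial (Fin n) ℂ →+* ℂ))

/-- The local ring of the affine cone over `Y` at a (nonzero) point `v` of the cone. -/
abbrev coneLocalRing {n : ℕ} (Y : Set (PrV n)) (v : Fin n → ℂ) : Type :=
  polyAtPoint v ⧸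
    (Ideal.map (algebraMap (MvPolynomial (Fin n) ℂ) (polyAtPoint v)) (idealOf Y))

/-- A normal (irreducible, closed) subvariety of projective space: all local rings of its
affine cone at points of the punctured cone are integrally closed domains. -/
def IsNormalVariety {n : ℕ} (Y : Set (PrV n)) : Prop :=
  IsClosed Y ∧ IsIrreducible Y ∧
    ∀ x ∈ Y, IsDomain (coneLocalRing Y x.rep) ∧ IsIntegrallyClosed (coneLocalRing Y x.rep)

/-- The scheme-theoretic double locus of the projection of `Y` away from the projective
linear subspace `ℙ(W)`: points `y ∈ Y` such that the fibre of the projection through `y`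
(the span of `ℙ(W)` and `y`) meets `Y` in a subscheme different from the single reduced
point `y`: either it contains a second point of `Y`, or it is tangent to `Y` at `y`. -/
def doubleLocus {r : ℕ} (Y : Set (Pr r)) (W : Submodule ℂ (Fin (r+1) → ℂ)) : Set (Pr r) :=
  {y | y ∈ Y ∧
    ((∃ y' ∈ Y, y' ≠ y ∧ y'.rep ∈ W ⊔ Submodule.span ℂ {y.rep}) ∨
      affTangent Y y.rep ⊓ (W ⊔ Submodule.span ℂ {y.rep}) ≠ Submodule.span ℂ {y.rep})}

/-- The linear subspace spanned by a `(k+1)`-tuple of vectors of `ℂ^{r+1}` (used to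
parametrize generic linear subspaces of projective dimension `k`). -/
def spanOfTuple {r k : ℕ} (v : Fin (k+1) × Fin (r+1) → ℂ) :
    Submodule ℂ (Fin (r+1) → ℂ) :=
  Submodule.span ℂ (Set.range fun i : Fin (k+1) => fun j => v (i, j))

/-- The secant cone of `Y` at `z`: the closure of the union of all secant lines of `Y`
passing through `z`. -/
def secantCone {r : ℕ} (Y : Set (Pr r)) (z : Pr r) : Set (Pr r) :=
  closure (⋃ x ∈ Y, ⋃ y ∈ Y, ⋃ _ : x ≠ y, ⋃ _ : z ∈ lineThrough x y, lineThrough x y)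

/-- `Y` has the irreducible secant cone (ISC) property: the secant cone of `Y` at a generic
point of `ℙ^r` (equivalently, the generic fibre of `f : I_Y → ℙ^r`) is irreducible. -/
def ISC {r : ℕ} (Y : Set (Pr r)) : Prop :=
  ∃ U : Set (Pr r), IsOpen U ∧ Dense U ∧ ∀ z ∈ U, IsIrreducible (secantCone Y z)

/-- The outer (Segre) product of two vectors. -/
def outerVec {a b : ℕ} (v : Fin a → ℂ) (w : Fin b → ℂ) : Fin (a * b) → ℂ :=
  fun k => v (finProdFinEquiv.symm k).1 * w (finProdFinEquiv.symm k).2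

lemma outerVec_ne_zero {a b : ℕ} {v : Fin a → ℂ} {w : Fin b → ℂ}
    (hv : v ≠ 0) (hw : w ≠ 0) : outerVec v w ≠ 0 := by
  obtain ⟨i, hi⟩ := Function.ne_iff.mp hv
  obtain ⟨j, hj⟩ := Function.ne_iff.mp hw
  intro h
  have h2 := congrFun h (finProdFinEquiv (i, j))
  simp only [outerVec, Equiv.symm_apply_apply, Pi.zero_apply] at h2
  rcases mul_eq_zero.mp h2 with h3 | h3
  · exact hi h3
  · exact hj h3

/-- The Segre embedding of a product of projective spaces. -/
def segre {a b : ℕ} (p : PrV a × PrV b) : PrV (a * b) :=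
  Projectivization.mk ℂ (outerVec p.1.rep p.2.rep)
    (outerVec_ne_zero p.1.rep_nonzero p.2.rep_nonzero)

/-- The Zariski topology on a product of two projective spaces (induced via the Segre
embedding). -/
def pairTop (r : ℕ) : TopologicalSpace (Pr r × Pr r) :=
  TopologicalSpace.induced segre (prTop ((r+1) * (r+1)))

/-- Zariski closure in the product of two projective spaces. -/
def closureP {r : ℕ} (S : Set (Pr r × Pr r)) : Set (Pr r × Pr r) :=
  segre ⁻¹' closure (segre '' S)

/-- Zariski irreducibility of a subset of the product of two projective spaces. -/
def IsIrreducibleP {r : ℕ} (S : Set (Pr r × Pr r)) : Prop :=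
  IsIrreducible (closure (segre '' S))

/-- Zariski connectedness of a subset of the product of two projective spaces. -/
def IsConnectedP {r : ℕ} (S : Set (Pr r × Pr r)) : Prop :=
  IsConnected (segre '' S)

/-- Dimension of a subset of the product of two projective spaces. -/
def pdimP {r : ℕ} (S : Set (Pr r × Pr r)) : WithBot ℕ∞ := pdim (segre '' S)

/-- The (ordered-pairs model of the) fibre of `f : I_Y → ℙ^r` over `z ∈ ℙ^r`: pairs of
distinct points of `Y` whose secant line passes through `z`, together with limits of such
(the secant cone of `Y` at `z`, upstairs). -/
def secPairs {r : ℕ} (Y : Set (Pr r)) (z : Pr r) : Set (Pr r × Pr r) :=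
  {p | p.1 ∈ Y ∧ p.2 ∈ Y ∧ p.1 ≠ p.2 ∧ z ∈ lineThrough p.1 p.2}

/-- The fibre of `f : I_Y → ℙ^r` over `z` (with its limit points). -/
def secFiber {r : ℕ} (Y : Set (Pr r)) (z : Pr r) : Set (Pr r × Pr r) :=
  closureP (secPairs Y z)

/-- The linear map `ℂ^b → ℂ^a` given by a matrix of coefficients. -/
def matLin {a b : ℕ} (w : Fin a × Fin b → ℂ) : (Fin b → ℂ) →ₗ[ℂ] (Fin a → ℂ) :=
  Matrix.mulVecLin (Matrix.of fun i j => w (i, j))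

/-- The image of a subset of `ℙ^{b-1}` under the linear projection `ℙ^{b-1} ⇢ ℙ^{a-1}`
given by a matrix. -/
def projImage {a b : ℕ} (w : Fin a × Fin b → ℂ) (Z : Set (PrV b)) : Set (PrV a) :=
  {z | ∃ x ∈ Z, ∃ c : ℂ, c ≠ 0 ∧ z.rep = c • matLin w x.rep}

/-- `X ⊆ ℙ^N` is the image of `X̃ ⊆ ℙ^{N+1}` under a bijective projection from a point
`Q ∉ X̃` (the centre `Q` being the projectivized kernel of the surjective linear map `L`). -/
def IsBijectiveProjectionOf {N : ℕ} (X : Set (Pr N)) (Xt : Set (Pr (N+1))) : Prop :=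
  ∃ L : (Fin (N+2) → ℂ) →ₗ[ℂ] (Fin (N+1) → ℂ), Function.Surjective L ∧
    (∀ x ∈ Xt, L x.rep ≠ 0) ∧
    X = {z | ∃ x ∈ Xt, ∃ c : ℂ, c ≠ 0 ∧ z.rep = c • L x.rep} ∧
    (∀ x ∈ Xt, ∀ y ∈ Xt, (∃ c : ℂ, L x.rep = c • L y.rep) → x = y)

/-- `X ⊆ ℙ^N` is linearly normal if it is not the image, under a bijective projection from
a point, of a nondegenerate subvariety of `ℙ^{N+1}`. -/
def LinearlyNormal {N : ℕ} (X : Set (Pr N)) : Prop :=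
  ¬ ∃ Xt : Set (Pr (N+1)), IsClosed Xt ∧ IsIrreducible Xt ∧ NondegenerateSet Xt ∧
      IsBijectiveProjectionOf X Xt

/-- Extension by zero `ℂ^a → ℂ^b` (for `a ≤ b`). -/
def padMap (a b : ℕ) : (Fin a → ℂ) →ₗ[ℂ] (Fin b → ℂ) where
  toFun v := fun j => if h : (j : ℕ) < a then v ⟨j, h⟩ else 0
  map_add' v w := by funext j; by_cases h : (j : ℕ) < a <;> simp [h]
  map_smul' c v := by funext j; by_cases h : (j : ℕ) < a <;> simp [h]

lemma padMap_ne_zero {a b : ℕ} (hab : a ≤ b) {v : Fin a → ℂ} (hv : v ≠ 0) :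
    padMap a b v ≠ 0 := by
  obtain ⟨i, hi⟩ := Function.ne_iff.mp hv
  intro h
  have h2 := congrFun h ⟨i, lt_of_lt_of_le i.isLt hab⟩
  simp only [padMap, LinearMap.coe_mk, AddHom.coe_mk, Pi.zero_apply] at h2
  rw [dif_pos i.isLt] at h2
  exact hi (by simpa using h2)

/-- A point of `ℙ^{a-1}` viewed in `ℙ^{b-1}` via the inclusion of the first `a`
coordinates. -/
def embPt {a b : ℕ} (hab : a ≤ b) (x : PrV a) : PrV b :=
  Projectivization.mk ℂ (padMap a b x.rep) (padMap_ne_zero hab x.rep_nonzero)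

/-- The join of two subsets of projective space: the union of all lines joining a point of
`A` to a point of `B`. -/
def joinSets {n : ℕ} (A B : Set (PrV n)) : Set (PrV n) :=
  ⋃ x ∈ A, ⋃ y ∈ B, lineThrough x y

/-
Let `L` be a projection with center `Q` that maps a nondegenerate `Y ⊆ ℙ^{N+1}` bijectively onto
`X`. Cut `X` by a linear space that misses `Sing X`. At a point `x` of `Y` over this section, `Y` is
smooth and its tangent space does not contain `Q`; so it is enough to find such an `x` at which one
of the two fails. Work in the affine cones.

If `Q` lies on the secant variety of `Y`, degenerate the secants `x - y = c • p` to `c = 0`. In the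
closure of this family, fixing `p = Q` and imposing the section leaves positive dimension, and
`c = 0` throughout, because `L` is injective on `Y`; so `Q` is tangent to `Y` at some `x`.

Otherwise the secant variety is a proper subvariety. Let `x - y` be a smooth point of it and `t` a
third general point of `Y`. Triples in `Y` for which the secant directions `x - y` and `x - t` stay
fixed form a family of dimension at least `3 dim Y - 2N`, hence some triple over the section has
`x = t`. By Terracini's lemma the tangent spaces at `x` along the family lie in a hyperplane that
does not contain the direction `x - t`, whereas in the limit `x = t` this direction becomes tangent:
there the dimension of the tangent space jumps, and `Y` is singular.
-/

section KrullDimension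

lemma exists_isPrime_height_le_ringKrullDim_quotient_add {R : Type*} [CommRing R]
    [IsNoetherianRing R] (p : Ideal R) [p.IsPrime] {s : Set R} (hs : s ⊆ p) :
    ∃ q : Ideal R, q.IsPrime ∧ s ⊆ q ∧ q ≤ p ∧
      (p.height : WithBot ℕ∞) ≤ ringKrullDim (R ⧸ q) + (s.encard : WithBot ℕ∞) := by
  have hspan : Ideal.span s ≤ p := Ideal.span_le.2 hs
  have := Ideal.isPrime_map_quotientMk_of_isPrime hspan
  obtain ⟨l, hlast, hlength⟩ :=
    Ideal.exists_ltSeries_length_eq_height (p.map (Ideal.Quotient.mk (Ideal.span s)))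
  let lift : LTSeries (PrimeSpectrum R) := l.map _
    (RingHom.strictMono_comap_of_surjective
      (Ideal.Quotient.mk_surjective (I := Ideal.span s)))
  have hhead : lift.head.asIdeal = l.head.asIdeal.comap (Ideal.Quotient.mk (Ideal.span s)) := by
    simp only [lift, LTSeries.head_map, PrimeSpectrum.comap_asIdeal]
  have hdim : (lift.length : WithBot ℕ∞) ≤ ringKrullDim (R ⧸ lift.head.asIdeal) := by
    rw [ringKrullDim_quotient, Order.le_krullDim_iff]
    exact ⟨⟨lift.length, fun i => ⟨lift i, LTSeries.head_le lift i⟩, fun i => lift.step i⟩, rfl⟩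
  refine ⟨lift.head.asIdeal, lift.head.isPrime, fun x hx => ?_, ?_, ?_⟩
  · rw [hhead, SetLike.mem_coe, Ideal.mem_comap,
      Ideal.Quotient.eq_zero_iff_mem.2 (Ideal.subset_span hx)]
    exact zero_mem _
  · have hle : l.head.asIdeal ≤ l.last.asIdeal := l.head_le_last
    rw [hlast] at hle
    rw [hhead]
    refine (Ideal.comap_mono hle).trans ?_
    rw [Ideal.comap_map_of_surjective' _ Ideal.Quotient.mk_surjective, Ideal.mk_ker,
      sup_eq_left.2 hspan]
  · refine le_trans ?_ (add_le_add_left hdim _)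
    have := Ideal.height_le_height_add_encard_of_subset s hs
    rw [← hlength] at this
    exact_mod_cast this

variable {K : Type*} [Field K]

lemma ringKrullDim_mvPolynomial (K : Type*) [Field K] (σ : Type*) [Finite σ] :
    ringKrullDim (MvPolynomial σ K) = Nat.card σ := by
  rw [MvPolynomial.ringKrullDim_of_isNoetherianRing, ringKrullDim_eq_zero_of_field, zero_add]

/-- The automorphism `X i ↦ X i + a i` of the polynomial ring. -/
def translationEquiv {σ : Type*} (a : σ → K) : MvPolynomial σ K ≃ₐ[K] MvPolynomial σ K :=
  AlgEquiv.ofAlgHom (aeval fun i => X i + C (a i)) (aeval fun i => X i - C (a i))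
    (by ext i; simp) (by ext i; simp)

lemma eval_translationEquiv {σ : Type*} (a v : σ → K) (f : MvPolynomial σ K) :
    eval v (translationEquiv a f) = eval (v + a) f := by
  have : (aeval v : MvPolynomial σ K →ₐ[K] K).comp (translationEquiv a).toAlgHom =
      aeval (v + a) := by
    ext i
    simp [translationEquiv]
  exact DFunLike.congr_fun this f

variable [IsAlgClosed K]

lemma height_eq_card_of_isMaximal {σ : Type*} [Finite σ] (m : Ideal (MvPolynomial σ K))
    [hm : m.IsMaximal] : m.height = Nat.card σ := by
  have : FiniteRingKrullDim (MvPolynomial σ K) := by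
    rw [finiteRingKrullDim_iff_ne_bot_and_top, ringKrullDim_mvPolynomial]
    exact ⟨WithBot.natCast_ne_bot _, fun h => ENat.natCast_ne_top _ (WithBot.coe_injective h)⟩
  obtain ⟨m', hm', hheight⟩ := Ideal.exists_isMaximal_height (R := MvPolynomial σ K)
  rw [ringKrullDim_mvPolynomial] at hheight
  obtain ⟨a, rfl⟩ := isMaximal_iff_eq_vanishingIdeal_singleton.1 hm
  obtain ⟨b, rfl⟩ := isMaximal_iff_eq_vanishingIdeal_singleton.1 hm'
  have hcomap : (vanishingIdeal K {b}).comap (translationEquiv (a - b)).toRingEquiv =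
      vanishingIdeal K {a} := by
    ext f
    simp only [Ideal.mem_comap, mem_vanishingIdeal_singleton_iff]
    have heval := eval_translationEquiv (a - b) b f
    rw [add_sub_cancel] at heval
    exact iff_of_eq (congrArg (· = 0) heval)
  rw [← hcomap, RingEquiv.height_comap]
  exact_mod_cast hheight

lemma height_eq_ringKrullDim_of_isMaximal (K : Type*) [Field K] [IsAlgClosed K] {D : Type*}
    [CommRing D] [IsDomain D] [Algebra K D] [Algebra.FiniteType K D] (m : Ideal D)
    [hm : m.IsMaximal] : (m.height : WithBot ℕ∞) = ringKrullDim D := by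
  obtain ⟨s, g, hg, hfinite⟩ := exists_finite_inj_algHom_of_fg K D
  algebraize [g.toRingHom]
  have : Algebra.IsIntegral (MvPolynomial (Fin s) K) D :=
    ⟨RingHom.IsIntegral.of_finite hfinite⟩
  have : FaithfulSMul (MvPolynomial (Fin s) K) D :=
    (faithfulSMul_iff_algebraMap_injective _ _).2 hg
  have : IsNoetherianRing D := Algebra.FiniteType.isNoetherianRing K D
  have : (m.under (MvPolynomial (Fin s) K)).IsMaximal :=
    Ideal.isMaximal_comap_of_isIntegral_of_isMaximal m
  refine le_antisymm (Ideal.height_le_ringKrullDim_of_ne_top hm.ne_top) ?_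
  calc ringKrullDim D ≤ ringKrullDim (MvPolynomial (Fin s) K) :=
        Order.krullDim_le_of_strictMono
          (PrimeSpectrum.comap (algebraMap (MvPolynomial (Fin s) K) D))
          fun _ _ hlt => Ideal.IsIntegral.comap_lt_comap hlt
    _ = (m.under (MvPolynomial (Fin s) K)).height := by
        rw [height_eq_card_of_isMaximal, ringKrullDim_mvPolynomial]
        rfl
    _ ≤ m.height := by
        rw [Ideal.height_eq_height_add_of_liesOver_of_hasGoingDown
          (m.under (MvPolynomial (Fin s) K)) m]
        exact_mod_cast le_self_add

lemma exists_isPrime_ringKrullDim_quotient_le_add (K : Type*) [Field K] [IsAlgClosed K]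
    {R : Type*} [CommRing R] [Algebra K R] [Algebra.FiniteType K R] {P m : Ideal R} [P.IsPrime]
    [hm : m.IsMaximal] (hPm : P ≤ m) {s : Set R} (hs : s ⊆ m) :
    ∃ Q : Ideal R, Q.IsPrime ∧ P ≤ Q ∧ Q ≤ m ∧ s ⊆ Q ∧
      ringKrullDim (R ⧸ P) ≤ ringKrullDim (R ⧸ Q) + (s.encard : WithBot ℕ∞) := by
  have : IsNoetherianRing R := Algebra.FiniteType.isNoetherianRing K R
  let π := Ideal.Quotient.mk P
  have hπ : Function.Surjective π := Ideal.Quotient.mk_surjective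
  have hker : RingHom.ker π = P := Ideal.mk_ker
  have hmax : (m.map π).IsMaximal :=
    Ideal.IsMaximal.map_of_surjective_of_ker_le hπ (hker.trans_le hPm)
  obtain ⟨q, hq, hsq, hqm, hdim⟩ := exists_isPrime_height_le_ringKrullDim_quotient_add (m.map π)
    (s := π '' s) (by
      rintro _ ⟨x, hx, rfl⟩
      exact Ideal.mem_map_of_mem π (hs hx))
  refine ⟨q.comap π, Ideal.comap_isPrime π q, hker.symm.trans_le (Ideal.ker_le_comap π), ?_,
    fun x hx => hsq ⟨x, hx, rfl⟩, ?_⟩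
  · refine (Ideal.comap_mono hqm).trans_eq ?_
    rw [Ideal.comap_map_of_surjective' π hπ, hker, sup_eq_left.2 hPm]
  · have hkerq : q.comap π = RingHom.ker ((Ideal.Quotient.mk q).comp π) := by
      rw [← RingHom.comap_ker, Ideal.mk_ker]
    have hequiv : ringKrullDim (R ⧸ q.comap π) = ringKrullDim ((R ⧸ P) ⧸ q) :=
      ringKrullDim_eq_of_ringEquiv ((Ideal.quotEquivOfEq hkerq).trans
        (RingHom.quotientKerEquivOfSurjective (Ideal.Quotient.mk_surjective.comp hπ)))
    rw [hequiv, ← height_eq_ringKrullDim_of_isMaximal K (m.map π)]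
    refine hdim.trans (add_le_add_right ?_ _)
    exact_mod_cast Set.encard_image_le _ _

end KrullDimension

section AffineVariety

variable {K : Type*} [Field K] {σ τ : Type*}

lemma mem_vanishingIdeal_iff_eval {W : Set (σ → K)} {f : MvPolynomial σ K} :
    f ∈ vanishingIdeal K W ↔ ∀ w ∈ W, eval w f = 0 := Iff.rfl

/-- A map between affine spaces all of whose coordinates are polynomial. -/
def IsPolynomialMap (φ : (σ → K) → τ → K) : Prop :=
  ∃ F : τ → MvPolynomial σ K, ∀ x i, φ x i = eval x (F i)

lemma IsPolynomialMap.exists_eval_eq {φ : (σ → K) → τ → K} (hφ : IsPolynomialMap φ)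
    (f : MvPolynomial τ K) : ∃ g : MvPolynomial σ K, ∀ x, eval x g = eval (φ x) f := by
  obtain ⟨F, hF⟩ := hφ
  refine ⟨bind₁ F f, fun x => ?_⟩
  rw [show φ x = fun i => eval x (F i) from funext (hF x)]
  exact eval₂Hom_bind₁ (RingHom.id K) x F f

lemma isPolynomialMap_linearMap [Finite σ] (L : (σ → K) →ₗ[K] τ → K) :
    IsPolynomialMap L := by
  classical
  have := Fintype.ofFinite σ
  refine ⟨(LinearMap.toMatrix' L).toMvPolynomial, fun x j => ?_⟩
  rw [Matrix.toMvPolynomial_eval_eq_apply, LinearMap.toMatrix'_mulVec]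

lemma exists_eval_eq_linearForm [Finite σ] (φ : (σ → K) →ₗ[K] K) :
    ∃ f : MvPolynomial σ K, ∀ v, eval v f = φ v := by
  obtain ⟨F, hF⟩ := isPolynomialMap_linearMap (LinearMap.pi fun _ : Unit => φ)
  exact ⟨F (), fun v => (hF v ()).symm⟩

/-- The closure of a subset of affine space in the Zariski topology. -/
def zariskiClosure (S : Set (σ → K)) : Set (σ → K) :=
  zeroLocus K (vanishingIdeal K S)

lemma subset_zariskiClosure (S : Set (σ → K)) : S ⊆ zariskiClosure S :=
  zeroLocus_vanishingIdeal_le S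

lemma vanishingIdeal_zariskiClosure (S : Set (σ → K)) :
    vanishingIdeal K (zariskiClosure S) = vanishingIdeal K S :=
  zeroLocus_vanishingIdeal_galoisConnection.u_l_u_eq_u S

lemma IsPolynomialMap.eq_zero_of_mem_zariskiClosure {φ : (σ → K) → τ → K}
    (hφ : IsPolynomialMap φ) {S : Set (σ → K)} (hS : ∀ x ∈ S, φ x = 0) {x : σ → K}
    (hx : x ∈ zariskiClosure S) : φ x = 0 := by
  obtain ⟨F, hF⟩ := hφ
  ext i
  rw [hF, Pi.zero_apply]
  exact hx (F i) fun y hy => (hF y i).symm.trans (congrFun (hS y hy) i)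

/-- An irreducible Zariski closed subset of affine space. -/
structure IsAffineVariety (W : Set (σ → K)) : Prop where
  isPrime : (vanishingIdeal K W).IsPrime
  zariskiClosure_eq : zariskiClosure W = W

/-- The dimension of an affine variety, as a natural number (a junk value if the coordinate
ring is trivial or of infinite Krull dimension). -/
def affineDim (W : Set (σ → K)) : ℕ :=
  ((ringKrullDim (MvPolynomial σ K ⧸ vanishingIdeal K W)).unbotD 0).toNat

namespace IsAffineVariety

variable {W : Set (σ → K)}

lemma nonempty (hW : IsAffineVariety W) : W.Nonempty := by
  by_contra hempty
  rw [Set.not_nonempty_iff_eq_empty] at hempty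
  apply hW.isPrime.ne_top
  rw [hempty, vanishingIdeal_empty]

lemma mem_of_forall_eval (hW : IsAffineVariety W) {x : σ → K}
    (hx : ∀ f : MvPolynomial σ K, (∀ w ∈ W, eval w f = 0) → eval x f = 0) : x ∈ W := by
  rw [← hW.zariskiClosure_eq]
  exact hx

lemma zariskiClosure_subset (hW : IsAffineVariety W) {S : Set (σ → K)} (hS : S ⊆ W) :
    zariskiClosure S ⊆ W :=
  fun _ hx => hW.mem_of_forall_eval fun f hf => hx f fun y hy => hf y (hS hy)

lemma exists_eval_ne_zero_and (hW : IsAffineVariety W) {f g : MvPolynomial σ K}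
    (hf : ∃ w ∈ W, eval w f ≠ 0) (hg : ∃ w ∈ W, eval w g ≠ 0) :
    ∃ w ∈ W, eval w f ≠ 0 ∧ eval w g ≠ 0 := by
  by_contra! h
  have hmul : f * g ∈ vanishingIdeal K W := fun w hw => by
    by_cases hfw : eval w f = 0
    · exact (map_mul (aeval w) f g).trans (mul_eq_zero_of_left hfw _)
    · exact (map_mul (aeval w) f g).trans (mul_eq_zero_of_right _ (h w hw hfw))
  rcases hW.isPrime.mem_or_mem hmul with hmem | hmem
  · obtain ⟨w, hw, hne⟩ := hf
    exact hne (hmem w hw)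
  · obtain ⟨w, hw, hne⟩ := hg
    exact hne (hmem w hw)

end IsAffineVariety

lemma isPrime_vanishingIdeal_of_exists {S : Set (σ → K)} (hS : S.Nonempty)
    (hirr : ∀ f g : MvPolynomial σ K, (∃ w ∈ S, eval w f ≠ 0) → (∃ w ∈ S, eval w g ≠ 0) →
      ∃ w ∈ S, eval w f ≠ 0 ∧ eval w g ≠ 0) :
    (vanishingIdeal K S).IsPrime where
  ne_top' := by
    obtain ⟨w, hw⟩ := hS
    rw [Ideal.ne_top_iff_one, mem_vanishingIdeal_iff_eval]
    intro h
    simpa using h w hw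
  mem_or_mem' := by
    intro f g hfg
    by_contra! h
    simp only [mem_vanishingIdeal_iff_eval, not_forall, exists_prop] at h
    obtain ⟨w, hw, hf, hg⟩ := hirr f g h.1 h.2
    exact mul_ne_zero hf hg ((map_mul (aeval w) f g).symm.trans (hfg w hw))

lemma isAffineVariety_zariskiClosure {S : Set (σ → K)} (hS : (vanishingIdeal K S).IsPrime) :
    IsAffineVariety (zariskiClosure S) where
  isPrime := by rwa [vanishingIdeal_zariskiClosure]
  zariskiClosure_eq := zeroLocus_vanishingIdeal_galoisConnection.l_u_l_eq_l _

lemma IsAffineVariety.zariskiClosure_image {W : Set (σ → K)} (hW : IsAffineVariety W)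
    {φ : (σ → K) → τ → K} (hφ : IsPolynomialMap φ) :
    IsAffineVariety (zariskiClosure (φ '' W)) := by
  refine isAffineVariety_zariskiClosure
    (isPrime_vanishingIdeal_of_exists (hW.nonempty.image φ) fun f g hf hg => ?_)
  obtain ⟨f', hf'⟩ := hφ.exists_eval_eq f
  obtain ⟨g', hg'⟩ := hφ.exists_eval_eq g
  simp only [exists_mem_image, ← hf', ← hg'] at hf hg ⊢
  exact hW.exists_eval_ne_zero_and hf hg

lemma vanishingIdeal_univ_eq_bot [Infinite K] :
    vanishingIdeal K (univ : Set (σ → K)) = ⊥ := by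
  rw [eq_bot_iff]
  exact fun f hf => funext fun x => (hf x (mem_univ x)).trans (map_zero _).symm

lemma isAffineVariety_univ [Infinite K] : IsAffineVariety (univ : Set (σ → K)) :=
  ⟨vanishingIdeal_univ_eq_bot (σ := σ) (K := K) ▸ Ideal.isPrime_bot,
    univ_subset_iff.1 (subset_zariskiClosure _)⟩

lemma isAffineVariety_zeroLocus [IsAlgClosed K] [Finite σ] (P : Ideal (MvPolynomial σ K))
    [hP : P.IsPrime] : IsAffineVariety (zeroLocus K P) := by
  have := isAffineVariety_zariskiClosure (S := zeroLocus K P)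
    (by rwa [IsPrime.vanishingIdeal_zeroLocus])
  rwa [zariskiClosure, IsPrime.vanishingIdeal_zeroLocus] at this

lemma isAffineVariety_singleton [Finite σ] [IsAlgClosed K] (v : σ → K) :
    IsAffineVariety {v} := by
  have hmax : (vanishingIdeal K {v}).IsMaximal :=
    isMaximal_iff_eq_vanishingIdeal_singleton.2 ⟨v, rfl⟩
  refine ⟨hmax.isPrime, Subset.antisymm (fun x hx => ?_) (subset_zariskiClosure _)⟩
  ext i
  have hxi : eval x (X i - C (v i)) = 0 :=
    hx _ ((mem_vanishingIdeal_singleton_iff _ _).2 (by simp))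
  simpa [sub_eq_zero] using hxi

section Dimension

variable [Finite σ] {W W' : Set (σ → K)}

lemma IsAffineVariety.cast_affineDim (hW : IsAffineVariety W) :
    (affineDim W : WithBot ℕ∞) = ringKrullDim (MvPolynomial σ K ⧸ vanishingIdeal K W) := by
  have := Ideal.Quotient.nontrivial_iff.2 hW.isPrime.ne_top
  have hle : ringKrullDim (MvPolynomial σ K ⧸ vanishingIdeal K W) ≤ Nat.card σ :=
    (ringKrullDim_quotient_le _).trans_eq (ringKrullDim_mvPolynomial K σ)
  have hge := ringKrullDim_nonneg_of_nontrivial (R := MvPolynomial σ K ⧸ vanishingIdeal K W)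
  unfold affineDim
  generalize ringKrullDim (MvPolynomial σ K ⧸ vanishingIdeal K W) = d at hle hge
  cases d with
  | bot => simp at hge
  | coe d =>
    have hd : d ≠ ⊤ := ne_top_of_le_ne_top (ENat.natCast_ne_top (Nat.card σ))
      (WithBot.coe_le_coe.1 hle)
    exact congrArg WithBot.some (ENat.natCast_toNat hd)

lemma IsAffineVariety.affineDim_lt_of_ssubset (hW : IsAffineVariety W)
    (hW' : IsAffineVariety W') (hss : W ⊂ W') : affineDim W < affineDim W' := by
  have := hW'.isPrime
  have hle : vanishingIdeal K W' ≤ vanishingIdeal K W := vanishingIdeal_anti_mono hss.1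
  obtain ⟨f, hf, hf'⟩ : ∃ f ∈ vanishingIdeal K W, f ∉ vanishingIdeal K W' := by
    by_contra! h
    refine hss.2 ?_
    rw [← hW.zariskiClosure_eq, ← hW'.zariskiClosure_eq]
    exact zeroLocus_anti_mono h
  have := ringKrullDim_succ_le_of_surjective (Ideal.Quotient.factor hle)
    (Ideal.Quotient.factor_surjective hle) (r := Ideal.Quotient.mk _ f)
    (mem_nonZeroDivisors_of_ne_zero (mt Ideal.Quotient.eq_zero_iff_mem.1 hf'))
    (Ideal.Quotient.eq_zero_iff_mem.2 hf)
  rw [← hW.cast_affineDim, ← hW'.cast_affineDim] at this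
  exact_mod_cast this

lemma IsAffineVariety.affineDim_mono (hW : IsAffineVariety W) (hW' : IsAffineVariety W')
    (hss : W ⊆ W') : affineDim W ≤ affineDim W' := by
  rcases hss.eq_or_ssubset with rfl | hss
  · exact le_rfl
  · exact (hW.affineDim_lt_of_ssubset hW' hss).le

lemma affineDim_univ [Infinite K] : affineDim (univ : Set (σ → K)) = Nat.card σ := by
  have hdim := (isAffineVariety_univ (K := K) (σ := σ)).cast_affineDim
  rw [vanishingIdeal_univ_eq_bot, ringKrullDim_eq_of_ringEquiv (RingEquiv.quotientBot _),
    ringKrullDim_mvPolynomial] at hdim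
  exact_mod_cast hdim

lemma IsAffineVariety.affineDim_le_card [Infinite K] (hW : IsAffineVariety W) :
    affineDim W ≤ Nat.card σ :=
  (hW.affineDim_mono isAffineVariety_univ (subset_univ W)).trans_eq affineDim_univ

variable [IsAlgClosed K]

lemma IsAffineVariety.exists_ne_of_affineDim_pos (hW : IsAffineVariety W)
    (hdim : 0 < affineDim W) (v : σ → K) : ∃ w ∈ W, w ≠ v := by
  by_contra! h
  have hmax : (vanishingIdeal K {v} : Ideal (MvPolynomial σ K)).IsMaximal :=
    isMaximal_iff_eq_vanishingIdeal_singleton.2 ⟨v, rfl⟩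
  have heq : vanishingIdeal K W = vanishingIdeal K {v} := by
    rw [Set.eq_singleton_iff_nonempty_unique_mem.2 ⟨hW.nonempty, h⟩]
  have := hW.cast_affineDim
  rw [heq, ringKrullDim_eq_zero_of_isField ((Ideal.Quotient.maximal_ideal_iff_isField_quotient
    _).1 hmax)] at this
  exact hdim.ne' (by exact_mod_cast this)

lemma IsAffineVariety.exists_subset_forall_eq_zero [Finite τ] (hW : IsAffineVariety W)
    {w : σ → K} (hw : w ∈ W) {φ : (σ → K) → τ → K} (hφ : IsPolynomialMap φ)
    (hφw : φ w = 0) :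
    ∃ W' ⊆ W, IsAffineVariety W' ∧ w ∈ W' ∧ (∀ v ∈ W', φ v = 0) ∧
      affineDim W ≤ affineDim W' + Nat.card τ := by
  obtain ⟨F, hF⟩ := hφ
  have := hW.isPrime
  have hmax : (vanishingIdeal K {w} : Ideal (MvPolynomial σ K)).IsMaximal :=
    isMaximal_iff_eq_vanishingIdeal_singleton.2 ⟨w, rfl⟩
  obtain ⟨Q, hQ, hWQ, hQw, hFQ, hdim⟩ := exists_isPrime_ringKrullDim_quotient_le_add K
    (P := vanishingIdeal K W) (m := vanishingIdeal K {w}) (s := range F)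
    (vanishingIdeal_anti_mono (singleton_subset_iff.2 hw)) (by
      rintro _ ⟨i, rfl⟩
      refine (mem_vanishingIdeal_singleton_iff _ _).2 ?_
      exact (hF w i).symm.trans (congrFun hφw i))
  have hvar := isAffineVariety_zeroLocus Q
  refine ⟨zeroLocus K Q, ?_, hvar,
    fun f hf => (mem_vanishingIdeal_singleton_iff _ _).1 (hQw hf), fun v hv => ?_, ?_⟩
  · exact hW.zariskiClosure_eq ▸ zeroLocus_anti_mono hWQ
  · ext i
    exact (hF v i).trans (hv _ (hFQ ⟨i, rfl⟩))
  · have hcard : (range F).encard ≤ Nat.card τ := by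
      rw [← Set.image_univ, ← ENat.card_eq_coe_natCard, ← Set.encard_univ]
      exact Set.encard_image_le _ _
    have hQdim := hvar.cast_affineDim
    rw [IsPrime.vanishingIdeal_zeroLocus] at hQdim
    rw [← hW.cast_affineDim, ← hQdim] at hdim
    have := hdim.trans (add_le_add_right (WithBot.coe_le_coe.2 hcard) _)
    exact_mod_cast this

end Dimension

end AffineVariety

section Product

variable {K σ τ : Type*}

/-- The product of two subsets of affine spaces, as a subset of the affine space on the
disjoint union of the coordinates. -/
def affineProd (A : Set (σ → K)) (B : Set (τ → K)) : Set (σ ⊕ τ → K) :=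
  {w | w ∘ Sum.inl ∈ A ∧ w ∘ Sum.inr ∈ B}

lemma affineProd_ssubset_left {A A' : Set (σ → K)} {B : Set (τ → K)} (hB : B.Nonempty)
    (h : A' ⊂ A) : affineProd A' B ⊂ affineProd A B := by
  obtain ⟨a, ha, ha'⟩ := exists_of_ssubset h
  obtain ⟨b, hb⟩ := hB
  have hsub : affineProd A' B ⊆ affineProd A B := fun w hw => ⟨h.1 hw.1, hw.2⟩
  exact (ssubset_iff_of_subset hsub).2
    ⟨Sum.elim a b, ⟨ha, hb⟩, fun hmem => ha' hmem.1⟩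

lemma affineProd_ssubset_right {A : Set (σ → K)} {B B' : Set (τ → K)} (hA : A.Nonempty)
    (h : B' ⊂ B) : affineProd A B' ⊂ affineProd A B := by
  obtain ⟨b, hb, hb'⟩ := exists_of_ssubset h
  obtain ⟨a, ha⟩ := hA
  have hsub : affineProd A B' ⊆ affineProd A B := fun w hw => ⟨hw.1, h.1 hw.2⟩
  exact (ssubset_iff_of_subset hsub).2
    ⟨Sum.elim a b, ⟨ha, hb⟩, fun hmem => hb' hmem.2⟩

variable [Field K]

lemma isPolynomialMap_comp_right (e : τ → σ) :
    IsPolynomialMap fun w : σ → K => w ∘ e :=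
  ⟨fun i => X (e i), by simp⟩

lemma isPolynomialMap_elim_left (b : τ → K) :
    IsPolynomialMap fun a : σ → K => Sum.elim a b :=
  ⟨Sum.elim X fun j => C (b j), by rintro a (i | j) <;> simp⟩

lemma isPolynomialMap_elim_right (a : σ → K) :
    IsPolynomialMap fun b : τ → K => Sum.elim a b :=
  ⟨Sum.elim (fun i => C (a i)) X, by rintro b (i | j) <;> simp⟩

lemma IsAffineVariety.prod {A : Set (σ → K)} {B : Set (τ → K)} (hA : IsAffineVariety A)
    (hB : IsAffineVariety B) : IsAffineVariety (affineProd A B) := by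
  constructor
  · obtain ⟨a₀, ha₀⟩ := hA.nonempty
    obtain ⟨b₀, hb₀⟩ := hB.nonempty
    refine isPrime_vanishingIdeal_of_exists ⟨Sum.elim a₀ b₀, ha₀, hb₀⟩ ?_
    rintro f g ⟨v, ⟨hvA, hvB⟩, hfv⟩ ⟨w, ⟨hwA, hwB⟩, hgw⟩
    obtain ⟨f', hf'⟩ := (isPolynomialMap_elim_right (v ∘ Sum.inl)).exists_eval_eq f
    obtain ⟨g', hg'⟩ := (isPolynomialMap_elim_right (w ∘ Sum.inl)).exists_eval_eq g
    obtain ⟨b, hb, hfb, hgb⟩ := hB.exists_eval_ne_zero_and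
      ⟨_, hvB, by rwa [hf', Sum.elim_comp_inl_inr]⟩
      ⟨_, hwB, by rwa [hg', Sum.elim_comp_inl_inr]⟩
    rw [hf'] at hfb
    rw [hg'] at hgb
    obtain ⟨f'', hf''⟩ := (isPolynomialMap_elim_left b).exists_eval_eq f
    obtain ⟨g'', hg''⟩ := (isPolynomialMap_elim_left b).exists_eval_eq g
    obtain ⟨a, ha, hfa, hga⟩ := hA.exists_eval_ne_zero_and
      ⟨_, hvA, by rwa [hf'']⟩ ⟨_, hwA, by rwa [hg'']⟩
    exact ⟨Sum.elim a b, ⟨ha, hb⟩, hf'' a ▸ hfa, hg'' a ▸ hga⟩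
  · refine Set.Subset.antisymm (fun x hx => ⟨hA.mem_of_forall_eval fun f hf => ?_,
      hB.mem_of_forall_eval fun f hf => ?_⟩) (subset_zariskiClosure _)
    · obtain ⟨g, hg⟩ := (isPolynomialMap_comp_right Sum.inl).exists_eval_eq f
      exact (hg x).symm.trans (hx g fun w hw => (hg w).trans (hf _ hw.1))
    · obtain ⟨g, hg⟩ := (isPolynomialMap_comp_right Sum.inr).exists_eval_eq f
      exact (hg x).symm.trans (hx g fun w hw => (hg w).trans (hf _ hw.2))

lemma IsAffineVariety.exists_ssubset_affineDim_le_add_one [IsAlgClosed K] [Finite σ]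
    {W : Set (σ → K)} (hW : IsAffineVariety W) (hdim : 0 < affineDim W) :
    ∃ W' ⊂ W, IsAffineVariety W' ∧ affineDim W ≤ affineDim W' + 1 := by
  obtain ⟨w, hw⟩ := hW.nonempty
  obtain ⟨v, hv, hne⟩ := hW.exists_ne_of_affineDim_pos hdim w
  obtain ⟨i, hi⟩ := Function.ne_iff.1 hne
  obtain ⟨W', hsub, hW', -, hzero, hle⟩ := hW.exists_subset_forall_eq_zero hw
    (φ := fun x (_ : Unit) => x i - w i) ⟨fun _ => X i - C (w i), by simp⟩
    (funext fun _ => sub_self _)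
  refine ⟨W', (ssubset_iff_of_subset hsub).2 ⟨v, hv, fun hmem => hi ?_⟩, hW', by simpa using hle⟩
  exact sub_eq_zero.1 (congrFun (hzero v hmem) ())

lemma IsAffineVariety.add_le_affineDim_affineProd [IsAlgClosed K] [Finite σ] [Finite τ]
    {A : Set (σ → K)} {B : Set (τ → K)} (hA : IsAffineVariety A) (hB : IsAffineVariety B) :
    affineDim A + affineDim B ≤ affineDim (affineProd A B) := by
  induction hn : affineDim A + affineDim B generalizing A B with
  | zero => exact zero_le
  | succ n ih =>
    rcases Nat.eq_zero_or_pos (affineDim A) with hA0 | hApos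
    · obtain ⟨B', hss, hB', hdim⟩ := hB.exists_ssubset_affineDim_le_add_one (by omega)
      have hlt := (hA.prod hB').affineDim_lt_of_ssubset (hA.prod hB)
        (affineProd_ssubset_right hA.nonempty hss)
      have := hB'.affineDim_lt_of_ssubset hB hss
      have := ih hA hB' (by omega)
      omega
    · obtain ⟨A', hss, hA', hdim⟩ := hA.exists_ssubset_affineDim_le_add_one hApos
      have hlt := (hA'.prod hB).affineDim_lt_of_ssubset (hA.prod hB)
        (affineProd_ssubset_left hB.nonempty hss)
      have := hA'.affineDim_lt_of_ssubset hA hss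
      have := ih hA' hB (by omega)
      omega

end Product

section Cone

variable {K : Type*} [Field K] {σ τ : Type*}

/-- A subset of affine space stable under scaling by every scalar, zero included. -/
def IsCone (W : Set (σ → K)) : Prop := ∀ w ∈ W, ∀ c : K, c • w ∈ W

lemma IsCone.zero_mem {W : Set (σ → K)} (hW : IsCone W) (hne : W.Nonempty) : 0 ∈ W := by
  obtain ⟨w, hw⟩ := hne
  simpa using hW w hw 0

lemma IsCone.prod {A : Set (σ → K)} {B : Set (τ → K)} (hA : IsCone A) (hB : IsCone B) :
    IsCone (affineProd A B) :=
  fun _ hw c => ⟨hA _ hw.1 c, hB _ hw.2 c⟩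

lemma IsPolynomialMap.mapsTo_zariskiClosure {φ : (σ → K) → τ → K} (hφ : IsPolynomialMap φ)
    {S : Set (σ → K)} {T : Set (τ → K)} (h : MapsTo φ S T) :
    MapsTo φ (zariskiClosure S) (zariskiClosure T) := fun x hx f hf => by
  obtain ⟨g, hg⟩ := hφ.exists_eval_eq f
  exact (hg x).symm.trans (hx g fun y hy => (hg y).trans (hf _ (h hy)))

lemma IsCone.closure {W : Set (σ → K)} (hW : IsCone W) : IsCone (zariskiClosure W) :=
  fun _ hw c => IsPolynomialMap.mapsTo_zariskiClosure (φ := fun v => c • v)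
    ⟨fun i => C c * X i, by simp⟩ (fun _ hv => hW _ hv c) hw

lemma IsAffineVariety.exists_isCone_subset [IsAlgClosed K] [Finite σ] [Finite τ]
    {W : Set (σ → K)} (hW : IsAffineVariety W) (hcone : IsCone W) {w : σ → K} (hw : w ∈ W)
    (U : (σ → K) →ₗ[K] τ → K) (hUw : U w = 0) :
    ∃ W' ⊆ W, IsAffineVariety W' ∧ IsCone W' ∧ w ∈ W' ∧ (∀ v ∈ W', U v = 0) ∧
      affineDim W ≤ affineDim W' + Nat.card τ := by
  obtain ⟨V, hVW, hV, hwV, hUV, hdim⟩ :=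
    hW.exists_subset_forall_eq_zero hw (isPolynomialMap_linearMap U) hUw
  let scale : (Unit ⊕ σ → K) → σ → K := fun x => x (Sum.inl ()) • (x ∘ Sum.inr)
  have hscale : IsPolynomialMap scale :=
    ⟨fun i => X (Sum.inl ()) * X (Sum.inr i), by simp [scale]⟩
  let S := scale '' affineProd univ V
  have hS : ∀ {x}, x ∈ S ↔ ∃ c : K, ∃ v ∈ V, c • v = x := by
    intro x
    constructor
    · rintro ⟨y, hy, rfl⟩
      exact ⟨_, _, hy.2, rfl⟩
    · rintro ⟨c, v, hv, rfl⟩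
      exact ⟨Sum.elim (fun _ => c) v, ⟨mem_univ _, hv⟩, rfl⟩
  have hVS : V ⊆ S := fun v hv => hS.2 ⟨1, v, hv, one_smul K v⟩
  have hSvar := (isAffineVariety_univ.prod hV).zariskiClosure_image hscale
  have hScone : IsCone S := fun x hx d => by
    obtain ⟨c, v, hv, rfl⟩ := hS.1 hx
    exact hS.2 ⟨d * c, v, hv, mul_smul d c v⟩
  refine ⟨zariskiClosure S, hW.zariskiClosure_subset fun x hx => ?_, hSvar,
    hScone.closure, subset_zariskiClosure S (hVS hwV),
    fun v => (isPolynomialMap_linearMap U).eq_zero_of_mem_zariskiClosure fun x hx => ?_,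
    hdim.trans (add_le_add_left (hV.affineDim_mono hSvar
      (hVS.trans (subset_zariskiClosure S))) _)⟩
  · obtain ⟨c, v, hv, rfl⟩ := hS.1 hx
    exact hcone v (hVW hv) c
  · obtain ⟨c, v, hv, rfl⟩ := hS.1 hx
    rw [map_smul, hUV v hv, smul_zero]

lemma IsAffineVariety.exists_ne_zero_of_card_lt [IsAlgClosed K] [Finite σ] [Finite τ]
    {W : Set (σ → K)} (hW : IsAffineVariety W) (hcone : IsCone W)
    (U : (σ → K) →ₗ[K] τ → K) (hdim : Nat.card τ < affineDim W) :
    ∃ w ∈ W, w ≠ 0 ∧ U w = 0 := by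
  obtain ⟨W', hsub, hW', -, hU, hle⟩ := hW.exists_subset_forall_eq_zero
    (hcone.zero_mem hW.nonempty) (isPolynomialMap_linearMap U) (map_zero U)
  obtain ⟨w, hw, hne⟩ := hW'.exists_ne_of_affineDim_pos (by omega) 0
  exact ⟨w, hsub hw, hne, hU w hw⟩

end Cone

section Scaling

variable {K : Type*} [Field K] {σ : Type*}

lemma exists_polynomial_eval_smul (f : MvPolynomial σ K) (v : σ → K) :
    ∃ p : Polynomial K, (∀ c, p.eval c = eval (c • v) f) ∧
      ∀ d, p.coeff d = eval v (homogeneousComponent d f) := by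
  induction f using MvPolynomial.induction_on' with
  | monomial u a =>
    refine ⟨Polynomial.monomial u.degree (eval v (monomial u a)), fun c => ?_, fun d => ?_⟩
    · simp only [Polynomial.eval_monomial, eval_monomial, Pi.smul_apply, smul_eq_mul, mul_pow,
        Finsupp.prod, Finset.prod_mul_distrib, Finset.prod_pow_eq_pow_sum,
        Finsupp.degree_apply]
      ring
    · rw [homogeneousComponent_of_mem (isHomogeneous_monomial a rfl), Polynomial.coeff_monomial]
      split_ifs with h h' h'
      · rfl
      · exact absurd h.symm h'
      · exact absurd h'.symm h
      · simp
  | add f g hf hg =>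
    obtain ⟨p, hp, hp'⟩ := hf
    obtain ⟨q, hq, hq'⟩ := hg
    exact ⟨p + q, fun c => by rw [Polynomial.eval_add, hp, hq, map_add],
      fun d => by rw [Polynomial.coeff_add, hp', hq', map_add, map_add]⟩

lemma eval_homogeneousComponent_eq_zero [Infinite K] {f : MvPolynomial σ K} {v : σ → K}
    (h : ∀ c : K, c ≠ 0 → eval (c • v) f = 0) (d : ℕ) :
    eval v (homogeneousComponent d f) = 0 := by
  obtain ⟨p, hp, hp'⟩ := exists_polynomial_eval_smul f v
  have hroots : {c | p.IsRoot c}.Infinite :=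
    (finite_singleton (0 : K)).infinite_compl.mono fun c hc => (hp c).trans (h c hc)
  rw [← hp', Polynomial.eq_zero_of_infinite_isRoot p hroots, Polynomial.coeff_zero]

lemma eval_smul_eq_zero [Infinite K] {f : MvPolynomial σ K} {v : σ → K}
    (h : ∀ c : K, c ≠ 0 → eval (c • v) f = 0) (c : K) : eval (c • v) f = 0 := by
  obtain ⟨p, hp, hp'⟩ := exists_polynomial_eval_smul f v
  have hp0 : p = 0 := Polynomial.ext fun d => by
    rw [hp', eval_homogeneousComponent_eq_zero h, Polynomial.coeff_zero]
  rw [← hp, hp0, Polynomial.eval_zero]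

end Scaling

section LinearPullback

/-- The substitution of a linear map into polynomials. -/
def linearPullback {m n : ℕ} (u : (Fin n → ℂ) →ₗ[ℂ] Fin m → ℂ) :
    MvPolynomial (Fin m) ℂ →ₐ[ℂ] MvPolynomial (Fin n) ℂ :=
  aeval (LinearMap.toMatrix' u).toMvPolynomial

variable {m n : ℕ} (u : (Fin n → ℂ) →ₗ[ℂ] Fin m → ℂ)

lemma eval_linearPullback (f : MvPolynomial (Fin m) ℂ) (v : Fin n → ℂ) :
    eval v (linearPullback u f) = eval (u v) f := by
  rw [linearPullback, aeval_eq_bind₁, ← coe_aeval_eq_eval, RingHom.coe_coe, aeval_bind₁,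
    ← coe_aeval_eq_eval, RingHom.coe_coe]
  congr 2
  ext i
  rw [← AlgHom.coe_toRingHom, coe_aeval_eq_eval, Matrix.toMvPolynomial_eval_eq_apply,
    LinearMap.toMatrix'_mulVec]

end LinearPullback

section ProjectiveCone

variable {n : ℕ} {Y Z : Set (PrV n)} {v : Fin n → ℂ}

lemma mem_idealOf_iff {f : MvPolynomial (Fin n) ℂ} :
    f ∈ idealOf Y ↔ ∀ v (hv : v ≠ 0), Projectivization.mk ℂ v hv ∈ Y → eval v f = 0 :=
  ⟨fun h v hv hY => h hY v hv rfl, fun h _ hx v hv hvx => h v hv (hvx ▸ hx)⟩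

lemma mk_smul_eq {c : ℂ} (hc : c • v ≠ 0) (hv : v ≠ 0) :
    Projectivization.mk ℂ (c • v) hc = Projectivization.mk ℂ v hv :=
  (Projectivization.mk_eq_mk_iff' ..).2 ⟨c, rfl⟩

lemma mk_mem_pZero_iff {f : MvPolynomial (Fin n) ℂ} (hv : v ≠ 0) :
    Projectivization.mk ℂ v hv ∈ pZero f ↔ ∀ c : ℂ, c ≠ 0 → eval (c • v) f = 0 := by
  refine ⟨fun h c hc => h (c • v) (smul_ne_zero hc hv) (mk_smul_eq _ hv), fun h w hw hwv => ?_⟩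
  obtain ⟨c, rfl⟩ := (Projectivization.mk_eq_mk_iff' ..).1 hwv
  exact h c (left_ne_zero_of_smul hw)

lemma isClosed_pZero (f : MvPolynomial (Fin n) ℂ) : IsClosed (pZero f) :=
  ⟨TopologicalSpace.isOpen_generateFrom_of_mem ⟨f, rfl⟩⟩

lemma exists_mem_idealOf_eval_ne_zero (hY : IsClosed Y) (hv : v ≠ 0)
    (hvY : Projectivization.mk ℂ v hv ∉ Y) : ∃ f ∈ idealOf Y, eval v f ≠ 0 := by
  suffices key : ∀ U : Set (PrV n), IsOpen U → Projectivization.mk ℂ v hv ∈ U →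
      ∃ f ∈ idealOf Uᶜ, eval v f ≠ 0 by
    simpa only [compl_compl] using key Yᶜ hY.isOpen_compl hvY
  intro U hU
  induction hU with
  | basic U hU =>
    obtain ⟨f, rfl⟩ := hU
    intro hvf
    rw [mem_compl_iff, mk_mem_pZero_iff] at hvf
    push Not at hvf
    obtain ⟨c, hc, hcf⟩ := hvf
    refine ⟨linearPullback (c • LinearMap.id) f, mem_idealOf_iff.2 fun w hw hwf => ?_, ?_⟩
    · rw [compl_compl, mk_mem_pZero_iff] at hwf
      rw [eval_linearPullback]
      exact hwf c hc
    · rwa [eval_linearPullback]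
  | univ => exact fun _ => ⟨1, mem_idealOf_iff.2 (by simp), by simp⟩
  | inter s t _ _ ihs iht =>
    intro hvU
    obtain ⟨f, hf, hfv⟩ := ihs hvU.1
    obtain ⟨g, hg, hgv⟩ := iht hvU.2
    refine ⟨f * g, mem_idealOf_iff.2 fun w hw hwU => ?_, by simp [hfv, hgv]⟩
    rw [compl_inter] at hwU
    rcases hwU with hws | hwt
    · rw [map_mul, mem_idealOf_iff.1 hf w hw hws, zero_mul]
    · rw [map_mul, mem_idealOf_iff.1 hg w hw hwt, mul_zero]
  | sUnion S _ ih =>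
    rintro ⟨U, hU, hvU⟩
    obtain ⟨f, hf, hfv⟩ := ih U hU hvU
    exact ⟨f, mem_idealOf_iff.2 fun w hw hwS => mem_idealOf_iff.1 hf w hw
      fun hwU => hwS ⟨U, hU, hwU⟩, hfv⟩

/-- The affine cone over a set of points of projective space, including its vertex `0`. -/
def affineCone (Y : Set (PrV n)) : Set (Fin n → ℂ) :=
  {v | ∀ hv : v ≠ 0, Projectivization.mk ℂ v hv ∈ Y}

lemma zero_mem_affineCone : (0 : Fin n → ℂ) ∈ affineCone Y := fun h => absurd rfl h

lemma mem_affineCone_iff (hv : v ≠ 0) :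
    v ∈ affineCone Y ↔ Projectivization.mk ℂ v hv ∈ Y :=
  ⟨fun h => h hv, fun h _ => h⟩

lemma rep_mem_affineCone_iff {x : PrV n} : x.rep ∈ affineCone Y ↔ x ∈ Y := by
  rw [mem_affineCone_iff x.rep_nonzero, Projectivization.mk_rep]

lemma isCone_affineCone (Y : Set (PrV n)) : IsCone (affineCone Y) := by
  intro v hv c hcv
  have hv0 : v ≠ 0 := right_ne_zero_of_smul hcv
  rw [mk_smul_eq hcv hv0]
  exact hv hv0

lemma affineCone_mono (h : Y ⊆ Z) : affineCone Y ⊆ affineCone Z := fun _ hv hv0 => h (hv hv0)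

lemma affineCone_ssubset (h : Y ⊂ Z) : affineCone Y ⊂ affineCone Z := by
  obtain ⟨x, hxZ, hxY⟩ := exists_of_ssubset h
  exact (ssubset_iff_of_subset (affineCone_mono h.1)).2 ⟨x.rep, rep_mem_affineCone_iff.2 hxZ,
    mt rep_mem_affineCone_iff.1 hxY⟩

lemma vanishingIdeal_affineCone (hY : Y.Nonempty) :
    vanishingIdeal ℂ (affineCone Y) = idealOf Y := by
  ext f
  rw [mem_vanishingIdeal_iff_eval, mem_idealOf_iff]
  refine ⟨fun h v hv hvY => h v fun _ => hvY, fun h v hv => ?_⟩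
  rcases eq_or_ne v 0 with rfl | hv0
  · obtain ⟨x, hx⟩ := hY
    rw [← zero_smul ℂ x.rep]
    refine eval_smul_eq_zero (fun c hc => ?_) 0
    refine h _ (smul_ne_zero hc x.rep_nonzero) ?_
    rwa [mk_smul_eq _ x.rep_nonzero, Projectivization.mk_rep]
  · exact h v hv0 (hv hv0)

lemma isPrime_idealOf (hY : IsIrreducible Y) : (idealOf Y).IsPrime := by
  have hcone := vanishingIdeal_affineCone hY.nonempty
  refine ⟨(Ideal.ne_top_iff_one _).2 fun h => ?_, fun {f g} hfg => ?_⟩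
  · obtain ⟨x, hx⟩ := hY.nonempty
    simpa using mem_idealOf_iff.1 h x.rep x.rep_nonzero (by rwa [Projectivization.mk_rep])
  · refine isPreirreducible_iff_isClosed_union_isClosed.1 hY.2 (pZero f) (pZero g)
      (isClosed_pZero f) (isClosed_pZero g) fun x hx => ?_
    obtain ⟨p, hp, -⟩ := exists_polynomial_eval_smul f x.rep
    obtain ⟨q, hq, -⟩ := exists_polynomial_eval_smul g x.rep
    have hpq : p * q = 0 := Polynomial.funext fun c => by
      rw [Polynomial.eval_mul, hp, hq, Polynomial.eval_zero, ← map_mul]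
      exact (hcone ▸ hfg) _ (isCone_affineCone Y _ (rep_mem_affineCone_iff.2 hx) c)
    rw [mem_union, ← x.mk_rep, mk_mem_pZero_iff, mk_mem_pZero_iff]
    refine (mul_eq_zero.1 hpq).imp (fun h c _ => ?_) fun h c _ => ?_
    · rw [← hp, h, Polynomial.eval_zero]
    · rw [← hq, h, Polynomial.eval_zero]

lemma isAffineVariety_affineCone (hcl : IsClosed Y) (hirr : IsIrreducible Y) :
    IsAffineVariety (affineCone Y) where
  isPrime := (vanishingIdeal_affineCone hirr.nonempty).symm ▸ isPrime_idealOf hirr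
  zariskiClosure_eq := by
    refine Subset.antisymm (fun v hv hv0 => ?_) (subset_zariskiClosure _)
    by_contra hvY
    obtain ⟨f, hf, hfv⟩ := exists_mem_idealOf_eval_ne_zero hcl hv0 hvY
    exact hfv (hv f ((vanishingIdeal_affineCone hirr.nonempty).symm ▸ hf))

lemma idealOf_anti (h : Y ⊆ Z) : idealOf Z ≤ idealOf Y := fun _ hf _ hx => hf (h hx)

lemma eq_of_idealOf_le (hY : IsClosed Y) (hsub : Y ⊆ Z) (h : idealOf Y ≤ idealOf Z) :
    Y = Z := by
  refine hsub.antisymm fun x hx => ?_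
  by_contra hxY
  rw [← x.mk_rep] at hx hxY
  obtain ⟨f, hf, hfx⟩ := exists_mem_idealOf_eval_ne_zero hY x.rep_nonzero hxY
  exact hfx (mem_idealOf_iff.1 (h hf) _ x.rep_nonzero hx)

instance noetherianSpace_projectivization : TopologicalSpace.NoetherianSpace (PrV n) := by
  refine ((TopologicalSpace.noetherianSpace_TFAE (PrV n)).out 0 1).2 ?_
  refine StrictAnti.wellFoundedLT
    (f := fun Z : TopologicalSpace.Closeds (PrV n) => idealOf (Z : Set (PrV n))) fun A B hAB => ?_
  have hsub : (A : Set (PrV n)) ⊆ B := hAB.le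
  exact lt_of_le_not_ge (idealOf_anti hsub) fun h =>
    hAB.ne (SetLike.coe_injective (eq_of_idealOf_le A.isClosed hsub h))

end ProjectiveCone

section LinearSections

lemma add_one_le_topologicalKrullDim_of_isClosedEmbedding {α β : Type*} [TopologicalSpace α]
    [TopologicalSpace β] {f : β → α} (hf : Topology.IsClosedEmbedding f)
    (hcomp : ∀ Z ∈ irreducibleComponents α, ¬ Z ⊆ range f) {d : ℕ}
    (hd : d ≤ topologicalKrullDim β) : (d + 1 : ℕ) ≤ topologicalKrullDim α := by
  obtain ⟨s, rfl⟩ := Order.le_krullDim_iff.1 hd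
  let t : LTSeries (TopologicalSpace.IrreducibleCloseds α) :=
    s.map _ (TopologicalSpace.IrreducibleCloseds.map_strictMono_of_isInducing hf.isInducing)
  obtain ⟨Z, hZ, htZ⟩ :=
    exists_mem_irreducibleComponents_subset_of_isIrreducible (t.last : Set α) t.last.isIrreducible
  have hlast : (t.last : Set α) ⊆ range f := by
    rw [LTSeries.last_map, TopologicalSpace.IrreducibleCloseds.coe_map]
    exact closure_minimal (image_subset_range _ _) hf.isClosed_range
  have hlt : t.last < ⟨Z, hZ.1, isClosed_of_mem_irreducibleComponents Z hZ⟩ :=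
    lt_of_le_not_ge htZ fun h => hcomp Z hZ (subset_trans h hlast)
  exact Order.le_krullDim_iff.2 ⟨t.snoc _ hlt, by simp [t]⟩

variable {n : ℕ}

lemma isClosed_setOf_apply_rep_eq_zero (φ : (Fin n → ℂ) →ₗ[ℂ] ℂ) :
    IsClosed {x : PrV n | φ x.rep = 0} := by
  obtain ⟨f, hf⟩ := exists_eval_eq_linearForm φ
  convert isClosed_pZero f
  ext x
  rw [← x.mk_rep, mk_mem_pZero_iff, x.mk_rep]
  exact ⟨fun h c _ => by rw [hf, map_smul, h, smul_zero],
    fun h => by simpa [hf] using h 1 one_ne_zero⟩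

lemma apply_rep_mk_eq_zero_iff {m : ℕ} (φ : (Fin n → ℂ) →ₗ[ℂ] Fin m → ℂ)
    {v : Fin n → ℂ} (hv : v ≠ 0) : φ (Projectivization.mk ℂ v hv).rep = 0 ↔ φ v = 0 := by
  obtain ⟨c, hc⟩ := Projectivization.exists_smul_eq_mk_rep ℂ v hv
  rw [← hc, Units.smul_def, map_smul, smul_eq_zero_iff_right c.ne_zero]

lemma exists_linearForm_pdim_lt {S : Set (PrV n)} (hS : IsClosed S) {d : ℕ}
    (hd : pdim S < (d + 1 : ℕ)) (T : Submodule ℂ (Fin n → ℂ)) :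
    ∃ φ : (Fin n → ℂ) →ₗ[ℂ] ℂ, pdim (S ∩ {x | φ x.rep = 0}) < d ∧
      (T ≠ ⊥ → ∃ t ∈ T, φ t ≠ 0) := by
  have hfin : Finite (irreducibleComponents S) :=
    TopologicalSpace.NoetherianSpace.finite_irreducibleComponents
  choose x hx using fun Z : irreducibleComponents S => Z.2.1.nonempty
  choose t htT ht0 using fun h : PLift (T ≠ ⊥) => Submodule.exists_mem_ne_zero_of_ne_bot h.down
  obtain ⟨φ, hφ⟩ := Module.exists_dual_forall_apply_ne_zero (K := ℂ)
    (Sum.elim (fun Z => (x Z : PrV n).rep) t)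
    (Sum.forall.2 ⟨fun Z => (x Z : PrV n).rep_nonzero, ht0⟩)
  refine ⟨φ, lt_of_not_ge fun hle => hd.not_ge ?_, fun h => ⟨_, htT ⟨h⟩, hφ (Sum.inr ⟨h⟩)⟩⟩
  refine add_one_le_topologicalKrullDim_of_isClosedEmbedding
    (f := inclusion (inter_subset_left (t := {x : PrV n | φ x.rep = 0})))
    (.inclusion _ ((hS.inter (isClosed_setOf_apply_rep_eq_zero φ)).preimage continuous_subtype_val))
    (fun Z hZ hsub => ?_) hle
  obtain ⟨y, hy⟩ := hsub (hx ⟨Z, hZ⟩)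
  have hy0 : φ (y : PrV n).rep = 0 := y.2.2
  exact hφ (Sum.inl ⟨Z, hZ⟩) (by rw [Sum.elim_inl, ← hy, coe_inclusion, hy0])

lemma exists_linearMap_ne_zero_of_pdim_lt {d : ℕ} {S : Set (PrV n)} (hS : IsClosed S)
    (hd : pdim S < d) {T : Submodule ℂ (Fin n → ℂ)} (hT : Module.finrank ℂ T ≤ d) :
    ∃ U : (Fin n → ℂ) →ₗ[ℂ] Fin d → ℂ, (∀ x ∈ S, U x.rep ≠ 0) ∧ Disjoint T (LinearMap.ker U) := by
  induction d generalizing S T with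
  | zero =>
    refine ⟨0, fun x hx => absurd hd (not_lt_of_ge ?_), ?_⟩
    · have : Nonempty (TopologicalSpace.IrreducibleCloseds S) :=
        ⟨⟨_, isIrreducible_irreducibleComponent (x := ⟨x, hx⟩), isClosed_irreducibleComponent⟩⟩
      exact Order.krullDim_nonneg
    · rw [Submodule.finrank_eq_zero.1 (Nat.le_zero.1 hT)]
      exact disjoint_bot_left
  | succ d ih =>
    obtain ⟨φ, hφ, hφT⟩ := exists_linearForm_pdim_lt hS hd T
    have hT' : Module.finrank ℂ (T ⊓ LinearMap.ker φ : Submodule ℂ _) ≤ d := by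
      by_cases hbot : T = ⊥
      · rw [hbot, bot_inf_eq, finrank_bot]
        exact zero_le
      · obtain ⟨t, htT, ht⟩ := hφT hbot
        have hlt : T ⊓ LinearMap.ker φ < T :=
          inf_lt_left.2 fun h => ht (LinearMap.mem_ker.1 (h htT))
        have := Submodule.finrank_lt_finrank_of_lt hlt
        omega
    obtain ⟨U, hUS, hUT⟩ := ih (hS.inter (isClosed_setOf_apply_rep_eq_zero φ)) hφ hT'
    let V : (Fin n → ℂ) →ₗ[ℂ] Fin (d + 1) → ℂ :=
      LinearMap.pi (Fin.cons φ fun i => LinearMap.proj i ∘ₗ U)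
    have hV {v : Fin n → ℂ} (hv : V v = 0) : φ v = 0 ∧ U v = 0 :=
      ⟨congrFun hv 0, funext fun i => congrFun hv i.succ⟩
    refine ⟨V, fun x hx hVx => hUS x ⟨hx, (hV hVx).1⟩ (hV hVx).2, ?_⟩
    refine Submodule.disjoint_def.2 fun v hvT hvV => ?_
    exact Submodule.disjoint_def.1 hUT v ⟨hvT, (hV hvV).1⟩ (hV hvV).2

lemma add_one_le_affineDim_affineCone {Y : Set (PrV n)} (hcl : IsClosed Y)
    (hirr : IsIrreducible Y) {d : ℕ} (hd : d ≤ pdim Y) : d + 1 ≤ affineDim (affineCone Y) := by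
  obtain ⟨s, rfl⟩ := Order.le_krullDim_iff.1 hd
  let image (Z : TopologicalSpace.IrreducibleCloseds Y) : Set (PrV n) := (↑) '' (Z : Set Y)
  have himage (Z) : IsAffineVariety (affineCone (image Z)) :=
    isAffineVariety_affineCone (hcl.isClosedMap_subtype_val _ Z.isClosed)
      (Z.isIrreducible.image _ continuous_subtype_val.continuousOn)
  have hmono : StrictMono fun Z => affineDim (affineCone (image Z)) := fun Z Z' hZ =>
    (himage Z).affineDim_lt_of_ssubset (himage Z')
      (affineCone_ssubset (Subtype.val_injective.image_strictMono hZ))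
  have hhead : 0 < affineDim (affineCone (image s.head)) := by
    obtain ⟨x, hx⟩ := s.head.isIrreducible.nonempty
    have hsub : {0} ⊆ affineCone (image s.head) := singleton_subset_iff.2 zero_mem_affineCone
    refine Nat.zero_lt_of_lt ((isAffineVariety_singleton 0).affineDim_lt_of_ssubset (himage _)
      ((ssubset_iff_of_subset hsub).2 ⟨(x : PrV n).rep, ?_, Projectivization.rep_nonzero _⟩))
    exact rep_mem_affineCone_iff.2 (mem_image_of_mem _ hx)
  have hlast : affineDim (affineCone (image s.last)) ≤ affineDim (affineCone Y) :=
    (himage _).affineDim_mono (isAffineVariety_affineCone hcl hirr)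
      (affineCone_mono (Subtype.coe_image_subset _ _))
  have hlength : affineDim (affineCone (image s.head)) + s.length ≤
      affineDim (affineCone (image s.last)) := (s.map _ hmono).head_add_length_le_nat
  omega

end LinearSections

section Tangent

lemma jacLin_apply {n : ℕ} (f : MvPolynomial (Fin n) ℂ) (v p : Fin n → ℂ) :
    jacLin f v p = ∑ i, eval v (pderiv i f) * p i := by
  simp [jacLin]

@[simp]
lemma jacLin_C {n : ℕ} (a : ℂ) (v : Fin n → ℂ) : jacLin (C a) v = 0 := by
  simp [jacLin]

@[simp]
lemma jacLin_X {n : ℕ} (i : Fin n) (v p : Fin n → ℂ) : jacLin (X i) v p = p i := by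
  simp [jacLin_apply, pderiv_X, Pi.single_apply, apply_ite]

lemma jacLin_add {n : ℕ} (f g : MvPolynomial (Fin n) ℂ) (v : Fin n → ℂ) :
    jacLin (f + g) v = jacLin f v + jacLin g v := by
  simp [jacLin, add_smul, Finset.sum_add_distrib]

lemma jacLin_mul {n : ℕ} (f g : MvPolynomial (Fin n) ℂ) (v p : Fin n → ℂ) :
    jacLin (f * g) v p = jacLin f v p * eval v g + eval v f * jacLin g v p := by
  simp only [jacLin_apply, Finset.mul_sum, Finset.sum_mul, ← Finset.sum_add_distrib]
  refine Finset.sum_congr rfl fun i _ => ?_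
  simp only [Derivation.leibniz, smul_eq_mul, map_add, map_mul]
  ring

lemma jacLin_linearPullback {m n : ℕ} (u : (Fin n → ℂ) →ₗ[ℂ] Fin m → ℂ)
    (f : MvPolynomial (Fin m) ℂ) (v p : Fin n → ℂ) :
    jacLin (linearPullback u f) v p = jacLin f (u v) (u p) := by
  induction f using MvPolynomial.induction_on with
  | C a => simp [linearPullback, ← algebraMap_eq]
  | add f g hf hg => simp only [map_add, jacLin_add, LinearMap.add_apply, hf, hg]
  | mul_X f i hf =>
    have hX : jacLin (linearPullback u (X i)) v p = u p i := by
      rw [← LinearMap.toMatrix'_mulVec, Matrix.mulVec, dotProduct]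
      simp [linearPullback, Matrix.toMvPolynomial, jacLin_apply, pderiv_monomial,
        Finsupp.single_apply, apply_ite]
    rw [map_mul, jacLin_mul, jacLin_mul, hf, hX, jacLin_X, eval_linearPullback,
      eval_linearPullback, eval_X]

lemma mem_affTangent_iff {n : ℕ} {Y : Set (PrV n)} {v p : Fin n → ℂ} :
    p ∈ affTangent Y v ↔ ∀ f ∈ idealOf Y, jacLin f v p = 0 := by
  simp only [affTangent, Submodule.mem_iInf, LinearMap.mem_ker]
  rfl

lemma affTangent_smul {n : ℕ} (Y : Set (PrV n)) {c : ℂ} (hc : c ≠ 0) (v : Fin n → ℂ) :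
    affTangent Y (c • v) = affTangent Y v := by
  have hle : ∀ {c : ℂ} (_ : c ≠ 0) (v : Fin n → ℂ), affTangent Y v ≤ affTangent Y (c • v) := by
    intro c hc v p hp
    refine mem_affTangent_iff.2 fun f hf => ?_
    have hpull : linearPullback (c • LinearMap.id) f ∈ idealOf Y :=
      mem_idealOf_iff.2 fun w hw hwY => by
        rw [eval_linearPullback, LinearMap.smul_apply, LinearMap.id_apply]
        exact mem_idealOf_iff.1 hf _ (smul_ne_zero hc hw) (by rwa [mk_smul_eq])
    have h := mem_affTangent_iff.1 hp _ hpull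
    rw [jacLin_linearPullback, LinearMap.smul_apply, LinearMap.smul_apply, LinearMap.id_apply,
      LinearMap.id_apply, map_smul, smul_eq_mul] at h
    exact (mul_eq_zero.1 h).resolve_left hc
  refine le_antisymm ?_ (hle hc v)
  have h := hle (inv_ne_zero hc) (c • v)
  rwa [inv_smul_smul₀ hc] at h

lemma vanishingIdeal_singleton_le_sup_sq {n : ℕ} {w : Fin n → ℂ}
    {I : Ideal (MvPolynomial (Fin n) ℂ)} (hIw : I ≤ vanishingIdeal ℂ {w})
    (hI : ∀ p, (∀ f ∈ I, jacLin f w p = 0) → p = 0) :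
    vanishingIdeal ℂ {w} ≤ I ⊔ vanishingIdeal ℂ {w} ^ 2 := by
  intro f hf
  by_contra hfJ
  obtain ⟨φ, hφf, hφ⟩ := Submodule.exists_le_ker_of_notMem
    (p := (I ⊔ vanishingIdeal ℂ {w} ^ 2).restrictScalars ℂ) (v := f) hfJ
  have hφI : ∀ g ∈ I ⊔ vanishingIdeal ℂ {w} ^ 2, φ g = 0 := fun g hg => hφ hg
  have hmem : ∀ g, g - C (eval w g) ∈ vanishingIdeal ℂ {w} := fun g => by
    rw [mem_vanishingIdeal_iff_eval]
    rintro _ rfl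
    simp
  have hjac : ∀ g, φ (g - C (eval w g)) = jacLin g w fun i => φ (X i - C (w i)) := by
    intro g
    induction g using MvPolynomial.induction_on with
    | C a => simp
    | add g h hg hh =>
      rw [jacLin_add, LinearMap.add_apply, ← hg, ← hh, ← map_add, map_add (eval w), C_add,
        add_sub_add_comm]
    | mul_X g i hg =>
      have hsq : (g - C (eval w g)) * (X i - C (w i)) ∈ vanishingIdeal ℂ {w} ^ 2 := by
        rw [pow_two]
        exact Ideal.mul_mem_mul (hmem g) (by simpa only [eval_X] using hmem (X i))
      have hsplit : g * X i - C (eval w (g * X i)) = (g - C (eval w g)) * (X i - C (w i)) +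
          (w i • (g - C (eval w g)) + eval w g • (X i - C (w i))) := by
        simp only [map_mul, eval_X, smul_eq_C_mul]
        ring
      rw [hsplit, map_add, hφI _ (Ideal.mem_sup_right hsq), zero_add, map_add, map_smul, map_smul,
        hg, jacLin_mul, jacLin_X, eval_X, smul_eq_mul, smul_eq_mul, mul_comm (w i)]
  have hzero : (fun i => φ (X i - C (w i))) = 0 := hI _ fun g hg => by
    have hgw : eval w g = 0 := mem_vanishingIdeal_iff_eval.1 (hIw hg) w rfl
    rw [← hjac, hgw, C_0, sub_zero, hφI _ (Ideal.mem_sup_left hg)]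
  have hfw : eval w f = 0 := mem_vanishingIdeal_iff_eval.1 hf w rfl
  refine hφf ?_
  simpa only [hfw, C_0, sub_zero, hzero, map_zero] using hjac f

/-- Otherwise the maximal ideal of `w` in the coordinate ring of `W`, a domain, would be
idempotent. -/
lemma IsAffineVariety.eq_singleton_of_le_sup_sq {K σ : Type*} [Field K] [Finite σ]
    {W : Set (σ → K)} (hW : IsAffineVariety W) {w : σ → K} (hw : w ∈ W)
    (h : vanishingIdeal K {w} ≤ vanishingIdeal K W ⊔ vanishingIdeal K {w} ^ 2) : W = {w} := by
  have hWw : vanishingIdeal K W ≤ vanishingIdeal K {w} :=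
    vanishingIdeal_anti_mono (singleton_subset_iff.2 hw)
  have := hW.isPrime
  set q := Ideal.Quotient.mk (vanishingIdeal K W)
  have hidem : IsIdempotentElem ((vanishingIdeal K {w}).map q) := by
    have hmap := Ideal.map_mono (f := q) h
    rw [Ideal.map_sup, Ideal.map_quotient_self, bot_sup_eq, Ideal.map_pow, pow_two] at hmap
    exact le_antisymm Ideal.mul_le_left hmap
  rcases (Ideal.isIdempotentElem_iff_eq_bot_or_top _ (IsNoetherian.noetherian _)).1 hidem
    with hbot | htop
  · rw [Ideal.map_eq_bot_iff_le_ker, Ideal.mk_ker] at hbot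
    refine subset_antisymm (fun v hv => ?_) (singleton_subset_iff.2 hw)
    ext i
    have hXi : X i - C (w i) ∈ vanishingIdeal K W :=
      hbot (mem_vanishingIdeal_iff_eval.2 fun _ h => by simp [mem_singleton_iff.1 h])
    simpa [sub_eq_zero] using mem_vanishingIdeal_iff_eval.1 hXi v hv
  · have hcomap := Ideal.comap_map_of_surjective q Ideal.Quotient.mk_surjective
      (vanishingIdeal K {w})
    rw [htop, Ideal.comap_top, ← RingHom.ker_eq_comap_bot, Ideal.mk_ker, sup_eq_left.2 hWw]
      at hcomap
    have hone := mem_vanishingIdeal_iff_eval.1 (hcomap ▸ Submodule.mem_top :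
      (1 : MvPolynomial σ K) ∈ vanishingIdeal K {w}) w rfl
    simp at hone

lemma exists_linearMap_disjoint_ker {K V : Type*} [Field K] [AddCommGroup V] [Module K V]
    (T : Submodule K V) [FiniteDimensional K T] :
    ∃ U : V →ₗ[K] Fin (Module.finrank K T) → K, Disjoint T (LinearMap.ker U) := by
  obtain ⟨U, hU⟩ := LinearMap.exists_extend (Module.finBasis K T).equivFun.toLinearMap
  refine ⟨U, Submodule.disjoint_def.2 fun t ht hUt => ?_⟩
  have h : (Module.finBasis K T).equivFun ⟨t, ht⟩ = 0 := by
    rw [← LinearEquiv.coe_toLinearMap, ← hU]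
    exact hUt
  simpa using h

lemma IsAffineVariety.affineDim_le_finrank {n : ℕ} {W : Set (Fin n → ℂ)} (hW : IsAffineVariety W)
    {w : Fin n → ℂ} (hw : w ∈ W) {T : Submodule ℂ (Fin n → ℂ)}
    (hT : ∀ p, (∀ f ∈ vanishingIdeal ℂ W, jacLin f w p = 0) → p ∈ T) :
    affineDim W ≤ Module.finrank ℂ T := by
  obtain ⟨U, hU⟩ := exists_linearMap_disjoint_ker T
  obtain ⟨W', hWW', hW', hwW', hU0, hdim⟩ :=
    hW.exists_subset_forall_eq_zero hw (φ := fun v => U (v - w))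
      ⟨fun i => linearPullback U (X i) + C (-U w i), fun v i => by
        simp [eval_linearPullback, sub_eq_add_neg]⟩ (by simp)
  suffices hsing : W' = {w} by
    have hpos : ¬ 0 < affineDim W' := fun hpos => by
      obtain ⟨v, hv, hvw⟩ := hW'.exists_ne_of_affineDim_pos hpos w
      rw [hsing] at hv
      exact hvw hv
    rw [Nat.card_fin] at hdim
    omega
  refine hW'.eq_singleton_of_le_sup_sq hwW' (vanishingIdeal_singleton_le_sup_sq
    (vanishingIdeal_anti_mono (singleton_subset_iff.2 hwW')) fun p hp => ?_)
  have hpT : p ∈ T := hT p fun f hf => hp f (vanishingIdeal_anti_mono hWW' hf)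
  refine Submodule.disjoint_def.1 hU p hpT (funext fun i => ?_)
  have hf : linearPullback U (X i) + C (-U w i) ∈ vanishingIdeal ℂ W' :=
    mem_vanishingIdeal_iff_eval.2 fun v hv => by
      simpa [eval_linearPullback, sub_eq_add_neg] using congrFun (hU0 v hv) i
  have hjac := hp _ hf
  rwa [jacLin_add, jacLin_C, add_zero, jacLin_linearPullback, jacLin_X] at hjac

lemma affineDim_affineCone_le_finrank_affTangent {n : ℕ} {Y : Set (PrV n)} (hcl : IsClosed Y)
    (hirr : IsIrreducible Y) {w : Fin n → ℂ} (hw : w ∈ affineCone Y) :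
    affineDim (affineCone Y) ≤ Module.finrank ℂ (affTangent Y w) :=
  (isAffineVariety_affineCone hcl hirr).affineDim_le_finrank hw fun _ hp =>
    mem_affTangent_iff.2 fun f hf => hp f (by rwa [vanishingIdeal_affineCone hirr.nonempty])

end Tangent

section Semicontinuity

lemma iInf_ker_eq_dualCoannihilator_span {R ι V : Type*} [CommSemiring R] [AddCommMonoid V]
    [Module R V] (ℓ : ι → Module.Dual R V) :
    (⨅ i, LinearMap.ker (ℓ i) : Submodule R V) =
      (Submodule.span R (range ℓ)).dualCoannihilator := by
  ext p
  simp only [Submodule.mem_iInf, LinearMap.mem_ker, Submodule.mem_dualCoannihilator]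
  refine ⟨fun h φ hφ => ?_, fun h i => h _ (Submodule.subset_span ⟨i, rfl⟩)⟩
  exact (Submodule.span_le (p := LinearMap.ker (Module.Dual.eval R V p))).2
    (range_subset_iff.2 h) hφ

lemma exists_polynomial_finrank_iInf_ker_le {K ι σ V : Type*} [Field K] [AddCommGroup V]
    [Module K V] [FiniteDimensional K V] (ℓ : ι → (σ → K) → Module.Dual K V)
    (hℓ : ∀ i p, ∃ f : MvPolynomial σ K, ∀ v, eval v f = ℓ i v p) (v : σ → K) :
    ∃ D : MvPolynomial σ K, eval v D ≠ 0 ∧ ∀ v', eval v' D ≠ 0 →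
      Module.finrank K (⨅ i, LinearMap.ker (ℓ i v') : Submodule K V) ≤
        Module.finrank K (⨅ i, LinearMap.ker (ℓ i v) : Submodule K V) := by
  obtain ⟨rows, hrows, -, hindep⟩ :=
    Submodule.exists_fun_fin_finrank_span_eq K (range fun i => ℓ i v)
  choose row hrow using hrows
  obtain ⟨g, hg⟩ := LinearMap.exists_leftInverse_of_injective
    (Finsupp.linearCombination K rows) (LinearMap.ker_eq_bot_of_injective hindep)
  let p : Fin _ → V := fun j => (Module.evalEquiv K V).symm ((Finsupp.lapply j).comp g)
  have hp : ∀ i j, ℓ (row i) v (p j) = (1 : Matrix _ _ K) i j := fun i j => by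
    rw [show ℓ (row i) v = rows i from hrow i, Module.apply_evalEquiv_symm_apply]
    have hgi : g (rows i) = Finsupp.single i 1 := by
      simpa using LinearMap.congr_fun hg (Finsupp.single i 1)
    rw [LinearMap.comp_apply, hgi, Finsupp.lapply_apply, Matrix.one_apply, Finsupp.single_apply]
  choose f hf using fun i j => hℓ (row i) (p j)
  have hdet : ∀ v', eval v' (Matrix.of f).det =
      (Matrix.of fun i j => ℓ (row i) v' (p j)).det := fun v' => by
    rw [RingHom.map_det]
    congr 1
    ext i j
    exact hf i j v'
  refine ⟨(Matrix.of f).det, ?_, fun v' hv' => ?_⟩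
  · have h1 : (Matrix.of fun i j => ℓ (row i) v (p j)) = 1 := Matrix.ext hp
    rw [hdet, h1, Matrix.det_one]
    exact one_ne_zero
  · have hindep' : LinearIndependent K fun i => ℓ (row i) v' := by
      rw [hdet] at hv'
      exact .of_comp (LinearMap.pi fun j => Module.Dual.eval K V (p j))
        (Matrix.linearIndependent_rows_of_det_ne_zero hv')
    have hle : Module.finrank K (Submodule.span K (range fun i => ℓ i v)) ≤
        Module.finrank K (Submodule.span K (range fun i => ℓ i v')) := by
      rw [← Fintype.card_fin (Module.finrank K _), ← finrank_span_eq_card hindep']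
      exact Submodule.finrank_mono (Submodule.span_mono (range_comp_subset_range row (ℓ · v')))
    have hv := Subspace.finrank_add_finrank_dualCoannihilator_eq
      (Submodule.span K (range fun i => ℓ i v))
    have hv' := Subspace.finrank_add_finrank_dualCoannihilator_eq
      (Submodule.span K (range fun i => ℓ i v'))
    rw [iInf_ker_eq_dualCoannihilator_span, iInf_ker_eq_dualCoannihilator_span]
    omega

end Semicontinuity

section SmoothLocus

variable {n : ℕ}

lemma exists_polynomial_finrank_affTangent_inf_ker_le (Y : Set (PrV n))
    (φ : (Fin n → ℂ) →ₗ[ℂ] ℂ) (v : Fin n → ℂ) :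
    ∃ D : MvPolynomial (Fin n) ℂ, eval v D ≠ 0 ∧ ∀ v', eval v' D ≠ 0 →
      Module.finrank ℂ (affTangent Y v' ⊓ LinearMap.ker φ : Submodule ℂ _) ≤
        Module.finrank ℂ (affTangent Y v ⊓ LinearMap.ker φ : Submodule ℂ _) := by
  let ℓ : Option (idealOf Y) → (Fin n → ℂ) → Module.Dual ℂ (Fin n → ℂ) :=
    fun i v => i.elim φ fun f => jacLin f.1 v
  have hℓ : ∀ v, affTangent Y v ⊓ LinearMap.ker φ = ⨅ i, LinearMap.ker (ℓ i v) := fun v => by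
    ext p
    simp [ℓ, iInf_option, mem_affTangent_iff, and_comm]
  have hpoly : ∀ i p, ∃ f : MvPolynomial (Fin n) ℂ, ∀ v, eval v f = ℓ i v p := fun i p => by
    cases i with
    | none => exact ⟨C (φ p), fun v => eval_C _⟩
    | some f => exact ⟨∑ i, pderiv i f.1 * C (p i), fun v => by simp [ℓ, jacLin_apply]⟩
  obtain ⟨D, hDv, hD⟩ := exists_polynomial_finrank_iInf_ker_le ℓ hpoly v
  refine ⟨D, hDv, fun v' hv' => ?_⟩
  rw [hℓ, hℓ]
  exact hD v' hv'

lemma exists_polynomial_finrank_affTangent_le (Y : Set (PrV n)) (v : Fin n → ℂ) :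
    ∃ D : MvPolynomial (Fin n) ℂ, eval v D ≠ 0 ∧ ∀ v', eval v' D ≠ 0 →
      Module.finrank ℂ (affTangent Y v') ≤ Module.finrank ℂ (affTangent Y v) := by
  obtain ⟨D, hDv, hD⟩ := exists_polynomial_finrank_affTangent_inf_ker_le Y 0 v
  refine ⟨D, hDv, fun v' hv' => ?_⟩
  have h := hD v' hv'
  rwa [LinearMap.ker_zero, inf_top_eq, inf_top_eq] at h

variable {m : ℕ} {X : Set (PrV n)}

lemma isSmoothPt_iff_finrank_eq (hdim : pdim X = m) (x : PrV n) :
    IsSmoothPt X x ↔ Module.finrank ℂ (affTangent X x.rep) = m + 1 := by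
  rw [IsSmoothPt, hdim]
  norm_cast

lemma affTangent_rep_mk (Y : Set (PrV n)) {v : Fin n → ℂ} (hv : v ≠ 0) :
    affTangent Y (Projectivization.mk ℂ v hv).rep = affTangent Y v := by
  obtain ⟨c, hc⟩ := Projectivization.exists_smul_eq_mk_rep ℂ v hv
  rw [← hc]
  exact affTangent_smul Y c.ne_zero v

lemma isClosed_singLocus (hcl : IsClosed X) (hirr : IsIrreducible X) (hdim : pdim X = m) :
    IsClosed (singLocus X) := by
  have hlow : ∀ x ∈ X, m + 1 ≤ Module.finrank ℂ (affTangent X x.rep) := fun x hx =>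
    (add_one_le_affineDim_affineCone hcl hirr hdim.ge).trans
      (affineDim_affineCone_le_finrank_affTangent hcl hirr (rep_mem_affineCone_iff.2 hx))
  have hsing : singLocus X = X ∩ ⋂ D ∈ {D : MvPolynomial (Fin n) ℂ | ∀ v, eval v D ≠ 0 →
      Module.finrank ℂ (affTangent X v) ≤ m + 1}, pZero D := by
    ext x
    simp only [singLocus, smoothLocus, mem_sdiff, mem_ofPred_eq, mem_inter_iff, mem_iInter,
      isSmoothPt_iff_finrank_eq hdim]
    refine and_congr_right fun hx => ⟨fun h D hD v hv hvx => ?_, fun h ⟨_, hsm⟩ => ?_⟩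
    · by_contra hDv
      refine h ⟨hx, le_antisymm ?_ (hlow x hx)⟩
      rw [← hvx, affTangent_rep_mk X hv]
      exact hD v hDv
    · obtain ⟨D, hDx, hD⟩ := exists_polynomial_finrank_affTangent_le X x.rep
      rw [hsm] at hD
      exact hDx (h D hD x.rep x.rep_nonzero (by simp))
  rw [hsing]
  exact hcl.inter (isClosed_biInter fun D _ => isClosed_pZero D)

end SmoothLocus

section Finiteness

lemma valuation_aeval_le {ι R F : Type*} [Finite ι] [CommRing R] [Field F] [Algebra R F]
    (V : ValuationSubring F) (hV : ∀ a : R, algebraMap R F a ∈ V) {x : ι → F} {y : F}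
    (hy : 1 ≤ V.valuation y) (hxy : ∀ i, V.valuation (x i) ≤ V.valuation y)
    (G : MvPolynomial ι R) :
    V.valuation (aeval x G) ≤ V.valuation y ^ G.totalDegree := by
  have := Fintype.ofFinite ι
  rw [aeval_def, eval₂_eq']
  refine V.valuation.map_sum_le fun d hd => ?_
  rw [map_mul, map_prod]
  calc V.valuation (algebraMap R F (G.coeff d)) * ∏ i, V.valuation (x i ^ d i)
      ≤ 1 * ∏ i, V.valuation y ^ d i := by
        refine mul_le_mul' ((V.valuation_le_one_iff _).2 (hV _))
          (Finset.prod_le_prod' fun i _ => ?_)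
        simpa only [map_pow] using pow_le_pow_left₀ zero_le (hxy i) (d i)
    _ = V.valuation y ^ d.sum fun _ e => e := by
        rw [one_mul, Finset.prod_pow_eq_pow_sum, Finsupp.sum_fintype _ _ fun _ => rfl]
    _ ≤ V.valuation y ^ G.totalDegree := pow_le_pow_right₀ hy (le_totalDegree hd)

/-- If `x i` of maximal size in a valuation ring over `R` had size `> 1`, its power would exceed
the right-hand side of its equation; so the `x i` lie in every valuation ring over `R`. -/
lemma isIntegral_of_forall_pow_eq_aeval {ι R F : Type*} [Finite ι] [CommRing R] [Field F]
    [Algebra R F] {x : ι → F} {k : ℕ} {G : ι → MvPolynomial ι R}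
    (hG : ∀ i, (G i).totalDegree ≤ k) (hx : ∀ i, x i ^ (k + 1) = aeval x (G i)) (i : ι) :
    IsIntegral R (x i) := by
  have : IsIntegrallyClosedIn (integralClosure R F).toSubring F :=
    inferInstanceAs (IsIntegrallyClosedIn (integralClosure R F) F)
  by_contra hi
  obtain ⟨V, hV, hiV⟩ := Subring.exists_le_valuationSubring_of_isIntegrallyClosedIn
    (R := (integralClosure R F).toSubring) (x := x i) hi
  have : Nonempty ι := ⟨i⟩
  obtain ⟨j, hj⟩ := Finite.exists_max fun j => V.valuation (x j)
  have hj1 : 1 < V.valuation (x j) :=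
    (not_le.1 fun h => hiV ((V.valuation_le_one_iff _).1 h)).trans_le (hj i)
  refine lt_irrefl (V.valuation (x j) ^ (k + 1)) ?_
  calc V.valuation (x j) ^ (k + 1) = V.valuation (aeval x (G j)) := by rw [← map_pow, hx]
    _ ≤ V.valuation (x j) ^ (G j).totalDegree :=
        valuation_aeval_le V (fun a => hV (isIntegral_algebraMap (A := F))) hj1.le hj (G j)
    _ ≤ V.valuation (x j) ^ k := pow_le_pow_right₀ hj1.le (hG j)
    _ < V.valuation (x j) ^ (k + 1) := pow_lt_pow_right₀ hj1 k.lt_succ_self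

variable {n r : ℕ} {W : Set (Fin n → ℂ)} {u : (Fin n → ℂ) →ₗ[ℂ] Fin r → ℂ}

/-- By the Nullstellensatz a power of `X i` lies in the ideal generated by the equations of `W` and
the coordinates of `u`; as `W` is a cone, one may extract the homogeneous parts. -/
lemma IsCone.exists_pow_sub_sum_mem (hcl : zeroLocus ℂ (vanishingIdeal ℂ W) = W) (hW : IsCone W)
    (hu : ∀ w ∈ W, u w = 0 → w = 0) :
    ∃ k : ℕ, ∀ i : Fin n, ∃ H : Fin r → MvPolynomial (Fin n) ℂ, (∀ j, (H j).totalDegree ≤ k) ∧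
      X i ^ (k + 1) - ∑ j, linearPullback u (X j) * H j ∈ vanishingIdeal ℂ W := by
  let I := vanishingIdeal ℂ W ⊔ Ideal.span (range fun j => linearPullback u (X j))
  have hrad i : X i ∈ I.radical := by
    rw [← vanishingIdeal_zeroLocus_eq_radical (K := ℂ), mem_vanishingIdeal_iff_eval]
    intro w hw
    have hwW : w ∈ W := hcl ▸ zeroLocus_anti_mono le_sup_left hw
    have huw : u w = 0 := funext fun j => by
      have h : eval w (linearPullback u (X j)) = 0 :=
        hw _ (Ideal.mem_sup_right (Ideal.subset_span (mem_range_self j)))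
      simpa [eval_linearPullback] using h
    simp [hu w hwW huw]
  choose k hk using hrad
  refine ⟨∑ i, k i, fun i => ?_⟩
  have hpow : (X i : MvPolynomial (Fin n) ℂ) ^ (∑ i, k i + 1) ∈ I :=
    Ideal.pow_mem_of_pow_mem _ (hk i)
      ((Finset.single_le_sum (fun _ _ => Nat.zero_le _) (Finset.mem_univ i)).trans (Nat.le_succ _))
  obtain ⟨g, hg, _, hs, hgs⟩ := Submodule.mem_sup.1 hpow
  obtain ⟨H, rfl⟩ := Ideal.mem_span_range_iff_exists_fun.1 hs
  refine ⟨fun j => homogeneousComponent (∑ i, k i) (H j),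
    fun j => (homogeneousComponent_isHomogeneous _ _).totalDegree_le, ?_⟩
  rw [mem_vanishingIdeal_iff_eval]
  intro w hw
  choose p hp hpcoeff using fun j => exists_polynomial_eval_smul (H j) w
  have hpoly : Polynomial.monomial (∑ i, k i + 1) (w i ^ (∑ i, k i + 1)) =
      ∑ j, Polynomial.C (u w j) * (p j * Polynomial.X) := Polynomial.funext fun c => by
    have h := congrArg (eval (c • w)) hgs
    rw [map_add, (mem_vanishingIdeal_iff_eval.1 hg) _ (hW w hw c)] at h
    simp only [zero_add, map_sum, map_mul, map_pow, eval_X, eval_linearPullback, map_smul,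
      Pi.smul_apply, smul_eq_mul] at h
    simp only [Polynomial.eval_monomial, Polynomial.eval_finsetSum, Polynomial.eval_mul,
      Polynomial.eval_C, Polynomial.eval_X, hp]
    rw [← mul_pow, mul_comm, ← h]
    exact Finset.sum_congr rfl fun j _ => by ring
  have hcoeff := congrArg (Polynomial.coeff · (∑ i, k i + 1)) hpoly
  simp only [Polynomial.coeff_monomial_same, Polynomial.finsetSum_coeff, Polynomial.coeff_C_mul,
    Polynomial.coeff_mul_X, hpcoeff] at hcoeff
  simp only [map_sub, map_pow, eval_X, map_sum, map_mul, eval_linearPullback, hcoeff, sub_self]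

lemma IsAffineVariety.isIntegral_mk_X (hW : IsAffineVariety W) (hcone : IsCone W)
    (hu : ∀ w ∈ W, u w = 0 → w = 0) (i : Fin n) :
    ((Ideal.Quotient.mk (vanishingIdeal ℂ W)).comp (linearPullback u).toRingHom).IsIntegralElem
      (Ideal.Quotient.mk _ (X i)) := by
  have := hW.isPrime
  obtain ⟨k, hk⟩ := hcone.exists_pow_sub_sum_mem hW.zariskiClosure_eq hu
  choose H hH hmem using hk
  let A := MvPolynomial (Fin n) ℂ ⧸ vanishingIdeal ℂ W
  let F := FractionRing A
  let π : MvPolynomial (Fin n) ℂ →+* A := Ideal.Quotient.mk _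
  algebraize [π.comp (linearPullback u).toRingHom]
  let x (i : Fin n) : F := algebraMap A F (π (X i))
  let G (i : Fin n) : MvPolynomial (Fin n) (MvPolynomial (Fin r) ℂ) :=
    ∑ j, C (X j) * map C (H i j)
  have halg p : algebraMap (MvPolynomial (Fin r) ℂ) F p = algebraMap A F (π (linearPullback u p)) :=
    IsScalarTower.algebraMap_apply _ A F p
  have hmap : (aeval (R := MvPolynomial (Fin r) ℂ) x).toRingHom.comp (map C) =
      (algebraMap A F).comp π := by
    refine ringHom_ext (fun c => ?_) fun i => ?_
    · simp [halg, π]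
    · simp [x]
  refine (isIntegral_algHom_iff (IsScalarTower.toAlgHom _ _ F) (IsFractionRing.injective _ F)).1
    (isIntegral_of_forall_pow_eq_aeval (x := x) (G := G) (k := k) (fun i => ?_) (fun i => ?_) i)
  · refine (totalDegree_finsetSum _ _).trans (Finset.sup_le fun j _ => ?_)
    refine (totalDegree_mul _ _).trans ?_
    rw [totalDegree_C, zero_add]
    exact (Finset.sup_mono (support_map_subset _ _)).trans (hH i j)
  · simp only [G, map_sum, map_mul, aeval_C, halg, linearPullback]
    rw [← map_pow, ← map_pow, Ideal.Quotient.eq.2 (hmem i), map_sum, map_sum]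
    refine Finset.sum_congr rfl fun j _ => ?_
    rw [map_mul, map_mul]
    exact congrArg _ (RingHom.congr_fun hmap (H i j)).symm

lemma IsAffineVariety.finite_linearPullback (hW : IsAffineVariety W) (hcone : IsCone W)
    (hu : ∀ w ∈ W, u w = 0 → w = 0) :
    ((Ideal.Quotient.mk (vanishingIdeal ℂ W)).comp (linearPullback u).toRingHom).Finite := by
  refine RingHom.IsIntegral.to_finite (fun a => ?_) (RingHom.FiniteType.of_comp_finiteType
    (f := algebraMap ℂ (MvPolynomial (Fin r) ℂ)) ?_)
  · obtain ⟨f, rfl⟩ := Ideal.Quotient.mk_surjective a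
    induction f using MvPolynomial.induction_on with
    | C c =>
      simpa using RingHom.isIntegralElem_map
        ((Ideal.Quotient.mk (vanishingIdeal ℂ W)).comp (linearPullback u).toRingHom) (x := C c)
    | add f g hf hg => simpa only [map_add] using hf.add _ hg
    | mul_X f i hf => simpa only [map_mul] using hf.mul _ (hW.isIntegral_mk_X hcone hu i)
  · have h : (algebraMap ℂ (MvPolynomial (Fin n) ℂ ⧸ vanishingIdeal ℂ W)).FiniteType :=
      RingHom.finiteType_algebraMap.2 inferInstance
    convert h using 1
    ext c
    exact congrArg _ ((linearPullback u).commutes c)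

end Finiteness

section Birational

variable {k : Type*} [Field k] [IsAlgClosed k]

lemma exists_algHom_ne_zero {B : Type*} [CommRing B] [IsDomain B] [Algebra k B]
    [Algebra.FiniteType k B] {b : B} (hb : b ≠ 0) : ∃ χ : B →ₐ[k] k, χ b ≠ 0 := by
  have : IsJacobsonRing B := isJacobsonRing_of_finiteType (A := k)
  have hbJ : b ∉ (⊥ : Ideal B).jacobson := by
    rwa [IsJacobsonRing.out' _ Ideal.isPrime_bot.isRadical]
  simp only [Ideal.jacobson, Ideal.mem_sInf, mem_ofPred_eq, not_forall] at hbJ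
  obtain ⟨M, ⟨-, hM⟩, hbM⟩ := hbJ
  let _ : Field (B ⧸ M) := Ideal.Quotient.field M
  have : Module.Finite k (B ⧸ M) := finite_of_finite_type_of_isJacobsonRing k (B ⧸ M)
  let e : k ≃ₐ[k] B ⧸ M := AlgEquiv.ofBijective (Algebra.ofId k (B ⧸ M))
    (IsAlgClosed.algebraMap_bijective_of_isIntegral (k := k) (K := B ⧸ M))
  refine ⟨e.symm.toAlgHom.comp (Ideal.Quotient.mkₐ k M), fun h => hbM ?_⟩
  exact Ideal.Quotient.eq_zero_iff_mem.1 ((map_eq_zero_iff e.symm e.symm.injective).1 h)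

lemma algHom_eq_of_comp_eq {ι C Ω : Type*} [CommRing C] [Algebra k C]
    [Algebra.FiniteType k C] [CommRing Ω] [IsDomain Ω] [Algebra k Ω] {ψ : ι → C}
    (hψ : ∀ χ χ' : C →ₐ[k] k, χ ∘ ψ = χ' ∘ ψ → χ = χ') {f g : C →ₐ[k] Ω}
    (hfg : f ∘ ψ = g ∘ ψ) : f = g := by
  have hfg_range (h : C →ₐ[k] Ω) : h.range.FG := by
    rw [← Algebra.map_top]
    exact Subalgebra.FG.map h Algebra.FiniteType.out
  let B : Subalgebra k Ω := f.range ⊔ g.range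
  have : Algebra.FiniteType k B :=
    (Subalgebra.fg_iff_finiteType B).1 ((hfg_range f).sup (hfg_range g))
  let f' : C →ₐ[k] B := f.codRestrict B fun c => (le_sup_left : f.range ≤ B) ⟨c, rfl⟩
  let g' : C →ₐ[k] B := g.codRestrict B fun c => (le_sup_right : g.range ≤ B) ⟨c, rfl⟩
  ext c
  by_contra hne
  obtain ⟨χ, hχ⟩ := exists_algHom_ne_zero (k := k) (b := f' c - g' c)
    fun h => hne (congrArg Subtype.val (sub_eq_zero.1 h))
  refine hχ ?_
  rw [map_sub, sub_eq_zero]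
  exact DFunLike.congr_fun (hψ (χ.comp f') (χ.comp g')
    (funext fun a => congrArg χ (Subtype.ext (congrFun hfg a)))) c

-- Injectivity on `k`-points passes to geometric generic points, so the extension of function
-- fields is purely inseparable.
lemma subsingleton_algHom_of_forall_algHom_eq {A C F E Ω : Type*} [CommRing A] [CommRing C]
    [Algebra k A] [Algebra k C] [Algebra A C] [IsScalarTower k A C] [Algebra.FiniteType k C]
    [Field F] [Algebra A F] [Algebra k F] [IsScalarTower k A F] [CommRing E] [Algebra C E]
    [IsFractionRing C E] [Algebra A E] [IsScalarTower A C E] [Algebra F E] [IsScalarTower A F E]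
    [CommRing Ω] [IsDomain Ω] [Algebra F Ω]
    (hinj : ∀ χ χ' : C →ₐ[k] k, χ ∘ algebraMap A C = χ' ∘ algebraMap A C → χ = χ') :
    Subsingleton (E →ₐ[F] Ω) := by
  refine ⟨fun i j => ?_⟩
  let _ : Algebra k Ω := ((algebraMap F Ω).comp (algebraMap k F)).toAlgebra
  have hA (i : E →ₐ[F] Ω) (a : A) :
      i (algebraMap C E (algebraMap A C a)) = algebraMap F Ω (algebraMap A F a) := by
    rw [← i.commutes, ← IsScalarTower.algebraMap_apply A F E,
      IsScalarTower.algebraMap_apply A C E]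
  let r (i : E →ₐ[F] Ω) : C →ₐ[k] Ω :=
    { (i : E →+* Ω).comp (algebraMap C E) with
      commutes' := fun c => by
        rw [IsScalarTower.algebraMap_apply k A C]
        refine (hA i _).trans ?_
        rw [← IsScalarTower.algebraMap_apply k A F]
        rfl }
  have hij : r i = r j :=
    algHom_eq_of_comp_eq hinj (funext fun a => (hA i a).trans (hA j a).symm)
  exact AlgHom.coe_ringHom_injective
    (IsLocalization.ringHom_ext (nonZeroDivisors C) (congrArg RingHomClass.toRingHom hij))

lemma isFractionRing_of_forall_algHom_eq [CharZero k] {A C : Type*} [CommRing A] [IsDomain A]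
    [CommRing C] [IsDomain C] [Algebra k A] [Algebra k C] [Algebra A C] [IsScalarTower k A C]
    [FaithfulSMul A C] [Algebra.IsIntegral A C] [Algebra.FiniteType k C]
    (hinj : ∀ χ χ' : C →ₐ[k] k, χ ∘ algebraMap A C = χ' ∘ algebraMap A C → χ = χ') :
    IsFractionRing A (FractionRing C) := by
  let E := FractionRing C
  let F := FractionRing A
  let _ : Algebra F E := FractionRing.liftAlgebra A E
  have : IsScalarTower A F E := FractionRing.isScalarTower_liftAlgebra A E
  have : Algebra.IsAlgebraic F E := isAlgebraic_of_isFractionRing A C F E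
  have : CharZero F := charZero_of_injective_algebraMap (algebraMap k F).injective
  have : IsPurelyInseparable F E :=
    (isPurelyInseparable_iff_subsingleton_emb F E).2
      (subsingleton_algHom_of_forall_algHom_eq (A := A) (C := C) hinj)
  exact IsLocalization.isLocalization_of_algEquiv (nonZeroDivisors A)
    ((AlgEquiv.ofBijective (Algebra.ofId F E)
      (IsPurelyInseparable.bijective_algebraMap_of_isSeparable F E)).restrictScalars A)

end Birational

section Unramified

open Polynomial in
lemma aeval_derivative_minpoly_mul_mem_adjoin {P K E : Type*} [CommRing P] [IsDomain P]
    [IsIntegrallyClosed P] [Field K] [Algebra P K] [IsFractionRing P K] [Field E] [Algebra P E]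
    [Algebra K E] [IsScalarTower P K E] {a t : E} (ha : IsIntegral P a)
    (htop : Algebra.adjoin K {a} = ⊤) (ht : IsIntegral P t) :
    aeval a (derivative (minpoly P a)) * t ∈ Algebra.adjoin P {a} := by
  have hmin : minpoly K a = (minpoly P a).map (algebraMap P K) :=
    minpoly.isIntegrallyClosed_eq_field_fractions K E ha
  have hsurj : Function.Surjective (aeval (R := K) a) := by
    rwa [← AlgHom.range_eq_top, ← Algebra.adjoin_singleton_eq_range_aeval]
  obtain ⟨g, hg, hgi⟩ := exists_derivative_mul_eq_and_isIntegral_coeff (R := P)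
    (φ := (aeval (R := K) a).restrictScalars P) hsurj (minpoly.monic ha.tower_top)
    (fun i => by rw [hmin, Polynomial.coeff_map]; exact isIntegral_algebraMap)
    (minpoly.ker_aeval_eq_span_minpoly K a) ht
  obtain ⟨g, rfl⟩ : ∃ g₀ : P[X], g₀.map (algebraMap P K) = g :=
    (mem_lifts g).1 ((lifts_iff_coeff_lifts g).2
      fun i => IsIntegrallyClosed.isIntegral_iff.1 (hgi i))
  simp only [AlgHom.restrictScalars_apply, hmin, derivative_map,
    Polynomial.aeval_map_algebraMap] at hg
  rw [hg, Algebra.adjoin_singleton_eq_range_aeval]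
  exact ⟨g, rfl⟩

lemma adjoin_X_eq_top_of_surjective {P B K E : Type*} [CommRing P] [CommRing B] [Algebra P B]
    [Field K] [Algebra P K] [Field E] [Algebra B E] [IsFractionRing B E] [Algebra P E]
    [IsScalarTower P B E] [Algebra K E] [IsScalarTower P K E] {S : StandardEtalePair P}
    {φ : S.Ring →ₐ[P] B} (hφ : Function.Surjective φ)
    (ha : IsIntegral P (algebraMap B E (φ S.X))) :
    Algebra.adjoin K {algebraMap B E (φ S.X)} = ⊤ := by
  let ι : B →ₐ[P] E := IsScalarTower.toAlgHom P B E
  let L := IntermediateField.adjoin K {ι (φ S.X)}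
  let val : L →ₐ[P] E := L.val.restrictScalars P
  let a : L := ⟨ι (φ S.X), IntermediateField.mem_adjoin_simple_self K _⟩
  have hmap : S.HasMap (val a) := (S.hasMap_X.map φ).map ι
  have hmapL : S.HasMap a := by
    constructor
    · apply L.val.injective
      have := hmap.1
      rwa [Polynomial.aeval_algHom_apply] at this
    · rw [isUnit_iff_ne_zero]
      intro h
      refine hmap.2.ne_zero ?_
      rw [Polynomial.aeval_algHom_apply, h, map_zero]
  have hcomp : val.comp (S.lift a hmapL) = ι.comp φ := by
    apply StandardEtalePair.hom_ext
    simp only [AlgHom.comp_apply, StandardEtalePair.lift_X]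
    rfl
  have hmem (b : B) : algebraMap B E b ∈ L := by
    obtain ⟨z, rfl⟩ := hφ b
    have : val (S.lift a hmapL z) = ι (φ z) := DFunLike.congr_fun hcomp z
    exact this ▸ (S.lift a hmapL z).2
  have hL : L = ⊤ := by
    refine eq_top_iff.2 fun e _ => ?_
    obtain ⟨x, y, -, rfl⟩ := IsFractionRing.div_surjective (A := B) e
    exact L.div_mem (hmem x) (hmem y)
  rw [← IntermediateField.adjoin_simple_toSubalgebra_of_isAlgebraic
    (ha.tower_top (A := K)).isAlgebraic]
  exact congrArg IntermediateField.toSubalgebra hL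

-- With `a` the image of the étale coordinate and `F` its minimal polynomial over `P`, the element
-- `F'(a)` of `B` is a unit, and `F'(a) * t` lies in `P[a]`.
open Polynomial in
lemma exists_algebraMap_eq_of_isIntegral {P B E : Type*} [CommRing P] [IsDomain P]
    [IsIntegrallyClosed P] [CommRing B] [Algebra P B] [FaithfulSMul P B] [Field E]
    [Algebra B E] [IsFractionRing B E] [Algebra P E] [IsScalarTower P B E]
    {S : StandardEtalePair P} {φ : S.Ring →ₐ[P] B} (hφ : Function.Surjective φ) {t : E}
    (ht : IsIntegral P t) : ∃ b : B, algebraMap B E b = t := by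
  have : FaithfulSMul P E := by
    rw [faithfulSMul_iff_algebraMap_injective, IsScalarTower.algebraMap_eq P B E]
    exact (IsFractionRing.injective B E).comp (FaithfulSMul.algebraMap_injective P B)
  let _ : Algebra (FractionRing P) E := FractionRing.liftAlgebra P E
  have : IsScalarTower P (FractionRing P) E := FractionRing.isScalarTower_liftAlgebra P E
  let ι : B →ₐ[P] E := IsScalarTower.toAlgHom P B E
  have hι : Function.Injective ι := IsFractionRing.injective B E
  set a := φ S.X
  have ha : S.HasMap a := S.hasMap_X.map φ
  have hint : IsIntegral P (ι a) := ⟨S.f, S.monic_f, (ha.map ι).1⟩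
  set F := minpoly P (ι a) with hF
  have hFa : aeval a F = 0 := hι (by rw [← aeval_algHom_apply, map_zero, hF, minpoly.aeval])
  have hunit : IsUnit (aeval a (derivative F)) := by
    obtain ⟨H, hH⟩ : F ∣ S.f := minpoly.isIntegrallyClosed_dvd hint (ha.map ι).1
    have := ha.isUnit_derivative_f
    rw [hH, derivative_mul, map_add, map_mul, map_mul, hFa, zero_mul, add_zero] at this
    exact isUnit_of_mul_isUnit_left this
  obtain ⟨g, hg⟩ : ∃ g : P[X], aeval (ι a) g = aeval (ι a) (derivative F) * t := by
    have := aeval_derivative_minpoly_mul_mem_adjoin (K := FractionRing P) hint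
      (adjoin_X_eq_top_of_surjective hφ hint) ht
    rwa [Algebra.adjoin_singleton_eq_range_aeval] at this
  rw [aeval_algHom_apply ι a, aeval_algHom_apply ι a] at hg
  obtain ⟨u, hu⟩ := hunit
  refine ⟨↑u⁻¹ * aeval a g, ?_⟩
  change ι _ = t
  rw [map_mul, hg, ← mul_assoc, ← map_mul, ← hu, Units.inv_mul, map_one, one_mul]

lemma exists_notMem_algebraMap_mul_eq {P A E : Type*} [CommRing P] [IsDomain P]
    [IsIntegrallyClosed P] [CommRing A] [IsDomain A] [Algebra P A] [FaithfulSMul P A]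
    [Module.Finite P A] (q : Ideal A) [q.IsPrime] [Algebra.IsUnramifiedAt P q] [Field E]
    [Algebra A E] [Algebra P E] [IsScalarTower P A E] [IsFractionRing A E] {t : E}
    (ht : IsIntegral P t) : ∃ s ∉ q, ∃ c : A, algebraMap A E s * t = algebraMap A E c := by
  obtain ⟨f, hf, S, φ, hφ⟩ := Algebra.IsUnramifiedAt.exists_hasStandardEtaleSurjectionOn (R := P) q
  let B := Localization.Away f
  have hpow : Submonoid.powers f ≤ nonZeroDivisors A :=
    powers_le_nonZeroDivisors_of_noZeroDivisors fun h => hf (h ▸ q.zero_mem)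
  have hfE : IsUnit (algebraMap A E f) :=
    IsLocalization.map_units E (⟨f, hpow (Submonoid.mem_powers f)⟩ : nonZeroDivisors A)
  let _ : Algebra B E := (IsLocalization.Away.lift f hfE : B →+* E).toAlgebra
  have hAB : IsScalarTower A B E :=
    .of_algebraMap_eq fun x => (IsLocalization.Away.lift_eq f hfE x).symm
  have : IsScalarTower P B E := .of_algebraMap_eq fun x => by
    rw [IsScalarTower.algebraMap_apply P A B, ← IsScalarTower.algebraMap_apply A B E,
      ← IsScalarTower.algebraMap_apply P A E]
  have : FaithfulSMul P B := by
    rw [faithfulSMul_iff_algebraMap_injective, IsScalarTower.algebraMap_eq P A B]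
    exact (IsLocalization.injective B hpow).comp (FaithfulSMul.algebraMap_injective P A)
  have : IsFractionRing B E :=
    IsFractionRing.isFractionRing_of_isDomain_of_isLocalization (Submonoid.powers f) B E
  obtain ⟨b, rfl⟩ := exists_algebraMap_eq_of_isIntegral hφ ht
  obtain ⟨n, c, hc⟩ := IsLocalization.Away.surj f b
  refine ⟨f ^ n, fun h => hf (Ideal.IsPrime.mem_of_pow_mem inferInstance n h), c, ?_⟩
  rw [IsScalarTower.algebraMap_apply A B E c, ← hc, map_mul, mul_comm, map_pow, map_pow,
    ← IsScalarTower.algebraMap_apply A B E]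

open IsLocalRing in
lemma isUnramifiedAt_of_le_map_sup_sq {P A : Type*} [CommRing P] [CommRing A] [Algebra ℚ P]
    [Algebra P A] [Module.Finite P A] [IsNoetherianRing A] (q : Ideal A) [q.IsPrime]
    (h : q ≤ (q.under P).map (algebraMap P A) ⊔ q ^ 2) : Algebra.IsUnramifiedAt P q := by
  let _ := Localization.AtPrime.algebraOfLiesOver (q.under P) q
  have hL : Localization.AtPrime.IsLiesOverAlgebra (q.under P) q := inferInstance
  have hmax : maximalIdeal (Localization.AtPrime q) = q.map (algebraMap A _) :=
    Localization.AtPrime.map_eq_maximalIdeal.symm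
  rw [Algebra.isUnramifiedAt_iff_map_eq P (q.under P) q]
  constructor
  · let _ : Algebra ℚ (q.under P).ResidueField :=
      ((algebraMap P (q.under P).ResidueField).comp (algebraMap ℚ P)).toAlgebra
    have : CharZero (q.under P).ResidueField := algebraRat.charZero _
    have : Algebra.IsAlgebraic (q.under P).ResidueField q.ResidueField := inferInstance
    infer_instance
  · apply le_antisymm
    · rw [hmax, IsScalarTower.algebraMap_eq P A, ← Ideal.map_map]
      exact Ideal.map_mono Ideal.map_comap_le
    · have : IsNoetherianRing (Localization.AtPrime q) :=
        IsLocalization.isNoetherianRing q.primeCompl _ inferInstance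
      refine Submodule.le_of_le_smul_of_le_jacobson_bot
        (I := maximalIdeal (Localization.AtPrime q)) (IsNoetherian.noetherian _)
        (maximalIdeal_le_jacobson _) ?_
      have := Ideal.map_mono (f := algebraMap A (Localization.AtPrime q)) h
      rwa [Ideal.map_sup, Ideal.map_pow, Ideal.map_map, ← IsScalarTower.algebraMap_eq, ← hmax,
        pow_two] at this

end Unramified

section FiniteExtension

lemma ringKrullDim_le_of_isIntegral (R S : Type*) [CommRing R] [CommRing S] [Algebra R S]
    [Algebra.IsIntegral R S] : ringKrullDim S ≤ ringKrullDim R :=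
  Order.krullDim_le_of_strictMono (PrimeSpectrum.comap (algebraMap R S))
    fun _ _ h => Ideal.IsIntegral.comap_lt_comap h

lemma ringKrullDim_eq_of_isIntegral (R S : Type*) [CommRing R] [CommRing S] [Algebra R S]
    [Algebra.IsIntegral R S] [FaithfulSMul R S] : ringKrullDim S = ringKrullDim R := by
  refine (ringKrullDim_le_of_isIntegral R S).antisymm (iSup_le fun l => ?_)
  obtain ⟨Q, hQ⟩ := Algebra.IsIntegral.comap_surjective R S l.head
  have : Q.asIdeal.LiesOver l.head.asIdeal := ⟨(congrArg PrimeSpectrum.asIdeal hQ).symm⟩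
  obtain ⟨L, hL, -⟩ := Ideal.exists_ltSeries_of_hasGoingUp l Q.asIdeal
  rw [← hL]
  exact Order.LTSeries.length_le_krullDim L

lemma injective_of_finite_of_card_le_ringKrullDim {k σ A : Type*} [Field k] [Finite σ]
    [CommRing A] {φ : MvPolynomial σ k →+* A} (hφ : φ.Finite)
    (hdim : (Nat.card σ : WithBot ℕ∞) ≤ ringKrullDim A) : Function.Injective φ := by
  rw [injective_iff_map_eq_zero]
  intro f hf
  by_contra hne
  let φ' : MvPolynomial σ k ⧸ Ideal.span {f} →+* A := Ideal.Quotient.lift _ φ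
    fun _ hg => RingHom.mem_ker.1
      ((Ideal.span_singleton_le_iff_mem _).2 (RingHom.mem_ker.2 hf) hg)
  let _ : Algebra (MvPolynomial σ k ⧸ Ideal.span {f}) A := φ'.toAlgebra
  have : Algebra.IsIntegral (MvPolynomial σ k ⧸ Ideal.span {f}) A :=
    ⟨RingHom.IsIntegral.tower_top (Ideal.Quotient.mk (Ideal.span {f})) φ' hφ.to_isIntegral⟩
  have hlt : (Nat.card σ : WithBot ℕ∞) + 1 ≤ Nat.card σ :=
    calc (Nat.card σ : WithBot ℕ∞) + 1
        ≤ ringKrullDim (MvPolynomial σ k ⧸ Ideal.span {f}) + 1 := by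
          gcongr
          exact hdim.trans (ringKrullDim_le_of_isIntegral _ A)
      _ ≤ ringKrullDim (MvPolynomial σ k) :=
          ringKrullDim_quotient_succ_le_of_nonZeroDivisor (mem_nonZeroDivisors_of_ne_zero hne)
      _ = Nat.card σ := ringKrullDim_mvPolynomial k σ
  norm_cast at hlt
  omega

end FiniteExtension

section Combination

variable {k P A C : Type*} [Field k] [IsAlgClosed k] [CharZero k] [CommRing P] [IsDomain P]
  [IsIntegrallyClosed P] [Algebra ℚ P] [CommRing A] [IsDomain A] [IsNoetherianRing A]
  [Algebra k A] [CommRing C] [IsDomain C] [Algebra k C] [Algebra.FiniteType k C]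

lemma exists_notMem_map_mul_eq_of_le_map_sup_sq {φ : P →+* A} {ψ : A →ₐ[k] C}
    (hφ : φ.Finite) (hψ : ψ.Finite) (hφi : Function.Injective φ) (hψi : Function.Injective ψ)
    (hinj : ∀ χ χ' : C →ₐ[k] k, χ ∘ ψ = χ' ∘ ψ → χ = χ') {q : Ideal A} [q.IsPrime]
    (hq : q ≤ (q.comap φ).map φ ⊔ q ^ 2) (t : C) : ∃ s ∉ q, ∃ c, ψ s * t = ψ c := by
  let _ := φ.toAlgebra
  let _ := ψ.toAlgebra
  let _ : Algebra P C := (ψ.toRingHom.comp φ).toAlgebra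
  have : Module.Finite P A := hφ
  have : Module.Finite A C := hψ
  have : FaithfulSMul P A := (faithfulSMul_iff_algebraMap_injective _ _).2 hφi
  have : FaithfulSMul A C := (faithfulSMul_iff_algebraMap_injective _ _).2 hψi
  have : IsScalarTower k A C := .of_algebraMap_eq fun a => (ψ.commutes a).symm
  have : IsScalarTower P A C := .of_algebraMap_eq fun _ => rfl
  have := isUnramifiedAt_of_le_map_sup_sq q hq
  have := isFractionRing_of_forall_algHom_eq (A := A) hinj
  have : Algebra.IsIntegral P C := Algebra.IsIntegral.trans A
  have ht : IsIntegral P (algebraMap C (FractionRing C) t) :=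
    (Algebra.IsIntegral.isIntegral (R := P) t).algebraMap
  obtain ⟨s, hs, c, hsc⟩ := exists_notMem_algebraMap_mul_eq q ht
  refine ⟨s, hs, c, IsFractionRing.injective C (FractionRing C) ?_⟩
  rw [map_mul]
  exact hsc

end Combination

section CoordinateRing

variable {n r d : ℕ} {W : Set (Fin n → ℂ)} {V : Set (Fin r → ℂ)}
  {L : (Fin n → ℂ) →ₗ[ℂ] Fin r → ℂ}

lemma vanishingIdeal_image_linearMap (L : (Fin n → ℂ) →ₗ[ℂ] Fin r → ℂ) (W : Set (Fin n → ℂ)) :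
    vanishingIdeal ℂ (L '' W) = (vanishingIdeal ℂ W).comap (linearPullback L) := by
  ext f
  simp only [Ideal.mem_comap, mem_vanishingIdeal_iff_eval, forall_mem_image, eval_linearPullback]

/-- The homomorphism of coordinate rings induced by a linear map sending `W` into `V`. -/
def coordinatePullback (hL : MapsTo L W V) :
    (MvPolynomial (Fin r) ℂ ⧸ vanishingIdeal ℂ V) →ₐ[ℂ]
      MvPolynomial (Fin n) ℂ ⧸ vanishingIdeal ℂ W :=
  Ideal.quotientMapₐ (vanishingIdeal ℂ W) (linearPullback L)
    ((vanishingIdeal_anti_mono hL.image_subset).trans (vanishingIdeal_image_linearMap L W).le)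

lemma coordinatePullback_mk (hL : MapsTo L W V) (f : MvPolynomial (Fin r) ℂ) :
    coordinatePullback hL (Ideal.Quotient.mk _ f) = Ideal.Quotient.mk _ (linearPullback L f) :=
  rfl

lemma coordinatePullback_injective (hL : MapsTo L W V) (hLs : SurjOn L W V) :
    Function.Injective (coordinatePullback hL) := by
  have hV : vanishingIdeal ℂ V = (vanishingIdeal ℂ W).comap (linearPullback L) := by
    rw [← vanishingIdeal_image_linearMap, hLs.image_eq_of_mapsTo hL]
  exact Ideal.quotientMap_injective' (H := hV.le) hV.ge

lemma IsAffineVariety.finite_coordinatePullback (hW : IsAffineVariety W) (hcone : IsCone W)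
    (hL : MapsTo L W V) (hker : ∀ w ∈ W, L w = 0 → w = 0) :
    (coordinatePullback hL).toRingHom.Finite :=
  RingHom.Finite.of_comp_finite (f := Ideal.Quotient.mk (vanishingIdeal ℂ V))
    (hW.finite_linearPullback hcone hker)

lemma exists_eval_eq_of_algHom (hW : zariskiClosure W = W)
    (χ : (MvPolynomial (Fin n) ℂ ⧸ vanishingIdeal ℂ W) →ₐ[ℂ] ℂ) :
    ∃ v ∈ W, ∀ f, χ (Ideal.Quotient.mk _ f) = eval v f := by
  let v : Fin n → ℂ := fun i => χ (Ideal.Quotient.mk _ (X i))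
  have hχ (f : MvPolynomial (Fin n) ℂ) : χ (Ideal.Quotient.mk _ f) = eval v f := by
    have : χ.comp (Ideal.Quotient.mkₐ ℂ (vanishingIdeal ℂ W)) = aeval v := by
      ext i
      simp [v]
    exact DFunLike.congr_fun this f
  refine ⟨v, hW ▸ fun f hf => ?_, hχ⟩
  refine (hχ f).symm.trans ?_
  rw [Ideal.Quotient.eq_zero_iff_mem.2 hf, map_zero]

lemma algHom_eq_of_comp_coordinatePullback_eq (hW : zariskiClosure W = W) (hL : MapsTo L W V)
    (hinj : InjOn L W) {χ χ' : (MvPolynomial (Fin n) ℂ ⧸ vanishingIdeal ℂ W) →ₐ[ℂ] ℂ}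
    (h : χ ∘ coordinatePullback hL = χ' ∘ coordinatePullback hL) : χ = χ' := by
  obtain ⟨v, hv, hχ⟩ := exists_eval_eq_of_algHom hW χ
  obtain ⟨v', hv', hχ'⟩ := exists_eval_eq_of_algHom hW χ'
  have hLv : L v = L v' := by
    funext i
    have := congrFun h (Ideal.Quotient.mk _ (X i))
    simpa only [Function.comp_apply, coordinatePullback_mk, hχ, hχ', eval_linearPullback,
      eval_X] using this
  apply AlgHom.ext
  intro f
  obtain ⟨f, rfl⟩ := Ideal.Quotient.mk_surjective f
  rw [hχ, hχ', hinj hv hv' hLv]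

lemma map_vanishingIdeal_singleton_le_sup_sq {I : Ideal (MvPolynomial (Fin r) ℂ)} {w : Fin r → ℂ}
    (hI : I ≤ vanishingIdeal ℂ {w}) {u : (Fin r → ℂ) →ₗ[ℂ] Fin d → ℂ}
    (hu : ∀ p, (∀ f ∈ I, jacLin f w p = 0) → u p = 0 → p = 0) :
    (vanishingIdeal ℂ {w}).map (Ideal.Quotient.mk I) ≤
      (vanishingIdeal ℂ {u w}).map ((Ideal.Quotient.mk I).comp (linearPullback u).toRingHom) ⊔
        (vanishingIdeal ℂ {w}).map (Ideal.Quotient.mk I) ^ 2 := by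
  let J := I ⊔ (vanishingIdeal ℂ {u w}).map (linearPullback u).toRingHom
  have hJ : J ≤ vanishingIdeal ℂ {w} := by
    refine sup_le hI (Ideal.map_le_iff_le_comap.2 fun f hf => ?_)
    rw [mem_vanishingIdeal_singleton_iff] at hf
    refine (mem_vanishingIdeal_singleton_iff _ _).2 ?_
    exact (eval_linearPullback u f w).trans hf
  have hsq := vanishingIdeal_singleton_le_sup_sq hJ fun p hp => by
    refine hu p (fun f hf => hp f (Ideal.mem_sup_left hf)) (funext fun i => ?_)
    have hmem : X i - C (u w i) ∈ vanishingIdeal ℂ {u w} := by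
      rw [mem_vanishingIdeal_singleton_iff]
      simp
    have : jacLin (linearPullback u (X i - C (u w i))) w p = 0 :=
      hp _ (Ideal.mem_sup_right (Ideal.mem_map_of_mem (linearPullback u).toRingHom hmem))
    simpa only [jacLin_linearPullback, sub_eq_add_neg, ← C_neg, jacLin_add, jacLin_C, jacLin_X,
      LinearMap.add_apply, LinearMap.zero_apply, add_zero, Pi.zero_apply] using this
  have := Ideal.map_mono (f := Ideal.Quotient.mk I) hsq
  rwa [Ideal.map_sup, Ideal.map_sup, Ideal.map_quotient_self, bot_sup_eq, Ideal.map_map,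
    Ideal.map_pow] at this

end CoordinateRing

section Denominators

variable {n r d : ℕ} {W : Set (Fin n → ℂ)} {V : Set (Fin r → ℂ)}
  {L : (Fin n → ℂ) →ₗ[ℂ] Fin r → ℂ}

lemma IsAffineVariety.exists_eval_ne_zero_mul_sub_mem (hW : IsAffineVariety W) (hWc : IsCone W)
    (hV : IsAffineVariety V) (hVc : IsCone V) (hL : BijOn L W V) {w : Fin r → ℂ} (hw : w ∈ V)
    {u : (Fin r → ℂ) →ₗ[ℂ] Fin d → ℂ} (hd : d ≤ affineDim V) (hu : ∀ v ∈ V, u v = 0 → v = 0)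
    (hut : ∀ p, (∀ f ∈ vanishingIdeal ℂ V, jacLin f w p = 0) → u p = 0 → p = 0)
    (t : MvPolynomial (Fin n) ℂ) :
    ∃ s c, eval w s ≠ 0 ∧ linearPullback L s * t - linearPullback L c ∈ vanishingIdeal ℂ W := by
  have hLker : ∀ v ∈ W, L v = 0 → v = 0 := fun v hv h =>
    hL.injOn hv (hWc.zero_mem hW.nonempty) (h.trans (map_zero L).symm)
  have := hW.isPrime
  have := hV.isPrime
  set I := vanishingIdeal ℂ V
  have hIw : I ≤ vanishingIdeal ℂ {w} := vanishingIdeal_anti_mono (singleton_subset_iff.2 hw)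
  let φ := (Ideal.Quotient.mk I).comp (linearPullback u).toRingHom
  have hφ : φ.Finite := hV.finite_linearPullback hVc hu
  have hφi : Function.Injective φ := injective_of_finite_of_card_le_ringKrullDim hφ <| by
    rw [← hV.cast_affineDim, Nat.card_fin]
    exact_mod_cast hd
  let ψ := coordinatePullback hL.mapsTo
  have hψ : ψ.toRingHom.Finite := hW.finite_coordinatePullback hWc hL.mapsTo hLker
  have hψi : Function.Injective ψ := coordinatePullback_injective hL.mapsTo hL.surjOn
  let q := (vanishingIdeal ℂ {w}).map (Ideal.Quotient.mk I)
  have hmem (f) : Ideal.Quotient.mk I f ∈ q ↔ eval w f = 0 :=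
    (Ideal.mem_quotient_iff_mem hIw).trans (mem_vanishingIdeal_singleton_iff _ _)
  have hw_prime : (vanishingIdeal ℂ {w}).IsPrime := (isAffineVariety_singleton w).isPrime
  have hq : q.IsPrime := Ideal.map_isPrime_of_surjective Ideal.Quotient.mk_surjective
    (by rwa [Ideal.mk_ker])
  have hq2 : q ≤ (q.comap φ).map φ ⊔ q ^ 2 := by
    refine (map_vanishingIdeal_singleton_le_sup_sq hIw hut).trans (sup_le_sup_right ?_ _)
    refine Ideal.map_mono fun f hf => (hmem _).2 ?_
    exact (eval_linearPullback u f w).trans ((mem_vanishingIdeal_singleton_iff _ _).1 hf)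
  obtain ⟨s, hs, c, hsc⟩ := exists_notMem_map_mul_eq_of_le_map_sup_sq hφ hψ hφi hψi
    (fun χ χ' h => algHom_eq_of_comp_coordinatePullback_eq hW.zariskiClosure_eq hL.mapsTo
      hL.injOn h) hq2 (Ideal.Quotient.mk (vanishingIdeal ℂ W) t)
  obtain ⟨s, rfl⟩ := Ideal.Quotient.mk_surjective s
  obtain ⟨c, rfl⟩ := Ideal.Quotient.mk_surjective c
  exact ⟨s, c, fun h => hs ((hmem s).2 h), Ideal.Quotient.eq.1 hsc⟩

lemma IsAffineVariety.affineDim_eq_of_bijOn (hW : IsAffineVariety W) (hWc : IsCone W)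
    (hV : IsAffineVariety V) (hL : BijOn L W V) : affineDim W = affineDim V := by
  have hLker : ∀ v ∈ W, L v = 0 → v = 0 := fun v hv h =>
    hL.injOn hv (hWc.zero_mem hW.nonempty) (h.trans (map_zero L).symm)
  let ψ := coordinatePullback hL.mapsTo
  have hψ : ψ.toRingHom.Finite := hW.finite_coordinatePullback hWc hL.mapsTo hLker
  let _ := ψ.toRingHom.toAlgebra
  have : FaithfulSMul (MvPolynomial (Fin r) ℂ ⧸ vanishingIdeal ℂ V)
      (MvPolynomial (Fin n) ℂ ⧸ vanishingIdeal ℂ W) :=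
    (faithfulSMul_iff_algebraMap_injective _ _).2
      (coordinatePullback_injective hL.mapsTo hL.surjOn)
  have : Algebra.IsIntegral (MvPolynomial (Fin r) ℂ ⧸ vanishingIdeal ℂ V)
      (MvPolynomial (Fin n) ℂ ⧸ vanishingIdeal ℂ W) := ⟨hψ.to_isIntegral⟩
  have := ringKrullDim_eq_of_isIntegral (MvPolynomial (Fin r) ℂ ⧸ vanishingIdeal ℂ V)
    (MvPolynomial (Fin n) ℂ ⧸ vanishingIdeal ℂ W)
  rw [← hW.cast_affineDim, ← hV.cast_affineDim] at this
  exact_mod_cast this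

end Denominators

section BijectiveProjection

variable {n r m : ℕ} {X : Set (PrV r)} {Y : Set (PrV n)} {L : (Fin n → ℂ) →ₗ[ℂ] Fin r → ℂ}

lemma map_ne_zero_of_mem_affineCone (hL : ∀ x ∈ Y, L x.rep ≠ 0) {v : Fin n → ℂ}
    (hv : v ∈ affineCone Y) (hv0 : v ≠ 0) : L v ≠ 0 := by
  obtain ⟨a, ha⟩ := Projectivization.exists_smul_eq_mk_rep ℂ v hv0
  intro hLv
  refine hL _ (hv hv0) ?_
  rw [← ha, LinearMap.map_smul_of_tower, hLv, smul_zero]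

lemma mapsTo_affineCone
    (hL : ∀ x ∈ Y, ∀ z : PrV r, (∃ c : ℂ, c ≠ 0 ∧ z.rep = c • L x.rep) → z ∈ X) :
    MapsTo L (affineCone Y) (affineCone X) := by
  intro v hv hLv
  have hv0 : v ≠ 0 := fun h => hLv (by rw [h, map_zero])
  obtain ⟨a, ha⟩ := Projectivization.exists_smul_eq_mk_rep ℂ v hv0
  obtain ⟨b, hb⟩ := Projectivization.exists_smul_eq_mk_rep ℂ (L v) hLv
  refine hL _ (hv hv0) _ ⟨(b * a⁻¹ : ℂˣ), Units.ne_zero _, ?_⟩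
  rw [← ha, ← hb, LinearMap.map_smul_of_tower, Units.smul_def, Units.smul_def, smul_smul]
  simp

lemma surjOn_affineCone (hL : ∀ z ∈ X, ∃ x ∈ Y, ∃ c : ℂ, z.rep = c • L x.rep) :
    SurjOn L (affineCone Y) (affineCone X) := by
  intro w hw
  by_cases hw0 : w = 0
  · exact ⟨0, zero_mem_affineCone, by rw [map_zero, hw0]⟩
  · obtain ⟨x, hx, c, hc⟩ := hL _ (hw hw0)
    obtain ⟨a, ha⟩ := Projectivization.exists_smul_eq_mk_rep ℂ w hw0
    refine ⟨((a⁻¹ : ℂˣ) * c : ℂ) • x.rep,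
      isCone_affineCone Y _ (rep_mem_affineCone_iff.2 hx) _, ?_⟩
    rw [map_smul, mul_smul, ← hc, ← ha, ← Units.smul_def, inv_smul_smul]

lemma injOn_affineCone (hL : ∀ x ∈ Y, L x.rep ≠ 0)
    (hinj : ∀ x ∈ Y, ∀ y ∈ Y, (∃ c : ℂ, L x.rep = c • L y.rep) → x = y) :
    InjOn L (affineCone Y) := by
  intro v hv v' hv' hvv'
  by_cases hv0 : v = 0
  · by_contra hne
    refine map_ne_zero_of_mem_affineCone hL hv' (fun h => hne (hv0.trans h.symm)) ?_
    rw [← hvv', hv0, map_zero]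
  have hLv := map_ne_zero_of_mem_affineCone hL hv hv0
  have hv0' : v' ≠ 0 := fun h => hLv (by rw [hvv', h, map_zero])
  obtain ⟨a, ha⟩ := Projectivization.exists_smul_eq_mk_rep ℂ v hv0
  obtain ⟨b, hb⟩ := Projectivization.exists_smul_eq_mk_rep ℂ v' hv0'
  have hmk := hinj _ (hv hv0) _ (hv' hv0') ⟨(a * b⁻¹ : ℂˣ), by
    rw [← ha, ← hb, LinearMap.map_smul_of_tower, LinearMap.map_smul_of_tower, hvv',
      ← Units.smul_def, mul_smul, inv_smul_smul]⟩
  obtain ⟨c, hc⟩ := (Projectivization.mk_eq_mk_iff' ℂ _ _ hv0 hv0').1 hmk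
  have hc1 : (c - 1) • L v = 0 := by
    nth_rw 1 [sub_smul, one_smul, hvv', ← map_smul, hc, sub_self]
  rw [← hc, sub_eq_zero.1 ((smul_eq_zero.1 hc1).resolve_right hLv), one_smul]

lemma bijOn_affineCone (hL : ∀ x ∈ Y, L x.rep ≠ 0)
    (hX : X = {z | ∃ x ∈ Y, ∃ c : ℂ, c ≠ 0 ∧ z.rep = c • L x.rep})
    (hinj : ∀ x ∈ Y, ∀ y ∈ Y, (∃ c : ℂ, L x.rep = c • L y.rep) → x = y) :
    BijOn L (affineCone Y) (affineCone X) :=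
  ⟨mapsTo_affineCone fun x hx _ h => hX.ge ⟨x, hx, h⟩, injOn_affineCone hL hinj,
    surjOn_affineCone fun _ hz =>
      let ⟨x, hx, c, _, hc⟩ := hX.le hz
      ⟨x, hx, c, hc⟩⟩

lemma map_mem_affTangent (hL : MapsTo L (affineCone Y) (affineCone X)) (hX : X.Nonempty)
    (hY : Y.Nonempty) {x p : Fin n → ℂ} (hp : p ∈ affTangent Y x) : L p ∈ affTangent X (L x) := by
  rw [mem_affTangent_iff] at hp ⊢
  intro f hf
  rw [← jacLin_linearPullback]
  apply hp
  rw [← vanishingIdeal_affineCone hX, mem_vanishingIdeal_iff_eval] at hf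
  rw [← vanishingIdeal_affineCone hY, mem_vanishingIdeal_iff_eval]
  intro v hv
  rw [eval_linearPullback]
  exact hf _ (hL hv)

-- A coordinate `v_i` on the source is regular on the target near `L x`: `s(L v) v_i = c(L v)` on
-- the cone, with `s(L x) ≠ 0`. Differentiating along `Q ∈ ker L` leaves `s(L x) Q_i = 0`.
lemma eq_zero_of_mem_affTangent_of_map_eq_zero (hXc : IsClosed X) (hX : IsIrreducible X)
    (hYc : IsClosed Y) (hY : IsIrreducible Y) (hdim : pdim X = (m : WithBot ℕ∞))
    (hL : BijOn L (affineCone Y) (affineCone X)) {x Q : Fin n → ℂ} (hx : x ∈ affineCone Y)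
    (hsmooth : Module.finrank ℂ (affTangent X (L x)) ≤ m + 1) (hQ : L Q = 0)
    (hQx : Q ∈ affTangent Y x) : Q = 0 := by
  obtain ⟨u, hu, hut⟩ := exists_linearMap_ne_zero_of_pdim_lt (d := m + 1) hXc
    (by rw [hdim]; exact_mod_cast Nat.lt_succ_self m) hsmooth
  funext i
  obtain ⟨s, c, hs, hsc⟩ := (isAffineVariety_affineCone hYc hY).exists_eval_ne_zero_mul_sub_mem
    (isCone_affineCone Y) (isAffineVariety_affineCone hXc hX) (isCone_affineCone X) hL
    (hL.mapsTo hx) (u := u) (add_one_le_affineDim_affineCone hXc hX hdim.ge)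
    (fun v hv huv => by_contra fun hv0 =>
      hu _ (hv hv0) ((apply_rep_mk_eq_zero_iff u hv0).2 huv))
    (fun p hp hup => Submodule.disjoint_def.1 hut p
      (mem_affTangent_iff.2 (vanishingIdeal_affineCone hX.1 ▸ hp)) hup) (MvPolynomial.X i)
  rw [vanishingIdeal_affineCone hY.1] at hsc
  have hderiv := mem_affTangent_iff.1 hQx _ hsc
  rw [sub_eq_add_neg, ← map_neg, jacLin_add, LinearMap.add_apply, jacLin_mul,
    jacLin_linearPullback, jacLin_linearPullback, jacLin_X, eval_linearPullback, hQ, map_zero,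
    map_zero, zero_mul, zero_add, add_zero] at hderiv
  exact (mul_eq_zero.1 hderiv).resolve_left hs

lemma finrank_affTangent_le_of_bijOn (hXc : IsClosed X) (hX : IsIrreducible X)
    (hYc : IsClosed Y) (hY : IsIrreducible Y) (hdim : pdim X = (m : WithBot ℕ∞))
    (hL : BijOn L (affineCone Y) (affineCone X)) {x : Fin n → ℂ} (hx : x ∈ affineCone Y)
    (hsmooth : Module.finrank ℂ (affTangent X (L x)) ≤ m + 1) :
    Module.finrank ℂ (affTangent Y x) ≤ m + 1 := by
  refine le_trans (LinearMap.finrank_le_finrank_of_injective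
    (f := L.restrict fun _ => map_mem_affTangent hL.mapsTo hX.1 hY.1) ?_) hsmooth
  rw [← LinearMap.ker_eq_bot, LinearMap.ker_eq_bot']
  rintro ⟨p, hp⟩ hLp
  exact Subtype.ext <| eq_zero_of_mem_affTangent_of_map_eq_zero hXc hX hYc hY hdim hL hx hsmooth
    (congrArg Subtype.val hLp) hp

end BijectiveProjection

section SingularLocus

variable {n m : ℕ} {X : Set (PrV n)}

lemma finrank_affTangent_eq_of_isSmoothPt (hdim : pdim X = (m : WithBot ℕ∞)) {w : Fin n → ℂ}
    (hw : w ≠ 0) (hsmooth : IsSmoothPt X (Projectivization.mk ℂ w hw)) :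
    Module.finrank ℂ (affTangent X w) = m + 1 := by
  rwa [isSmoothPt_iff_finrank_eq hdim, affTangent_rep_mk] at hsmooth

lemma finrank_affTangent_of_le_affineDim (hcl : IsClosed X) (hirr : IsIrreducible X)
    (hdim : n ≤ affineDim (affineCone X)) (v : Fin n → ℂ) :
    Module.finrank ℂ (affTangent X v) = n := by
  have hX := isAffineVariety_affineCone hcl hirr
  have huniv : affineCone X = univ := by
    by_contra hne
    have := hX.affineDim_lt_of_ssubset isAffineVariety_univ (ssubset_univ_iff.2 hne)
    rw [affineDim_univ, Nat.card_fin] at this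
    omega
  have htop : affTangent X v = ⊤ := by
    refine eq_top_iff.2 fun p _ => mem_affTangent_iff.2 fun f hf => ?_
    rw [← vanishingIdeal_affineCone hirr.1, huniv, mem_vanishingIdeal_iff_eval] at hf
    rw [MvPolynomial.funext fun v => (hf v trivial).trans (map_zero (eval v)).symm, ← C_0,
      jacLin_C, LinearMap.zero_apply]
  rw [htop, finrank_top, Module.finrank_fin_fun]

-- The `β` linear equations cut out a subspace missing `Sing X`; a linear subspace is smooth, so
-- `m < N` if `X` is singular, and this improves the numerical hypothesis.
lemma exists_linearMap_forall_finrank_affTangent_eq {N b : ℕ} {X : Set (Pr N)} (hcl : IsClosed X)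
    (hirr : IsIrreducible X) (hdim : pdim X = (m : WithBot ℕ∞)) (hb_smooth : IsSmoothSet X → b = 0)
    (hb_sing : ¬ IsSmoothSet X → pdim (singLocus X) = (b : WithBot ℕ∞))
    (hbig : 2 * N + b < 3 * m + 1) :
    ∃ β, 2 * N + β ≤ 3 * m + 1 ∧ N + β ≤ 2 * m ∧ ∃ M : (Fin (N + 1) → ℂ) →ₗ[ℂ] Fin β → ℂ,
      ∀ w ∈ affineCone X, w ≠ 0 → M w = 0 → Module.finrank ℂ (affTangent X w) = m + 1 := by
  have hm : m + 1 ≤ affineDim (affineCone X) := add_one_le_affineDim_affineCone hcl hirr hdim.ge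
  have hmN : m ≤ N := by
    have := hm.trans (isAffineVariety_affineCone hcl hirr).affineDim_le_card
    rw [Nat.card_fin] at this
    omega
  by_cases hX : IsSmoothSet X
  · obtain rfl := hb_smooth hX
    exact ⟨0, by omega, by omega, 0, fun w hw hw0 _ =>
      finrank_affTangent_eq_of_isSmoothPt hdim hw0 (hX _ (hw hw0))⟩
  · have hlt : m < N := by
      refine hmN.lt_of_ne fun hmN' => hX fun x _ => ?_
      rw [isSmoothPt_iff_finrank_eq hdim, hmN']
      exact finrank_affTangent_of_le_affineDim hcl hirr (hmN' ▸ hm) _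
    obtain ⟨M, hM, -⟩ := exists_linearMap_ne_zero_of_pdim_lt (d := b + 1) (T := ⊥)
      (isClosed_singLocus hcl hirr hdim)
      (by rw [hb_sing hX]; exact_mod_cast Nat.lt_succ_self b) (by simp)
    refine ⟨b + 1, by omega, by omega, M, fun w hw hw0 hMw => ?_⟩
    refine finrank_affTangent_eq_of_isSmoothPt hdim hw0 (by_contra fun hsing => ?_)
    exact hM _ ⟨hw hw0, fun h => hsing h.2⟩ ((apply_rep_mk_eq_zero_iff M hw0).2 hMw)

end SingularLocus

section AffineSecantCone

variable {K σ : Type*} [Field K] {A : Set (σ → K)}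

/-- The closure of the set of differences of pairs of points of `A`. When `A` is the affine cone
over a projective variety `Y`, this is the affine cone over the secant variety of `Y`. -/
def affineSecantCone (A : Set (σ → K)) : Set (σ → K) :=
  zariskiClosure {z | ∃ x ∈ A, ∃ y ∈ A, z = x - y}

lemma sub_mem_affineSecantCone {x y : σ → K} (hx : x ∈ A) (hy : y ∈ A) :
    x - y ∈ affineSecantCone A :=
  subset_zariskiClosure _ ⟨x, hx, y, hy, rfl⟩

lemma mem_vanishingIdeal_affineSecantCone_iff {f : MvPolynomial σ K} :
    f ∈ vanishingIdeal K (affineSecantCone A) ↔ ∀ x ∈ A, ∀ y ∈ A, eval (x - y) f = 0 := by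
  rw [affineSecantCone, vanishingIdeal_zariskiClosure, mem_vanishingIdeal_iff_eval]
  constructor
  · exact fun h x hx y hy => h _ ⟨x, hx, y, hy, rfl⟩
  · rintro h _ ⟨x, hx, y, hy, rfl⟩
    exact h x hx y hy

lemma isCone_affineSecantCone (hc : IsCone A) : IsCone (affineSecantCone A) := by
  refine IsCone.closure ?_
  rintro _ ⟨x, hx, y, hy, rfl⟩ c
  exact ⟨_, hc x hx c, _, hc y hy c, smul_sub c x y⟩

lemma isAffineVariety_affineSecantCone (hA : IsAffineVariety A) :
    IsAffineVariety (affineSecantCone A) := by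
  have hφ : IsPolynomialMap fun w : σ ⊕ σ → K => w ∘ Sum.inl - w ∘ Sum.inr :=
    ⟨fun i => X (.inl i) - X (.inr i), fun w i => by simp⟩
  convert (hA.prod hA).zariskiClosure_image hφ using 1
  refine congrArg zariskiClosure (Set.ext fun z => ?_)
  constructor
  · rintro ⟨x, hx, y, hy, rfl⟩
    exact ⟨Sum.elim x y, ⟨hx, hy⟩, rfl⟩
  · rintro ⟨w, ⟨hx, hy⟩, rfl⟩
    exact ⟨_, hx, _, hy, rfl⟩

lemma exists_eval_sub_ne_zero_and (hA : IsAffineVariety A)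
    {f g : MvPolynomial σ K} (hf : f ∉ vanishingIdeal K (affineSecantCone A))
    (hg : g ∉ vanishingIdeal K (affineSecantCone A)) :
    ∃ x ∈ A, ∃ y ∈ A, eval (x - y) f ≠ 0 ∧ eval (x - y) g ≠ 0 := by
  have hfg := (isAffineVariety_affineSecantCone hA).isPrime.mul_notMem hf hg
  rw [mem_vanishingIdeal_affineSecantCone_iff] at hfg
  push Not at hfg
  obtain ⟨x, hx, y, hy, h⟩ := hfg
  rw [map_mul] at h
  exact ⟨x, hx, y, hy, left_ne_zero_of_mul h, right_ne_zero_of_mul h⟩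

end AffineSecantCone

section SecantDeformation

variable {K σ : Type*} {A : Set (σ → K)}

/-- The point of `K^σ × K^σ × K^σ × K` with the given components. -/
def secantPoint (x y p : σ → K) (c : K) : (σ ⊕ σ) ⊕ (σ ⊕ Unit) → K :=
  Sum.elim (Sum.elim x y) (Sum.elim p fun _ => c)

lemma exists_eq_secantPoint (w : (σ ⊕ σ) ⊕ (σ ⊕ Unit) → K) : ∃ x y p c, w = secantPoint x y p c :=
  ⟨w ∘ Sum.inl ∘ Sum.inl, w ∘ Sum.inl ∘ Sum.inr, w ∘ Sum.inr ∘ Sum.inl, w (.inr (.inr ())), by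
    funext i
    rcases i with (i | i) | (i | i) <;> rfl⟩

variable [Field K]

/-- The closure of the family of quadruples `(c x, c y, x - y, c)` with `x` and `y` on the cone `A`.
For `c ≠ 0` these are pairs of points of `A` with their difference quotient; as `c → 0` the third
component degenerates to secant directions at the vertex and to tangent directions elsewhere. -/
def secantDeformation (A : Set (σ → K)) : Set ((σ ⊕ σ) ⊕ (σ ⊕ Unit) → K) :=
  zariskiClosure {w | ∃ x ∈ A, ∃ y ∈ A, ∃ c : K, w = secantPoint (c • x) (c • y) (x - y) c}

lemma secantPoint_smul_mem_secantDeformation {x y : σ → K} (hx : x ∈ A) (hy : y ∈ A) (c : K) :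
    secantPoint (c • x) (c • y) (x - y) c ∈ secantDeformation A :=
  subset_zariskiClosure _ ⟨x, hx, y, hy, c, rfl⟩

lemma isAffineVariety_secantDeformation [IsAlgClosed K] (hA : IsAffineVariety A) :
    IsAffineVariety (secantDeformation A) := by
  let φ (w : (σ ⊕ σ) ⊕ Unit → K) : (σ ⊕ σ) ⊕ (σ ⊕ Unit) → K :=
    secantPoint (w (.inr ()) • (w ∘ Sum.inl ∘ Sum.inl)) (w (.inr ()) • (w ∘ Sum.inl ∘ Sum.inr))
      (w ∘ Sum.inl ∘ Sum.inl - w ∘ Sum.inl ∘ Sum.inr) (w (.inr ()))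
  have hφ : IsPolynomialMap φ := by
    refine ⟨Sum.elim (Sum.elim (fun i => X (.inr ()) * X (.inl (.inl i)))
      fun i => X (.inr ()) * X (.inl (.inr i)))
      (Sum.elim (fun i => X (.inl (.inl i)) - X (.inl (.inr i))) fun _ => X (.inr ())), ?_⟩
    rintro w ((i | i) | (i | i)) <;> simp [φ, secantPoint]
  convert ((hA.prod hA).prod (isAffineVariety_univ (σ := Unit))).zariskiClosure_image hφ using 1
  refine congrArg zariskiClosure (Set.ext fun w => ?_)
  constructor
  · rintro ⟨x, hx, y, hy, c, rfl⟩
    exact ⟨Sum.elim (Sum.elim x y) fun _ => c, ⟨⟨hx, hy⟩, trivial⟩, rfl⟩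
  · rintro ⟨v, ⟨⟨hx, hy⟩, -⟩, rfl⟩
    exact ⟨_, hx, _, hy, _, rfl⟩

lemma secantPoint_mem_secantDeformation (hc : IsCone A) {x y p : σ → K} {c : K}
    (hx : x ∈ A) (hy : y ∈ A) (hc0 : c ≠ 0) (hp : x - y = c • p) :
    secantPoint x y p c ∈ secantDeformation A := by
  have := secantPoint_smul_mem_secantDeformation (hc x hx c⁻¹) (hc y hy c⁻¹) c
  rwa [smul_inv_smul₀ hc0, smul_inv_smul₀ hc0, ← smul_sub, hp, inv_smul_smul₀ hc0] at this

lemma isPolynomialMap_secantEquation :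
    IsPolynomialMap fun (w : (σ ⊕ σ) ⊕ (σ ⊕ Unit) → K) (i : σ) =>
      w (.inl (.inl i)) - w (.inl (.inr i)) - w (.inr (.inr ())) * w (.inr (.inl i)) :=
  ⟨fun i => X (.inl (.inl i)) - X (.inl (.inr i)) - X (.inr (.inr ())) * X (.inr (.inl i)),
    fun w i => by simp⟩

lemma two_mul_affineDim_lt_affineDim_secantDeformation [IsAlgClosed K] [Finite σ]
    (hA : IsAffineVariety A) (hc : IsCone A) :
    2 * affineDim A < affineDim (secantDeformation A) := by
  have h0 := hc.zero_mem hA.nonempty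
  have hAA := hA.prod hA
  have huniv : IsAffineVariety (univ : Set (σ ⊕ Unit → K)) := isAffineVariety_univ
  have hprod := hAA.prod huniv
  obtain ⟨W, hWsub, hW, hwW, hWφ, hdim⟩ := hprod.exists_subset_forall_eq_zero
    (w := secantPoint 0 0 0 1) ⟨⟨h0, h0⟩, trivial⟩ isPolynomialMap_secantEquation
    (by funext i; simp [secantPoint])
  have hsub : W ⊆ secantDeformation A := by
    intro w hw
    refine (isAffineVariety_secantDeformation hA).mem_of_forall_eval fun F hF =>
      by_contra fun hne => ?_
    obtain ⟨v, hv, hFv, hcv⟩ := hW.exists_eval_ne_zero_and (f := F)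
      (g := X (.inr (.inr ()))) ⟨w, hw, hne⟩ ⟨_, hwW, by simp [secantPoint]⟩
    obtain ⟨⟨hx, hy⟩, -⟩ := hWsub hv
    have hvφ := hWφ v hv
    obtain ⟨x, y, p, c, rfl⟩ := exists_eq_secantPoint v
    refine hFv (hF _ (secantPoint_mem_secantDeformation hc hx hy (by simpa [secantPoint] using hcv)
      (sub_eq_zero.1 hvφ)))
  have h1 := hW.affineDim_mono (isAffineVariety_secantDeformation hA) hsub
  have h2 := hA.add_le_affineDim_affineProd hA
  have h3 := hAA.add_le_affineDim_affineProd huniv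
  rw [affineDim_univ, Nat.card_sum, Nat.card_unique (α := Unit)] at h3
  omega

lemma of_secantPoint_mem_secantDeformation (hA : IsAffineVariety A) (hc : IsCone A)
    {x y p : σ → K} {c : K} (h : secantPoint x y p c ∈ secantDeformation A) :
    x ∈ A ∧ y ∈ A ∧ x - y = c • p := by
  have hx : MapsTo (fun w => w ∘ Sum.inl ∘ Sum.inl) (secantDeformation A) (zariskiClosure A) := by
    refine (isPolynomialMap_comp_right (Sum.inl ∘ Sum.inl)).mapsTo_zariskiClosure ?_
    rintro _ ⟨x, hx, y, -, c, rfl⟩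
    exact hc x hx c
  have hy : MapsTo (fun w => w ∘ Sum.inl ∘ Sum.inr) (secantDeformation A) (zariskiClosure A) := by
    refine (isPolynomialMap_comp_right (Sum.inl ∘ Sum.inr)).mapsTo_zariskiClosure ?_
    rintro _ ⟨x, -, y, hy, c, rfl⟩
    exact hc y hy c
  rw [hA.zariskiClosure_eq] at hx hy
  refine ⟨hx h, hy h, sub_eq_zero.1 ?_⟩
  refine (isPolynomialMap_secantEquation (K := K)).eq_zero_of_mem_zariskiClosure ?_ h
  rintro _ ⟨x, -, y, -, c, rfl⟩
  funext i
  simp only [secantPoint, Sum.elim_inl, Sum.elim_inr, Pi.sub_apply, Pi.smul_apply,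
    Pi.zero_apply, smul_eq_mul]
  ring

lemma secantPoint_zero_mem_secantDeformation {p : σ → K}
    (hp : p ∈ affineSecantCone A) :
    secantPoint 0 0 p 0 ∈ secantDeformation A := by
  have hφ : IsPolynomialMap fun p : σ → K => secantPoint 0 0 p 0 := by
    refine ⟨Sum.elim 0 (Sum.elim X 0), ?_⟩
    rintro w ((i | i) | (i | i)) <;> simp [secantPoint]
  refine hφ.mapsTo_zariskiClosure ?_ hp
  rintro _ ⟨x, hx, y, hy, rfl⟩
  exact ⟨x, hx, y, hy, 0, by rw [zero_smul, zero_smul]⟩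

end SecantDeformation

section TangentDirection

variable {n : ℕ} {A : Set (Fin n → ℂ)}

lemma exists_eval_add_smul_eq (g : MvPolynomial (Fin n) ℂ) :
    ∃ G : MvPolynomial ((Fin n ⊕ Fin n) ⊕ Unit) ℂ,
      (∀ v p c, eval (v + c • p) g =
        eval v g + c * eval (Sum.elim (Sum.elim v p) fun _ => c) G) ∧
      ∀ v p, eval (Sum.elim (Sum.elim v p) fun _ => 0) G = jacLin g v p := by
  induction g using MvPolynomial.induction_on with
  | C a => exact ⟨0, by simp, by simp⟩
  | add f g hf hg =>
    obtain ⟨F, hF, hF0⟩ := hf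
    obtain ⟨G, hG, hG0⟩ := hg
    refine ⟨F + G, fun v p c => ?_, fun v p => ?_⟩
    · rw [map_add, map_add, hF, hG, map_add]
      ring
    · rw [map_add, hF0, hG0, jacLin_add, LinearMap.add_apply]
  | mul_X f i hf =>
    obtain ⟨F, hF, hF0⟩ := hf
    have hren (v p : Fin n → ℂ) (c : ℂ) :
        (Sum.elim (Sum.elim v p) fun _ : Unit => c) ∘ (Sum.inl ∘ Sum.inl) = v := rfl
    refine ⟨F * X (.inl (.inl i)) + rename (Sum.inl ∘ Sum.inl) f * X (.inl (.inr i)) +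
      X (.inr ()) * F * X (.inl (.inr i)), fun v p c => ?_, fun v p => ?_⟩
    · simp only [map_mul, map_add, hF, eval_rename, hren, eval_X, Sum.elim_inl, Sum.elim_inr,
        Pi.add_apply, Pi.smul_apply, smul_eq_mul]
      ring
    · simp only [map_mul, map_add, eval_rename, hren, eval_X, Sum.elim_inl, Sum.elim_inr, hF0,
        jacLin_mul, jacLin_X]
      ring

lemma jacLin_eq_zero_of_eval_add_smul_eq_zero {σ : Type*} {W : Set (σ → ℂ)}
    (hW : IsAffineVariety W) {g : MvPolynomial (Fin n) ℂ} {l r : (σ → ℂ) → Fin n → ℂ}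
    (hl : IsPolynomialMap l) (hr : IsPolynomialMap r) (a : MvPolynomial σ ℂ)
    (hg : ∀ w ∈ W, eval (l w) g = 0) (hgr : ∀ w ∈ W, eval (l w + eval w a • r w) g = 0)
    (ha : ∃ w ∈ W, eval w a ≠ 0) {w : σ → ℂ} (hw : w ∈ W) (haw : eval w a = 0) :
    jacLin g (l w) (r w) = 0 := by
  obtain ⟨G, hG, hG0⟩ := exists_eval_add_smul_eq g
  have hφ : IsPolynomialMap fun w => Sum.elim (Sum.elim (l w) (r w)) fun _ : Unit => eval w a := by
    obtain ⟨F, hF⟩ := hl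
    obtain ⟨R, hR⟩ := hr
    refine ⟨Sum.elim (Sum.elim F R) fun _ => a, ?_⟩
    rintro w ((i | i) | _) <;> simp [hF, hR]
  obtain ⟨G', hG'⟩ := hφ.exists_eval_eq G
  by_contra hne
  have hG'w : eval w G' ≠ 0 := by
    rw [hG', haw]
    exact (hG0 (l w) (r w)).trans_ne hne
  obtain ⟨v, hv, hav, hGv⟩ := hW.exists_eval_ne_zero_and ha ⟨w, hw, hG'w⟩
  have := hG (l v) (r v) (eval v a)
  rw [hgr v hv, hg v hv, zero_add, ← hG'] at this
  exact mul_ne_zero hav hGv this.symm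

lemma jacLin_eq_zero_of_secantPoint_mem (hA : IsAffineVariety A) (hc : IsCone A)
    {x y p : Fin n → ℂ} (h : secantPoint x y p 0 ∈ secantDeformation A)
    {g : MvPolynomial (Fin n) ℂ} (hg : g ∈ vanishingIdeal ℂ A) : jacLin g x p = 0 := by
  have hmem {w} (hw : w ∈ secantDeformation A) :
      w ∘ Sum.inl ∘ Sum.inl ∈ A ∧ w ∘ Sum.inl ∘ Sum.inl + w (.inr (.inr ())) •
        (-(w ∘ Sum.inr ∘ Sum.inl)) ∈ A := by
    obtain ⟨x, y, p, c, rfl⟩ := exists_eq_secantPoint w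
    obtain ⟨hx, hy, hxy⟩ := of_secantPoint_mem_secantDeformation hA hc hw
    refine ⟨hx, ?_⟩
    change x + c • (-p) ∈ A
    rwa [smul_neg, ← hxy, ← sub_eq_add_neg, sub_sub_cancel]
  have h0 := hc.zero_mem hA.nonempty
  have hneg := jacLin_eq_zero_of_eval_add_smul_eq_zero (isAffineVariety_secantDeformation hA)
    (g := g) (isPolynomialMap_comp_right (Sum.inl ∘ Sum.inl))
    (r := fun w => -(w ∘ Sum.inr ∘ Sum.inl)) ⟨fun i => -X (.inr (.inl i)), by simp⟩
    (X (.inr (.inr ()))) (fun w hw => hg _ (hmem hw).1)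
    (fun w hw => by
      rw [eval_X]
      exact hg _ (hmem hw).2)
    ⟨_, secantPoint_smul_mem_secantDeformation h0 h0 1, by simp [secantPoint]⟩ h
    (by simp [secantPoint])
  rwa [map_neg, neg_eq_zero] at hneg

lemma exists_ne_zero_forall_jacLin_eq_zero (hA : IsAffineVariety A) (hc : IsCone A)
    {Q : Fin n → ℂ} (hQ : ∀ v ∈ A, ∀ c : ℂ, v - c • Q ∈ A → c = 0)
    (hQA : Q ∈ affineSecantCone A) {β : ℕ}
    (M : (Fin n → ℂ) →ₗ[ℂ] Fin β → ℂ) (hdim : n + β ≤ 2 * affineDim A) :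
    ∃ x ∈ A, x ≠ 0 ∧ M x = 0 ∧ ∀ g ∈ vanishingIdeal ℂ A, jacLin g x Q = 0 := by
  have hM : IsPolynomialMap M := isPolynomialMap_linearMap M
  let φ (w : (Fin n ⊕ Fin n) ⊕ (Fin n ⊕ Unit) → ℂ) : Fin n ⊕ Fin β → ℂ :=
    Sum.elim (w ∘ Sum.inr ∘ Sum.inl - Q) (M (w ∘ Sum.inl ∘ Sum.inl))
  have hφ : IsPolynomialMap φ := by
    obtain ⟨F, hF⟩ := hM
    refine ⟨Sum.elim (fun i => X (.inr (.inl i)) - C (Q i))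
      fun j => rename (Sum.inl ∘ Sum.inl) (F j), ?_⟩
    rintro w (i | j)
    · simp [φ]
    · simp [φ, hF, eval_rename]
  obtain ⟨W, hWD, hW, -, hWφ, hWdim⟩ :=
    (isAffineVariety_secantDeformation hA).exists_subset_forall_eq_zero
      (secantPoint_zero_mem_secantDeformation hQA) hφ <| by
        funext i
        rcases i with i | j
        · simp [φ, secantPoint]
        · exact congrFun (map_zero M) j
  have hlt := two_mul_affineDim_lt_affineDim_secantDeformation hA hc
  rw [Nat.card_sum, Nat.card_fin, Nat.card_fin] at hWdim
  obtain ⟨w, hw, hne⟩ := hW.exists_ne_of_affineDim_pos (by omega) (secantPoint 0 0 Q 0)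
  have hwφ := hWφ w hw
  have hwD := hWD hw
  obtain ⟨x, y, p, c, rfl⟩ := exists_eq_secantPoint w
  obtain rfl : p = Q := funext fun i => sub_eq_zero.1 (congrFun hwφ (.inl i))
  have hMx : M x = 0 := funext fun j => congrFun hwφ (.inr j)
  obtain ⟨hx, hy, hxy⟩ := of_secantPoint_mem_secantDeformation hA hc hwD
  have hc0 : c = 0 := hQ x hx c (by rwa [← hxy, sub_sub_cancel])
  rw [hc0, zero_smul, sub_eq_zero] at hxy
  refine ⟨x, hx, fun hx0 => hne ?_, hMx, fun g hg => ?_⟩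
  · rw [← hxy, hx0, hc0]
  · exact jacLin_eq_zero_of_secantPoint_mem hA hc (hc0 ▸ hwD) hg

end TangentDirection

section DirectionalDerivative

variable {n : ℕ}

lemma hasDerivAt_eval_add_smul (g : MvPolynomial (Fin n) ℂ) (v p : Fin n → ℂ) :
    HasDerivAt (fun s : ℂ => eval (v + s • p) g) (jacLin g v p) 0 := by
  induction g using MvPolynomial.induction_on with
  | C a => simpa using hasDerivAt_const (0 : ℂ) a
  | add f g hf hg =>
    rw [jacLin_add, LinearMap.add_apply]
    convert! hf.add hg using 2
    simp
  | mul_X f i hf =>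
    have hX : HasDerivAt (fun s : ℂ => v i + s * p i) (p i) 0 := by
      simpa using ((hasDerivAt_id (0 : ℂ)).mul_const (p i)).const_add (v i)
    have hmul : (fun s : ℂ => eval (v + s • p) (f * X i)) =
        (fun s : ℂ => eval (v + s • p) f) * fun s => v i + s * p i := by
      funext s
      simp
    rw [hmul, jacLin_mul, jacLin_X]
    exact (hf.mul hX).congr_deriv (by simp)

lemma jacLin_eq_of_forall_eval_eq {m : ℕ} {g : MvPolynomial (Fin n) ℂ}
    {f : MvPolynomial (Fin m) ℂ} {v p : Fin n → ℂ} {v' p' : Fin m → ℂ}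
    (h : ∀ s : ℂ, eval (v + s • p) g = eval (v' + s • p') f) : jacLin g v p = jacLin f v' p' := by
  refine (hasDerivAt_eval_add_smul g v p).unique ?_
  simpa only [h] using hasDerivAt_eval_add_smul f v' p'

lemma IsCone.jacLin_self_eq_zero {A : Set (Fin n → ℂ)} (hc : IsCone A) {x : Fin n → ℂ} (hx : x ∈ A)
    {g : MvPolynomial (Fin n) ℂ} (hg : g ∈ vanishingIdeal ℂ A) : jacLin g x x = 0 := by
  have hconst : ∀ s : ℂ, eval (x + s • x) g = eval (x + s • x) (C 0) := fun s => by
    rw [eval_C, show x + s • x = (1 + s) • x by module]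
    exact mem_vanishingIdeal_iff_eval.1 hg _ (hc x hx _)
  rw [jacLin_eq_of_forall_eval_eq hconst, jacLin_C, LinearMap.zero_apply]

lemma jacLin_single (f : MvPolynomial (Fin n) ℂ) (v : Fin n → ℂ) (i : Fin n) :
    jacLin f v (Pi.single i 1) = eval v (pderiv i f) := by
  simp [jacLin_apply, Pi.single_apply]

end DirectionalDerivative

section MinimalEquation

variable {σ : Type*}

lemma pderiv_ne_zero_of_coeff_ne_zero {R : Type*} [CommRing R] [IsDomain R] [CharZero R]
    {f : MvPolynomial σ R} {m : σ →₀ ℕ} {i : σ}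
    (hm : coeff m f ≠ 0) (hi : m i ≠ 0) : pderiv i f ≠ 0 := fun h => by
  have hadd : m - Finsupp.single i 1 + Finsupp.single i 1 = m :=
    tsub_add_cancel_of_le (by simpa [Nat.one_le_iff_ne_zero] using hi)
  have := congrArg (coeff (m - Finsupp.single i 1)) h
  rw [coeff_pderiv, hadd, coeff_zero] at this
  rcases mul_eq_zero.1 this with h | h
  · exact hm h
  · exact Nat.cast_add_one_ne_zero _ h

lemma totalDegree_pderiv_lt {R : Type*} [CommSemiring R] {f : MvPolynomial σ R} {i : σ}
    (h : pderiv i f ≠ 0) : (pderiv i f).totalDegree < f.totalDegree := by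
  obtain ⟨m, hm, hmdeg⟩ := Finset.exists_mem_eq_sup _ (support_nonempty.2 h)
    fun m => m.sum fun _ e => e
  have hcoeff : coeff (m + Finsupp.single i 1) f ≠ 0 := fun h0 => by
    rw [mem_support_iff, coeff_pderiv, h0, zero_mul] at hm
    exact hm rfl
  have hle := le_totalDegree (mem_support_iff.2 hcoeff)
  rw [Finsupp.sum_add_index' (by simp) (by simp), Finsupp.sum_single_index rfl] at hle
  rw [totalDegree, hmdeg]
  exact hle

lemma exists_mem_pderiv_notMem {K : Type*} [Field K] [CharZero K]
    {I : Ideal (MvPolynomial σ K)} (hbot : I ≠ ⊥) (htop : I ≠ ⊤) :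
    ∃ f ∈ I, ∃ i, pderiv i f ∉ I := by
  obtain ⟨f, ⟨hf, hf0⟩, hmin⟩ := exists_minimalFor_of_wellFoundedLT
    (fun f => f ∈ I ∧ f ≠ 0) totalDegree ((Submodule.ne_bot_iff I).1 hbot)
  obtain ⟨m, hm, hm0⟩ : ∃ m, coeff m f ≠ 0 ∧ m ≠ 0 := by
    by_contra! hall
    have hC : f = C (coeff 0 f) := by
      classical
      ext m
      rw [coeff_C]
      split_ifs with h
      · rw [h]
      · exact by_contra fun hne => h (hall m hne).symm
    have hunit : IsUnit (coeff 0 f) := Ne.isUnit fun h => hf0 (by rw [hC, h, C_0])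
    exact htop (I.eq_top_of_isUnit_mem (hC ▸ hf) (hunit.map C))
  obtain ⟨i, hi⟩ := Finsupp.ne_iff.1 hm0
  have hne := pderiv_ne_zero_of_coeff_ne_zero hm hi
  exact ⟨f, hf, i, fun h => (totalDegree_pderiv_lt hne).not_ge
    (hmin ⟨h, hne⟩ (totalDegree_pderiv_lt hne).le)⟩

end MinimalEquation

section LineSection

lemma exists_linearMap_ker_eq_span_pair {N : ℕ} {η : (Fin (N + 2) → ℂ) →ₗ[ℂ] ℂ}
    {z q : Fin (N + 2) → ℂ} (hz : z ≠ 0) (hηz : η z = 0) (hηq : η q ≠ 0) :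
    ∃ U : (Fin (N + 2) → ℂ) →ₗ[ℂ] Fin N → ℂ, LinearMap.ker U = Submodule.span ℂ {z, q} := by
  have hli : LinearIndependent ℂ ![z, q] := by
    rw [LinearIndependent.pair_iff' hz]
    rintro a rfl
    exact hηq (by rw [map_smul, hηz, smul_zero])
  have hspan : Module.finrank ℂ (Submodule.span ℂ {z, q}) = 2 := by
    rw [← Matrix.range_cons_cons_empty z q ![], finrank_span_eq_card hli, Fintype.card_fin]
  have hquot := Submodule.finrank_quotient_add_finrank (Submodule.span ℂ {z, q})
  rw [hspan, Module.finrank_fin_fun] at hquot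
  let e : ((Fin (N + 2) → ℂ) ⧸ Submodule.span ℂ {z, q}) ≃ₗ[ℂ] Fin N → ℂ :=
    LinearEquiv.ofFinrankEq _ _ (by rw [Module.finrank_fin_fun]; omega)
  exact ⟨e.toLinearMap ∘ₗ Submodule.mkQ _, by rw [LinearEquiv.ker_comp, Submodule.ker_mkQ]⟩

variable {n : ℕ} {σ : Type*} [Finite σ] {W : Set (σ → ℂ)} {S : Set (Fin n → ℂ)}

lemma IsAffineVariety.map_mem_span_of_map_mem_span_pair (hW : IsAffineVariety W)
    (l : (σ → ℂ) →ₗ[ℂ] Fin n → ℂ) (hc : IsCone S) (hlW : MapsTo l W S)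
    {f : MvPolynomial (Fin n) ℂ} (hf : f ∈ vanishingIdeal ℂ S) {w₀ : σ → ℂ} (hw₀ : w₀ ∈ W)
    {q : Fin n → ℂ} (hq : jacLin f (l w₀) q ≠ 0)
    (hspan : ∀ w ∈ W, l w ∈ Submodule.span ℂ {l w₀, q}) :
    ∀ w ∈ W, l w ∈ Submodule.span ℂ {l w₀} := by
  set η := jacLin f (l w₀)
  have hη₀ : η (l w₀) = 0 := hc.jacLin_self_eq_zero (hlW hw₀) hf
  let γ : (σ → ℂ) →ₗ[ℂ] ℂ := (η q)⁻¹ • η ∘ₗ l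
  have hγ₀ : γ w₀ = 0 := by simp [γ, hη₀]
  have hproj : ∀ w ∈ W, ∃ a : ℂ, a • l w₀ = l w - γ w • q := fun w hw => by
    obtain ⟨a, b, hab⟩ := Submodule.mem_span_pair.1 (hspan w hw)
    have hγb : γ w = b := by simp [γ, ← hab, hη₀, mul_left_comm, inv_mul_cancel₀ hq]
    exact ⟨a, by rw [hγb, ← hab, add_sub_cancel_right]⟩
  suffices hγ : ∀ w ∈ W, γ w = 0 by
    intro w hw
    obtain ⟨a, ha⟩ := hproj w hw
    rw [hγ w hw, zero_smul, sub_zero] at ha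
    exact Submodule.mem_span_singleton.2 ⟨a, ha⟩
  obtain ⟨a, ha⟩ := exists_eval_eq_linearForm γ
  have hpoly := isPolynomialMap_linearMap (l - γ.smulRight q)
  by_contra! hne
  obtain ⟨w, hw, hγw⟩ := hne
  refine hq ?_
  have := jacLin_eq_zero_of_eval_add_smul_eq_zero hW (g := f) hpoly
    (r := fun _ => q) ⟨fun i => C (q i), by simp⟩ a (fun v hv => ?_) (fun v hv => ?_)
    ⟨w, hw, by rwa [ha]⟩ hw₀ (by rw [ha, hγ₀])
  · simpa [hγ₀] using this
  · obtain ⟨c, hcv⟩ := hproj v hv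
    rw [LinearMap.sub_apply, LinearMap.smulRight_apply, ← hcv]
    exact hf _ (hc _ (hlW hw₀) c)
  · rw [ha]
    simpa using hf _ (hlW hv)

lemma IsAffineVariety.exists_isCone_subset_map_mem_span {N : ℕ} {S : Set (Fin (N + 2) → ℂ)}
    (hW : IsAffineVariety W) (hWc : IsCone W) (l : (σ → ℂ) →ₗ[ℂ] Fin (N + 2) → ℂ) (hS : IsCone S)
    (hlW : MapsTo l W S) {f : MvPolynomial (Fin (N + 2)) ℂ} (hf : f ∈ vanishingIdeal ℂ S)
    {w₀ : σ → ℂ} (hw₀ : w₀ ∈ W) {q : Fin (N + 2) → ℂ} (hq : jacLin f (l w₀) q ≠ 0)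
    (hl₀ : l w₀ ≠ 0) :
    ∃ W' ⊆ W, IsAffineVariety W' ∧ IsCone W' ∧ w₀ ∈ W' ∧
      (∀ w ∈ W', l w ∈ Submodule.span ℂ {l w₀}) ∧ affineDim W ≤ affineDim W' + N := by
  obtain ⟨U, hU⟩ :=
    exists_linearMap_ker_eq_span_pair hl₀ (hS.jacLin_self_eq_zero (hlW hw₀) hf) hq
  have hUl {w : σ → ℂ} : (U ∘ₗ l) w = 0 ↔ l w ∈ Submodule.span ℂ {l w₀, q} := by
    rw [← hU, LinearMap.mem_ker, LinearMap.comp_apply]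
  obtain ⟨W', hW'W, hW', hW'c, hw₀', hUW', hdim⟩ := hW.exists_isCone_subset hWc hw₀ (U ∘ₗ l)
    (hUl.2 (Submodule.subset_span (mem_insert _ _)))
  exact ⟨W', hW'W, hW', hW'c, hw₀', hW'.map_mem_span_of_map_mem_span_pair l hS
    (hlW.mono_left hW'W) hf hw₀' hq fun w hw => hUl.1 (hUW' w hw), by rwa [Nat.card_fin] at hdim⟩

end LineSection

section SecantTriples

/-- The difference `x - y`, as a linear function of a triple `(x, (y, t))` of vectors. -/
def fstSubSnd (n : ℕ) : (Fin n ⊕ (Fin n ⊕ Fin n) → ℂ) →ₗ[ℂ] Fin n → ℂ :=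
  LinearMap.funLeft ℂ ℂ Sum.inl - LinearMap.funLeft ℂ ℂ (Sum.inr ∘ Sum.inl)

/-- The difference `x - t`, as a linear function of a triple `(x, (y, t))` of vectors. -/
def fstSubTrd (n : ℕ) : (Fin n ⊕ (Fin n ⊕ Fin n) → ℂ) →ₗ[ℂ] Fin n → ℂ :=
  LinearMap.funLeft ℂ ℂ Sum.inl - LinearMap.funLeft ℂ ℂ (Sum.inr ∘ Sum.inr)

lemma exists_isCone_sub_mem_span {N : ℕ} {A : Set (Fin (N + 2) → ℂ)} (hA : IsAffineVariety A)
    (hc : IsCone A) {f : MvPolynomial (Fin (N + 2)) ℂ}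
    (hf : f ∈ vanishingIdeal ℂ (affineSecantCone A)) {x₀ y₀ t₀ q : Fin (N + 2) → ℂ}
    (hx₀ : x₀ ∈ A) (hy₀ : y₀ ∈ A) (ht₀ : t₀ ∈ A) (hz : x₀ - y₀ ≠ 0) (hp : x₀ - t₀ ≠ 0)
    (hqz : jacLin f (x₀ - y₀) q ≠ 0) (hqp : jacLin f (x₀ - t₀) q ≠ 0) :
    ∃ W ⊆ affineProd A (affineProd A A), IsAffineVariety W ∧ IsCone W ∧
      Sum.elim x₀ (Sum.elim y₀ t₀) ∈ W ∧
      (∀ w ∈ W, fstSubSnd (N + 2) w ∈ Submodule.span ℂ {x₀ - y₀}) ∧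
      (∀ w ∈ W, fstSubTrd (N + 2) w ∈ Submodule.span ℂ {x₀ - t₀}) ∧
      3 * affineDim A ≤ affineDim W + 2 * N := by
  have hS := isCone_affineSecantCone hc
  have hmaps₁ : MapsTo (fstSubSnd (N + 2)) (affineProd A (affineProd A A)) (affineSecantCone A) :=
    fun w hw => sub_mem_affineSecantCone hw.1 hw.2.1
  have hmaps₂ : MapsTo (fstSubTrd (N + 2)) (affineProd A (affineProd A A)) (affineSecantCone A) :=
    fun w hw => sub_mem_affineSecantCone hw.1 hw.2.2
  obtain ⟨W₁, hW₁A, hW₁, hW₁c, hw₁, hspan₁, hdim₁⟩ :=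
    (hA.prod (hA.prod hA)).exists_isCone_subset_map_mem_span (hc.prod (hc.prod hc))
      (fstSubSnd (N + 2)) hS hmaps₁ hf (w₀ := Sum.elim x₀ (Sum.elim y₀ t₀)) ⟨hx₀, hy₀, ht₀⟩ hqz hz
  obtain ⟨W, hWW₁, hW, hWc, hw₀, hspan, hdim⟩ :=
    hW₁.exists_isCone_subset_map_mem_span hW₁c (fstSubTrd (N + 2)) hS (hmaps₂.mono_left hW₁A) hf hw₁
      hqp hp
  have h2 := hA.add_le_affineDim_affineProd hA
  have h3 := hA.add_le_affineDim_affineProd (hA.prod hA)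
  exact ⟨W, hWW₁.trans hW₁A, hW, hWc, hw₀, fun w hw => hspan₁ w (hWW₁ hw), hspan, by omega⟩

variable {n : ℕ} {A : Set (Fin n → ℂ)}

lemma jacLin_sub_eq_zero {f : MvPolynomial (Fin n) ℂ}
    (hf : f ∈ vanishingIdeal ℂ (affineSecantCone A)) {x y p : Fin n → ℂ} (hy : y ∈ A)
    (hp : ∀ g ∈ vanishingIdeal ℂ A, jacLin g x p = 0) : jacLin f (x - y) p = 0 := by
  have htrans : IsPolynomialMap fun v : Fin n → ℂ => v - y := ⟨fun i => X i - C (y i), by simp⟩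
  obtain ⟨g, hg⟩ := htrans.exists_eval_eq f
  rw [mem_vanishingIdeal_affineSecantCone_iff] at hf
  rw [← hp g fun v hv => (hg v).trans (hf v hv y hy)]
  refine jacLin_eq_of_forall_eval_eq fun s => ?_
  rw [hg, sub_add_eq_add_sub]

-- In characteristic zero `f` may be chosen with a partial derivative not vanishing on the secant
-- variety; the remaining conditions are open and nonempty.
lemma exists_jacLin_sub_ne_zero (hA : IsAffineVariety A) (hc : IsCone A)
    (hspan : ∀ φ : (Fin n → ℂ) →ₗ[ℂ] ℂ, (∀ v ∈ A, φ v = 0) → φ = 0)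
    (hAS : affineSecantCone A ≠ A) (hS : affineSecantCone A ≠ univ) :
    ∃ f ∈ vanishingIdeal ℂ (affineSecantCone A), ∃ q, ∃ x ∈ A, ∃ y ∈ A, ∃ t ∈ A,
      x - y ∉ A ∧ jacLin f (x - y) q ≠ 0 ∧ jacLin f (x - y) t ≠ 0 ∧ jacLin f (x - t) q ≠ 0 := by
  have hSvar := isAffineVariety_affineSecantCone hA
  have hbot : vanishingIdeal ℂ (affineSecantCone A) ≠ ⊥ := fun h =>
    hS <| by rw [← hSvar.zariskiClosure_eq, zariskiClosure, h]; simp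
  obtain ⟨f, hf, i, hi⟩ := exists_mem_pderiv_notMem hbot hSvar.isPrime.ne_top
  obtain ⟨g, hg, hgS⟩ : ∃ g ∈ vanishingIdeal ℂ A, g ∉ vanishingIdeal ℂ (affineSecantCone A) := by
    by_contra! hle
    refine hAS (Subset.antisymm (fun v hv => hA.mem_of_forall_eval fun g hg => hle g hg v hv) ?_)
    exact fun v hv => sub_zero v ▸ sub_mem_affineSecantCone hv (hc.zero_mem hA.nonempty)
  obtain ⟨x, hx, y, hy, hfxy, hgxy⟩ := exists_eval_sub_ne_zero_and hA hi hgS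
  rw [← jacLin_single] at hfxy
  obtain ⟨a, ha⟩ := exists_eval_eq_linearForm (jacLin f (x - y))
  have htrans : IsPolynomialMap fun v : Fin n → ℂ => x - v := ⟨fun i => C (x i) - X i, by simp⟩
  obtain ⟨D, hD⟩ := htrans.exists_eval_eq (pderiv i f)
  have hη : ∃ t ∈ A, eval t a ≠ 0 := by
    by_contra! h
    have := hspan _ fun v hv => (ha v).symm.trans (h v hv)
    exact hfxy (by rw [this, LinearMap.zero_apply])
  obtain ⟨t, ht, hat, hDt⟩ := hA.exists_eval_ne_zero_and hη
    ⟨y, hy, by rwa [hD, ← jacLin_single]⟩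
  rw [ha] at hat
  rw [hD, ← jacLin_single] at hDt
  exact ⟨f, hf, _, x, hx, y, hy, t, ht, fun h => hgxy (hg _ h), hfxy, hat, hDt⟩

end SecantTriples

section CommonTangent

lemma exists_linearMap_forall_mem_span_singleton {K V : Type*} [Field K] [AddCommGroup V]
    [Module K V] (p : V) : ∃ θ : V →ₗ[K] K, ∀ v ∈ Submodule.span K {p}, v = θ v • p := by
  rcases eq_or_ne p 0 with rfl | hp
  · exact ⟨0, fun v hv => by simpa using hv⟩
  · obtain ⟨θ, hθ⟩ := Module.exists_dual_forall_apply_eq_one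
      (LinearIndepOn.singleton (R := K) (v := id) hp)
    refine ⟨θ, fun v hv => ?_⟩
    obtain ⟨c, rfl⟩ := Submodule.mem_span_singleton.1 hv
    have hθp : θ p = 1 := hθ p rfl
    rw [map_smul, hθp, smul_eq_mul, mul_one]

lemma IsAffineVariety.jacLin_eq_zero_of_map_sub_mem_span {n : ℕ} {A : Set (Fin n → ℂ)} {σ : Type*}
    [Finite σ] {W : Set (σ → ℂ)} (hW : IsAffineVariety W) {l r : (σ → ℂ) →ₗ[ℂ] Fin n → ℂ}
    (hl : MapsTo l W A) (hr : MapsTo r W A) {p : Fin n → ℂ}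
    (hspan : ∀ w ∈ W, (l - r) w ∈ Submodule.span ℂ {p}) (hne : ∃ w ∈ W, (l - r) w ≠ 0) {w : σ → ℂ}
    (hw : w ∈ W) (hlr : (l - r) w = 0) {g : MvPolynomial (Fin n) ℂ}
    (hg : g ∈ vanishingIdeal ℂ A) : jacLin g (l w) p = 0 := by
  obtain ⟨θ, hθ⟩ := exists_linearMap_forall_mem_span_singleton (K := ℂ) p
  obtain ⟨a, ha⟩ := exists_eval_eq_linearForm (θ ∘ₗ (l - r))
  have hsub : ∀ v ∈ W, (l - r) v = eval v a • p := fun v hv => by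
    rw [ha, LinearMap.comp_apply, ← hθ _ (hspan v hv)]
  obtain ⟨w₀, hw₀, hne₀⟩ := hne
  have hlw : l w = r w := sub_eq_zero.1 hlr
  rw [hlw]
  refine jacLin_eq_zero_of_eval_add_smul_eq_zero hW (isPolynomialMap_linearMap r)
    (r := fun _ => p) ⟨fun i => C (p i), by simp⟩ a (fun v hv => hg _ (hr hv))
    (fun v hv => ?_) ⟨w₀, hw₀, fun h => hne₀ (by rw [hsub w₀ hw₀, h, zero_smul])⟩ hw ?_
  · rw [← hsub v hv, LinearMap.sub_apply, add_sub_cancel]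
    exact hg _ (hl hv)
  · rw [ha, LinearMap.comp_apply, hlr, map_zero]

lemma IsAffineVariety.exists_fst_ne_zero_fstSubTrd_eq_zero {n : ℕ} {A : Set (Fin n → ℂ)}
    {W : Set (Fin n ⊕ (Fin n ⊕ Fin n) → ℂ)} (hW : IsAffineVariety W) (hWc : IsCone W)
    (hc : IsCone A) (hWA : W ⊆ affineProd A (affineProd A A)) {z p : Fin n → ℂ} (hz : z ∉ A)
    (hspanz : ∀ w ∈ W, fstSubSnd n w ∈ Submodule.span ℂ {z})
    (hspanp : ∀ w ∈ W, fstSubTrd n w ∈ Submodule.span ℂ {p}) {β : ℕ}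
    (M : (Fin n → ℂ) →ₗ[ℂ] Fin β → ℂ) (hdim : β + 1 < affineDim W) :
    ∃ w ∈ W, w ∘ Sum.inl ≠ 0 ∧ M (w ∘ Sum.inl) = 0 ∧ fstSubTrd n w = 0 := by
  obtain ⟨θ, hθ⟩ := exists_linearMap_forall_mem_span_singleton (K := ℂ) p
  let U : (Fin n ⊕ (Fin n ⊕ Fin n) → ℂ) →ₗ[ℂ] Fin β ⊕ Unit → ℂ :=
    LinearMap.pi (Sum.elim (fun j => LinearMap.proj j ∘ₗ M ∘ₗ LinearMap.funLeft ℂ ℂ Sum.inl)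
      fun _ => θ ∘ₗ fstSubTrd n)
  obtain ⟨w, hw, hw0, hU⟩ := hW.exists_ne_zero_of_card_lt hWc U (by
    rwa [Nat.card_sum, Nat.card_fin, Nat.card_unique])
  have hθw : θ (fstSubTrd n w) = 0 := congrFun hU (.inr ())
  have hxt : fstSubTrd n w = 0 := by rw [hθ _ (hspanp w hw), hθw, zero_smul]
  refine ⟨w, hw, fun hx => ?_, funext fun j => congrFun hU (.inl j), hxt⟩
  have ht : w ∘ Sum.inl - w ∘ Sum.inr ∘ Sum.inr = 0 := hxt
  rw [hx, zero_sub, neg_eq_zero] at ht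
  obtain ⟨c, hcy⟩ := Submodule.mem_span_singleton.1 (hspanz w hw)
  have hy : c • z = w ∘ Sum.inl - w ∘ Sum.inr ∘ Sum.inl := hcy
  rw [hx, zero_sub] at hy
  have hc0 : c ≠ 0 := by
    rintro rfl
    rw [zero_smul, zero_eq_neg] at hy
    refine hw0 (funext ?_)
    rintro (i | i | i)
    exacts [congrFun hx i, congrFun hy i, congrFun ht i]
  have hzy : z = (-c⁻¹) • (w ∘ Sum.inr ∘ Sum.inl) := by
    rw [neg_smul, ← smul_neg, ← hy, inv_smul_smul₀ hc0]
  exact hz (hzy ▸ hc _ (hWA hw).2.1 _)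

variable {n : ℕ} {Y : Set (PrV n)} {f : MvPolynomial (Fin n) ℂ} {z : Fin n → ℂ}

lemma affTangent_le_ker_jacLin (hY : Y.Nonempty)
    (hf : f ∈ vanishingIdeal ℂ (affineSecantCone (affineCone Y))) {x y : Fin n → ℂ}
    (hy : y ∈ affineCone Y) {c : ℂ} (hc : c ≠ 0) (hxy : x - y = c • z) :
    affTangent Y x ≤ LinearMap.ker (jacLin f z) := fun p hp => by
  rw [← affTangent_smul Y (inv_ne_zero hc), mem_affTangent_iff, ← vanishingIdeal_affineCone hY]
    at hp
  have := jacLin_sub_eq_zero hf (isCone_affineCone Y y hy c⁻¹) hp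
  rwa [← smul_sub, hxy, inv_smul_smul₀ hc] at this

lemma affineDim_affineCone_le_finrank_affTangent_inf_ker (hcl : IsClosed Y) (hirr : IsIrreducible Y)
    (hf : f ∈ vanishingIdeal ℂ (affineSecantCone (affineCone Y)))
    {W : Set (Fin n ⊕ (Fin n ⊕ Fin n) → ℂ)} (hW : IsAffineVariety W)
    (hWY : W ⊆ affineProd (affineCone Y) (affineProd (affineCone Y) (affineCone Y)))
    (hspan : ∀ w ∈ W, fstSubSnd n w ∈ Submodule.span ℂ {z}) (hne : ∃ w ∈ W, fstSubSnd n w ≠ 0)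
    {w : Fin n ⊕ (Fin n ⊕ Fin n) → ℂ} (hw : w ∈ W) :
    affineDim (affineCone Y) ≤ Module.finrank ℂ
      (affTangent Y (w ∘ Sum.inl) ⊓ LinearMap.ker (jacLin f z) : Submodule ℂ _) := by
  obtain ⟨D, hDw, hD⟩ :=
    exists_polynomial_finrank_affTangent_inf_ker_le Y (jacLin f z) (w ∘ Sum.inl)
  obtain ⟨θ, hθ⟩ := exists_linearMap_forall_mem_span_singleton (K := ℂ) z
  obtain ⟨a, ha⟩ := exists_eval_eq_linearForm (θ ∘ₗ fstSubSnd n)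
  have hsub : ∀ v ∈ W, fstSubSnd n v = eval v a • z := fun v hv => by
    rw [ha, LinearMap.comp_apply, ← hθ _ (hspan v hv)]
  obtain ⟨w₀, hw₀, hne₀⟩ := hne
  obtain ⟨v, hv, hav, hDv⟩ := hW.exists_eval_ne_zero_and (f := a) (g := rename Sum.inl D)
    ⟨w₀, hw₀, fun h => hne₀ (by rw [hsub w₀ hw₀, h, zero_smul])⟩ ⟨w, hw, by rwa [eval_rename]⟩
  rw [eval_rename] at hDv
  have hker : affTangent Y (v ∘ Sum.inl) ≤ LinearMap.ker (jacLin f z) :=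
    affTangent_le_ker_jacLin hirr.nonempty hf (hWY hv).2.1 hav (hsub v hv)
  calc affineDim (affineCone Y)
      ≤ Module.finrank ℂ (affTangent Y (v ∘ Sum.inl)) :=
        affineDim_affineCone_le_finrank_affTangent hcl hirr (hWY hv).1
    _ = Module.finrank ℂ
          (affTangent Y (v ∘ Sum.inl) ⊓ LinearMap.ker (jacLin f z) : Submodule ℂ _) := by
        rw [inf_eq_left.2 hker]
    _ ≤ _ := hD _ hDv

end CommonTangent

section TangentDimension

lemma exists_affineDim_lt_finrank_affTangent {N : ℕ} {Y : Set (PrV (N + 2))} (hcl : IsClosed Y)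
    (hirr : IsIrreducible Y)
    (hspan : ∀ φ : (Fin (N + 2) → ℂ) →ₗ[ℂ] ℂ, (∀ v ∈ affineCone Y, φ v = 0) → φ = 0)
    (hYS : affineSecantCone (affineCone Y) ≠ affineCone Y)
    (hS : affineSecantCone (affineCone Y) ≠ univ) {β : ℕ}
    (M : (Fin (N + 2) → ℂ) →ₗ[ℂ] Fin β → ℂ)
    (hdim : 2 * N + β + 2 ≤ 3 * affineDim (affineCone Y)) :
    ∃ x ∈ affineCone Y, x ≠ 0 ∧ M x = 0 ∧
      affineDim (affineCone Y) < Module.finrank ℂ (affTangent Y x) := by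
  have hA := isAffineVariety_affineCone hcl hirr
  have hc := isCone_affineCone Y
  obtain ⟨f, hf, q, x, hx, y, hy, t, ht, hxy, hqz, hηt, hqp⟩ :=
    exists_jacLin_sub_ne_zero hA hc hspan hYS hS
  set η := jacLin f (x - y)
  have hηx : η x = 0 := jacLin_sub_eq_zero hf hy fun g hg => hc.jacLin_self_eq_zero hx hg
  have hηp : η (x - t) ≠ 0 := by rwa [map_sub, hηx, zero_sub, neg_ne_zero]
  have hz : x - y ≠ 0 := fun h => hxy (h ▸ hc.zero_mem hA.nonempty)
  have hp : x - t ≠ 0 := fun h => hηp (by rw [h, map_zero])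
  obtain ⟨W, hWA, hW, hWc, hw₀, hspanz, hspanp, hWdim⟩ :=
    exists_isCone_sub_mem_span hA hc hf hx hy ht hz hp hqz hqp
  obtain ⟨w, hw, hx0, hMx, hxt⟩ :=
    hW.exists_fst_ne_zero_fstSubTrd_eq_zero hWc hc hWA hxy hspanz hspanp M (by omega)
  refine ⟨w ∘ Sum.inl, (hWA hw).1, hx0, hMx, ?_⟩
  have hpT : x - t ∈ affTangent Y (w ∘ Sum.inl) := by
    rw [mem_affTangent_iff, ← vanishingIdeal_affineCone hirr.nonempty]
    exact fun g hg => hW.jacLin_eq_zero_of_map_sub_mem_span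
      (l := LinearMap.funLeft ℂ ℂ Sum.inl) (r := LinearMap.funLeft ℂ ℂ (Sum.inr ∘ Sum.inr))
      (fun v hv => (hWA hv).1) (fun v hv => (hWA hv).2.2) hspanp ⟨_, hw₀, hp⟩ hw hxt hg
  refine (affineDim_affineCone_le_finrank_affTangent_inf_ker hcl hirr hf hW hWA hspanz
    ⟨_, hw₀, hz⟩ hw).trans_lt (Submodule.finrank_lt_finrank_of_lt ?_)
  exact inf_le_left.lt_of_ne fun h => hηp (h.ge hpT).2

end TangentDimension

section OuterPoint

variable {n N : ℕ} {A : Set (Fin n → ℂ)}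

lemma NondegenerateSet.eq_zero_of_forall_mem_affineCone {Y : Set (PrV n)} (hY : NondegenerateSet Y)
    (φ : (Fin n → ℂ) →ₗ[ℂ] ℂ) (hφ : ∀ v ∈ affineCone Y, φ v = 0) : φ = 0 := by
  by_contra hne
  exact hY _ ⟨φ, hne, rfl⟩ fun x hx => hφ _ (rep_mem_affineCone_iff.2 hx)

lemma affineSecantCone_ne_self (hA : A.Nonempty) (hc : IsCone A)
    (hspan : ∀ φ : (Fin n → ℂ) →ₗ[ℂ] ℂ, (∀ v ∈ A, φ v = 0) → φ = 0) (hne : A ≠ univ) :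
    affineSecantCone A ≠ A := fun h => by
  have hsub : ∀ x ∈ A, ∀ y ∈ A, x - y ∈ A := fun x hx y hy => h ▸ sub_mem_affineSecantCone hx hy
  let E : Submodule ℂ (Fin n → ℂ) :=
    { carrier := A
      zero_mem' := hc.zero_mem hA
      add_mem' := fun {x y} hx hy => by
        simpa using hsub x hx _ (hc y hy (-1))
      smul_mem' := fun c x hx => hc x hx c }
  have hE : E < ⊤ := lt_top_iff_ne_top.2 fun htop => hne (congrArg SetLike.coe htop)
  obtain ⟨φ, hφ, hEφ⟩ := Submodule.exists_le_ker_of_lt_top E hE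
  exact hφ (hspan φ fun v hv => hEφ hv)

lemma exists_mem_affTangent_or_lt_finrank {Y : Set (PrV (N + 2))} (hcl : IsClosed Y)
    (hirr : IsIrreducible Y) (hnd : NondegenerateSet Y) {Q : Fin (N + 2) → ℂ}
    (hQ : ∀ v ∈ affineCone Y, ∀ c : ℂ, v - c • Q ∈ affineCone Y → c = 0) {β : ℕ}
    (M : (Fin (N + 2) → ℂ) →ₗ[ℂ] Fin β → ℂ) (hdim₂ : N + 2 + β ≤ 2 * affineDim (affineCone Y))
    (hdim₃ : 2 * N + β + 2 ≤ 3 * affineDim (affineCone Y)) :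
    ∃ x ∈ affineCone Y, x ≠ 0 ∧ M x = 0 ∧ (Q ∈ affTangent Y x ∨
      affineDim (affineCone Y) < Module.finrank ℂ (affTangent Y x)) := by
  have hA := isAffineVariety_affineCone hcl hirr
  have hc := isCone_affineCone Y
  have hspan := hnd.eq_zero_of_forall_mem_affineCone
  by_cases hQS : Q ∈ affineSecantCone (affineCone Y)
  · obtain ⟨x, hx, hx0, hMx, hQx⟩ := exists_ne_zero_forall_jacLin_eq_zero hA hc hQ hQS M hdim₂
    refine ⟨x, hx, hx0, hMx, .inl (mem_affTangent_iff.2 ?_)⟩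
    rwa [← vanishingIdeal_affineCone hirr.nonempty]
  · have hne : affineCone Y ≠ univ := fun h =>
      one_ne_zero (hQ 0 zero_mem_affineCone 1 (h ▸ mem_univ _))
    obtain ⟨x, hx, hx0, hMx, hlt⟩ := exists_affineDim_lt_finrank_affTangent hcl hirr hspan
      (affineSecantCone_ne_self hA.nonempty hc hspan hne)
      (fun h => hQS (h ▸ mem_univ Q)) M hdim₃
    exact ⟨x, hx, hx0, hMx, .inr hlt⟩

lemma exists_forall_sub_smul_mem_imp_eq_zero {A : Set (Fin (N + 2) → ℂ)}
    {L : (Fin (N + 2) → ℂ) →ₗ[ℂ] Fin (N + 1) → ℂ} (hL : InjOn L A) :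
    ∃ Q ≠ 0, L Q = 0 ∧ ∀ v ∈ A, ∀ c : ℂ, v - c • Q ∈ A → c = 0 := by
  obtain ⟨Q, hLQ, hQ⟩ := Submodule.exists_mem_ne_zero_of_ne_bot
    (LinearMap.ker_ne_bot_of_finrank_lt (f := L) (by simp))
  refine ⟨Q, hQ, hLQ, fun v hv c hvc => ?_⟩
  have hvv : v - c • Q = v := hL hvc hv (by rw [map_sub, map_smul, LinearMap.mem_ker.1 hLQ,
    smul_zero, sub_zero])
  exact (smul_eq_zero.1 (sub_eq_self.1 hvv)).resolve_right hQ

end OuterPoint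

/-- **Corollary 4 (Zak's linear normality theorem).**  Let `X ⊆ ℙ^N` be irreducible and
nondegenerate, and set `b = 0` if `X` is smooth, `b = dim Sing(X)` otherwise.  If
`dim X > (1/3)(2N + b - 1)` (equivalently `3 dim X + 1 > 2N + b`), then `X` is linearly
normal: it is not the image of a bijective projection of a nondegenerate subvariety of
`ℙ^{N+1}`. -/
theorem zak_linear_normality
    (N m b : ℕ) (X : Set (Pr N))
    (hcl : IsClosed X) (hirr : IsIrreducible X) (hnd : NondegenerateSet X)
    (hdim : pdim X = ((m : ℕ∞) : WithBot ℕ∞))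
    (hb_smooth : IsSmoothSet X → b = 0)
    (hb_sing : ¬ IsSmoothSet X → pdim (singLocus X) = ((b : ℕ∞) : WithBot ℕ∞))
    (hbig : 2 * N + b < 3 * m + 1) :
    LinearlyNormal X := by
  rintro ⟨Y, hYcl, hYirr, hYnd, L, -, hL0, hX, hinj⟩
  have hL : BijOn L (affineCone Y) (affineCone X) := bijOn_affineCone hL0 hX hinj
  obtain ⟨β, h3, h2, M, hM⟩ :=
    exists_linearMap_forall_finrank_affTangent_eq hcl hirr hdim hb_smooth hb_sing hbig
  obtain ⟨Q, hQ0, hLQ, hQ⟩ := exists_forall_sub_smul_mem_imp_eq_zero hL.injOn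
  have hm : m + 1 ≤ affineDim (affineCone Y) :=
    (add_one_le_affineDim_affineCone hcl hirr hdim.ge).trans_eq
      ((isAffineVariety_affineCone hYcl hYirr).affineDim_eq_of_bijOn (isCone_affineCone Y)
        (isAffineVariety_affineCone hcl hirr) hL).symm
  obtain ⟨x, hx, hx0, hMx, hQx | hlt⟩ := exists_mem_affTangent_or_lt_finrank hYcl hYirr hYnd hQ
    (M ∘ₗ L) (by omega) (by omega)
  all_goals
    have hsmooth := (hM (L x) (hL.mapsTo hx) (map_ne_zero_of_mem_affineCone hL0 hx hx0) hMx).le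
  · exact hQ0 (eq_zero_of_mem_affTangent_of_map_eq_zero hcl hirr hYcl hYirr hdim hL hx hsmooth
      hLQ hQx)
  · exact (hm.trans_lt hlt).not_ge
      (finrank_affTangent_le_of_bijOn hcl hirr hYcl hYirr hdim hL hx hsmooth)

end
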